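/- arXiv:2001.01657 — 3 statements merged into one kernel-verified Lean document; each statement's English description precedes it below -/
import Mathlib

section
/- If f : Ω₁ → Ω₂ is a homeomorphism between open subsets of ℝⁿ belonging to W^{1,1}_loc(Ω₁, ℝⁿ), then the condition |Df|(f⁻¹(A)) ≤ K·Lⁿ(A) for all Borel sets A ⊆ Ω₂ is equivalent to the pointwise inequality |Df(x)| ≤ K·|J_f(x)| for Lⁿ-a.e. x ∈ Ω₁. -/
open MeasureTheory Metric Set Filter
open scoped ENNReal Topology NNReal

noncomputable section

/-- `ℝⁿ` as a Euclidean space. -/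
abbrev En (n : ℕ) : Type := EuclideanSpace ℝ (Fin n)

/-- A smooth test function compactly supported inside the set `Ω`. -/
def SmoothTest {n : ℕ} (Ω : Set (En n)) (φ : En n → ℝ) : Prop :=
  ContDiff ℝ (⊤ : ℕ∞) φ ∧ HasCompactSupport φ ∧ tsupport φ ⊆ Ω

/-- Frobenius norm of an `m × n` array of reals. -/
def frobNorm {m n : ℕ} (M : Fin m → Fin n → ℝ) : ℝ :=
  Real.sqrt (∑ j, ∑ i, M j i ^ 2)

/-- `Df = σ ⬝ ν` is the polar decomposition of the distributional derivative of the
mapping `f : Ω → ℝᵐ`: `σ` is a matrix field of unit Frobenius norm `ν`-a.e., `ν` is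
carried by `Ω`, and the integration-by-parts formula holds against all smooth test
functions compactly supported in `Ω`.  In particular `ν = |Df|` is the total variation
measure of `Df` on `Ω`. -/
def IsVariationMeasure {n m : ℕ} (Ω : Set (En n)) (f : En n → En m)
    (σ : En n → Fin m → Fin n → ℝ) (ν : Measure (En n)) : Prop :=
  Measurable σ ∧ (∀ᵐ x ∂ν, frobNorm (σ x) = 1) ∧ ν Ωᶜ = 0 ∧
    ∀ φ : En n → ℝ, SmoothTest Ω φ → ∀ (j : Fin m) (i : Fin n),
      ∫ x in Ω, f x j * fderiv ℝ φ x (EuclideanSpace.single i 1) ∂volume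
        = - ∫ x, φ x * σ x j i ∂ν

/-- `f ∈ BV(Ω, ℝᵐ)` with total variation measure `ν`. -/
def MemBV {n m : ℕ} (Ω : Set (En n)) (f : En n → En m) (ν : Measure (En n)) : Prop :=
  IntegrableOn f Ω volume ∧ ν Ω < ⊤ ∧ ∃ σ, IsVariationMeasure Ω f σ ν

/-- `f ∈ BV_loc(Ω, ℝᵐ)` with total variation measure `ν`, finite on compact subsets of `Ω`. -/
def MemBVloc {n m : ℕ} (Ω : Set (En n)) (f : En n → En m) (ν : Measure (En n)) : Prop :=
  LocallyIntegrableOn f Ω volume ∧ (∀ C : Set (En n), IsCompact C → C ⊆ Ω → ν C < ⊤) ∧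
    ∃ σ, IsVariationMeasure Ω f σ ν

/-- Scalar version of `IsVariationMeasure`: `Du = σ ⬝ ν` with `|σ| = 1` `ν`-a.e. -/
def IsVariationMeasureS {n : ℕ} (Ω : Set (En n)) (u : En n → ℝ)
    (σ : En n → Fin n → ℝ) (ν : Measure (En n)) : Prop :=
  Measurable σ ∧ (∀ᵐ x ∂ν, Real.sqrt (∑ i, σ x i ^ 2) = 1) ∧ ν Ωᶜ = 0 ∧
    ∀ φ : En n → ℝ, SmoothTest Ω φ → ∀ i : Fin n,
      ∫ x in Ω, u x * fderiv ℝ φ x (EuclideanSpace.single i 1) ∂volume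
        = - ∫ x, φ x * σ x i ∂ν

/-- `u ∈ BV(Ω)` with total variation measure `ν`. -/
def MemBVs {n : ℕ} (Ω : Set (En n)) (u : En n → ℝ) (ν : Measure (En n)) : Prop :=
  IntegrableOn u Ω volume ∧ ν Ω < ⊤ ∧ ∃ σ, IsVariationMeasureS Ω u σ ν

/-- `u ∈ BV_loc(Ω)` with total variation measure `ν`. -/
def MemBVlocs {n : ℕ} (Ω : Set (En n)) (u : En n → ℝ) (ν : Measure (En n)) : Prop :=
  LocallyIntegrableOn u Ω volume ∧ (∀ C : Set (En n), IsCompact C → C ⊆ Ω → ν C < ⊤) ∧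
    ∃ σ, IsVariationMeasureS Ω u σ ν

/-- `z` is the approximate limit of `f` at `x`. -/
def ApproxLimAt {n m : ℕ} (f : En n → En m) (x : En n) (z : En m) : Prop :=
  Tendsto (fun r : ℝ =>
      (∫ y in Metric.ball x r, ‖f y - z‖ ∂volume) / (volume (Metric.ball x r)).toReal)
    (nhdsWithin 0 (Set.Ioi 0)) (nhds 0)

/-- `f̃⁻¹(A)`: the preimage of `A` under the precise representative (approximate limit)
of `f`; a point belongs to it iff the approximate limit of `f` exists there and lies in `A`. -/
def tildePreimage {n m : ℕ} (f : En n → En m) (A : Set (En m)) : Set (En n) :=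
  {x | ∃ z ∈ A, ApproxLimAt f x z}

/-- `f` has no jump part: its variation measure does not charge the approximate
discontinuity set of `f`. -/
def NoJumpPart {n m : ℕ} (f : En n → En m) (ν : Measure (En n)) : Prop :=
  ν {x | ¬ ∃ z, ApproxLimAt f x z} = 0

/-- `f` is a homeomorphism of `Ω₁` onto `Ω₂`, with inverse `g`. -/
def IsHomeoOn {n : ℕ} (f g : En n → En n) (Ω₁ Ω₂ : Set (En n)) : Prop :=
  ContinuousOn f Ω₁ ∧ ContinuousOn g Ω₂ ∧ MapsTo f Ω₁ Ω₂ ∧ MapsTo g Ω₂ Ω₁ ∧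
    (∀ x ∈ Ω₁, g (f x) = x) ∧ (∀ y ∈ Ω₂, f (g y) = y)

/-- `Df` is the (matrix of the) distributional derivative of `f` on `Ω`, given by a
locally integrable function: the weak-derivative integration-by-parts identity. -/
def IsWeakDerivOn {n : ℕ} (Ω : Set (En n)) (f : En n → En n)
    (Df : En n → Fin n → Fin n → ℝ) : Prop :=
  ∀ φ : En n → ℝ, SmoothTest Ω φ → ∀ (j i : Fin n),
    ∫ x in Ω, f x j * fderiv ℝ φ x (EuclideanSpace.single i 1) ∂volume
      = - ∫ x in Ω, φ x * Df x j i ∂volume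

open scoped Convolution
open ContinuousLinearMap (lsmul)

lemma moll_hasFDerivAt {n : ℕ} (u : En n → ℝ) (G : En n → (En n →L[ℝ] ℝ)) (hu : Integrable u)
    (hG : Integrable G) (φ : ContDiffBump (0 : En n)) (y : En n)
    (hw : ∀ i, ∫ z, u z * fderiv ℝ (fun z => φ.normed volume (y - z)) z
        (EuclideanSpace.single i 1)
      = - ∫ z, φ.normed volume (y - z) * G z (EuclideanSpace.single i 1)) :
    HasFDerivAt (φ.normed volume ⋆[lsmul ℝ ℝ, volume] u)
      ((φ.normed volume ⋆[lsmul ℝ ℝ, volume] G) y) y := by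
  have hcs : HasCompactSupport (φ.normed (volume : Measure (En n))) := φ.hasCompactSupport_normed
  have hcd : ContDiff ℝ 1 (φ.normed (volume : Measure (En n))) := φ.contDiff_normed
  have h := hcs.hasFDerivAt_convolution_left (lsmul ℝ ℝ) hcd hu.locallyIntegrable y
  suffices hE : (φ.normed volume ⋆[lsmul ℝ ℝ, volume] G) y
      = (fderiv ℝ (φ.normed volume) ⋆[(lsmul ℝ ℝ).precompL (En n), volume] u) y by
    rw [hE]; exact h
  have e1 := (hcs.convolutionExists_left (lsmul ℝ ℝ) hcd.continuous hG.locallyIntegrable y)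
  have e2 := ((hcs.fderiv ℝ).convolutionExists_left ((lsmul ℝ ℝ).precompL (En n))
    (hcd.continuous_fderiv one_ne_zero) hu.locallyIntegrable y)
  apply ContinuousLinearMap.coe_injective
  apply (EuclideanSpace.basisFun (Fin n) ℝ).toBasis.ext
  intro i
  simp only [OrthonormalBasis.coe_toBasis, EuclideanSpace.basisFun_apply,
    ContinuousLinearMap.coe_coe]
  rw [convolution_def, convolution_def, ContinuousLinearMap.integral_apply e1,
    ContinuousLinearMap.integral_apply e2]
  have := hw i
  rw [← integral_sub_left_eq_self _ volume y] at this
  conv at this =>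
    rhs
    rw [← integral_sub_left_eq_self _ volume y]
  have hfd : ∀ z, fderiv ℝ (fun z => φ.normed volume (y - z)) z
      = - fderiv ℝ (φ.normed volume) (y - z) := by
    intro z
    have h1 : HasFDerivAt (φ.normed volume) (fderiv ℝ (φ.normed volume) (y - z)) (y - z) :=
      (hcd.differentiable one_ne_zero _).hasFDerivAt
    have := h1.comp z ((hasFDerivAt_id z).const_sub y)
    have h2 := this.fderiv
    simp only [Function.comp_def] at h2
    rw [h2]; ext; simp
  simp only [hfd, sub_sub_cancel, _root_.neg_apply, mul_neg] at this
  rw [integral_neg, neg_inj] at this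
  simp only [ContinuousLinearMap.lsmul_apply, _root_.smul_apply, smul_eq_mul,
    ContinuousLinearMap.precompL_apply]
  rw [← this]
  congr 1; ext; ring

lemma moll_lintegral_le {n : ℕ} {F : Type*} [NormedAddCommGroup F] [NormedSpace ℝ F]
    (G : En n → F) (hG : Integrable G) (φ : ContDiffBump (0 : En n)) (x : En n) (s : ℝ) :
    ∫⁻ y in ball x s, ‖(φ.normed volume ⋆[lsmul ℝ ℝ, volume] G) y‖ₑ
      ≤ ∫⁻ y in ball x (s + φ.rOut), ‖G y‖ₑ := by
  have hφc : Continuous (φ.normed (volume : Measure (En n))) :=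
    (φ.contDiff_normed (n := 1)).continuous
  calc ∫⁻ y in ball x s, ‖(φ.normed volume ⋆[lsmul ℝ ℝ, volume] G) y‖ₑ
      ≤ ∫⁻ y in ball x s, ∫⁻ t, ‖φ.normed volume t‖ₑ * ‖G (y - t)‖ₑ := by
        gcongr with y
        rw [convolution_def]
        refine (enorm_integral_le_lintegral_enorm _).trans ?_
        simp [enorm_smul]
    _ = ∫⁻ t, ∫⁻ y in ball x s, ‖φ.normed volume t‖ₑ * ‖G (y - t)‖ₑ := by
        apply lintegral_lintegral_swap
        have h1 : AEStronglyMeasurable (fun p : En n × En n => G (p.1 - p.2))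
            ((volume.restrict (ball x s)).prod volume) := by
          have h0 : AEStronglyMeasurable (fun p : En n × En n => G (p.1 - p.2))
            ((volume : Measure (En n)).prod volume) :=
            hG.aestronglyMeasurable.comp_quasiMeasurePreserving
              (quasiMeasurePreserving_sub volume volume)
          exact h0.mono_measure (Measure.prod_mono Measure.restrict_le_self le_rfl)
        have h2 : AEMeasurable (fun p : En n × En n => ‖φ.normed volume p.2‖ₑ)
            ((volume.restrict (ball x s)).prod volume) :=
          (hφc.comp continuous_snd).enorm.measurable.aemeasurable
        exact h2.mul h1.enorm
    _ ≤ ∫⁻ t, ‖φ.normed volume t‖ₑ * ∫⁻ y in ball x (s + φ.rOut), ‖G y‖ₑ := by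
        gcongr with t
        rw [lintegral_const_mul' _ _ (by simp)]
        by_cases ht : φ.normed volume t = 0
        · simp [ht]
        apply mul_le_mul' le_rfl
        have ht' : t ∈ ball (0 : En n) φ.rOut := by
          rw [← φ.support_normed_eq (μ := volume)]; exact ht
        rw [← lintegral_indicator measurableSet_ball, ← lintegral_indicator measurableSet_ball,
          ← lintegral_sub_right_eq_self ((ball x (s + φ.rOut)).indicator fun y => ‖G y‖ₑ) t]
        gcongr with y
        by_cases hy : y ∈ ball x s
        · have : y - t ∈ ball x (s + φ.rOut) := by
            simp only [mem_ball, dist_eq_norm, sub_zero] at *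
            calc ‖y - t - x‖ = ‖(y - x) - t‖ := by congr 1; abel
              _ ≤ ‖y - x‖ + ‖t‖ := norm_sub_le _ _
              _ < _ := by linarith
          rw [indicator_of_mem hy, indicator_of_mem this]
        · rw [indicator_of_notMem hy]; exact zero_le
    _ = ∫⁻ y in ball x (s + φ.rOut), ‖G y‖ₑ := by
        rw [lintegral_mul_const _ hφc.enorm.measurable]
        have : ∫⁻ t, ‖φ.normed volume t‖ₑ = 1 := by
          rw [← ofReal_integral_norm_eq_lintegral_enorm φ.integrable_normed]
          simp only [Real.norm_of_nonneg (φ.nonneg_normed _), φ.integral_normed]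
          simp
        rw [this, one_mul]


lemma homothety_lintegral_le {n : ℕ} (F : En n → ℝ≥0∞) (x : En n) (r t : ℝ)
    (ht : 0 < t) (c : ℝ≥0∞)
    (h : ∫⁻ y in ball x (t * r), F y ≤ c * volume (ball x (t * r))) :
    ∫⁻ z in ball x r, F (x + t • (z - x)) ≤ c * volume (ball x r) := by
  have key : ∫⁻ z in ball x r, F (x + t • (z - x))
      = ENNReal.ofReal (t ^ n)⁻¹ * ∫⁻ y in ball x (t * r), F y := by
    rw [← lintegral_indicator measurableSet_ball, ← lintegral_indicator measurableSet_ball]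
    have e1 : ∀ z, (ball x r).indicator (fun z => F (x + t • (z - x))) z
        = (fun w => (ball x (t * r)).indicator F (x + w)) (t • (z - x)) := by
      intro z
      have : x + t • (z - x) ∈ ball x (t * r) ↔ z ∈ ball x r := by
        simp only [mem_ball, dist_eq_norm, add_sub_cancel_left, norm_smul, Real.norm_eq_abs,
          abs_of_pos ht]
        constructor
        · intro h; exact lt_of_mul_lt_mul_left h ht.le
        · intro h; gcongr
      by_cases hz : z ∈ ball x r
      · simp [indicator_of_mem, hz, this.2 hz]
      · simp only [indicator_of_notMem hz, indicator_of_notMem (fun h => hz (this.1 h))]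
    simp_rw [e1]
    rw [lintegral_sub_right_eq_self (fun z => (ball x (t * r)).indicator F (x + t • z)) x]
    rw [← lintegral_add_left_eq_self ((ball x (t * r)).indicator F) x]
    have e2 := (Homeomorph.smulOfNeZero t ht.ne' : En n ≃ₜ En n).measurableEmbedding.lintegral_map
      (μ := volume) (fun w => (ball x (t * r)).indicator F (x + w))
    have e3 : (⇑(Homeomorph.smulOfNeZero t ht.ne' : En n ≃ₜ En n)) = (t • ·) := rfl
    rw [e3, Measure.map_addHaar_smul _ ht.ne', lintegral_smul_measure] at e2
    rw [← e2]
    simp [abs_of_pos ht]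
  have hv : volume (ball x (t * r)) = ENNReal.ofReal (t ^ n) * volume (ball x r) := by
    rw [Measure.addHaar_ball_mul_of_pos _ _ ht, Measure.addHaar_ball_center _ x]
    simp
  rw [key]
  calc _ ≤ ENNReal.ofReal (t ^ n)⁻¹ * (c * volume (ball x (t * r))) := by gcongr
    _ = (ENNReal.ofReal (t ^ n)⁻¹ * ENNReal.ofReal (t ^ n)) * (c * volume (ball x r)) := by
      rw [hv]; ring
    _ = _ := by
      rw [← ENNReal.ofReal_mul (by positivity), inv_mul_cancel₀ (by positivity)]; simp

lemma smooth_estimate {n : ℕ} (v : En n → ℝ) (hv : ContDiff ℝ 1 v) (x : En n) (r δ : ℝ)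
    (hr : 0 < r) (hδ : 0 < δ) (hδ1 : δ ≤ 1) (c : ℝ≥0∞)
    (h : ∀ s, δ * r ≤ s → s ≤ r → ∫⁻ y in ball x s, ‖fderiv ℝ v y‖ₑ ≤ c * volume (ball x s)) :
    ∫⁻ z in ball x r, ‖v z - v (x + δ • (z - x))‖ₑ
      ≤ ENNReal.ofReal r * (c * volume (ball x r)) := by
  have hdc : Continuous (fderiv ℝ v) := hv.continuous_fderiv one_ne_zero
  have hpt : ∀ z ∈ ball x r, ‖v z - v (x + δ • (z - x))‖ₑ
      ≤ ∫⁻ t in Ioc δ 1, ENNReal.ofReal r * ‖fderiv ℝ v (x + t • (z - x))‖ₑ := by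
    intro z hz
    have hd : ∀ t ∈ uIcc δ 1, HasDerivAt (fun t : ℝ => v (x + t • (z - x)))
        (fderiv ℝ v (x + t • (z - x)) (z - x)) t := by
      intro t _
      have h1 : HasDerivAt (fun t : ℝ => x + t • (z - x)) (z - x) t := by
        simpa using ((hasDerivAt_id t).smul_const (z - x)).const_add x
      exact ((hv.differentiable one_ne_zero _).hasFDerivAt).comp_hasDerivAt t h1
    have hcont : Continuous (fun t : ℝ => fderiv ℝ v (x + t • (z - x)) (z - x)) := by
      fun_prop
    have := intervalIntegral.integral_eq_sub_of_hasDerivAt hd (hcont.intervalIntegrable _ _)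
    simp only [one_smul, add_sub_cancel] at this
    rw [← this, intervalIntegral.integral_of_le hδ1]
    refine (enorm_integral_le_lintegral_enorm _).trans ?_
    gcongr with t
    have h1 : ‖fderiv ℝ v (x + t • (z - x)) (z - x)‖ₑ
        ≤ ‖fderiv ℝ v (x + t • (z - x))‖ₑ * ‖z - x‖ₑ := ContinuousLinearMap.le_opENorm _ _
    refine h1.trans ?_
    rw [mul_comm]
    gcongr
    rw [← ofReal_norm]
    apply ENNReal.ofReal_le_ofReal
    rw [← dist_eq_norm]; exact (mem_ball.1 hz).le
  calc ∫⁻ z in ball x r, ‖v z - v (x + δ • (z - x))‖ₑ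
      ≤ ∫⁻ z in ball x r, ∫⁻ t in Ioc δ 1,
          ENNReal.ofReal r * ‖fderiv ℝ v (x + t • (z - x))‖ₑ :=
        setLIntegral_mono' measurableSet_ball hpt
    _ = ∫⁻ t in Ioc δ 1, ∫⁻ z in ball x r,
          ENNReal.ofReal r * ‖fderiv ℝ v (x + t • (z - x))‖ₑ := by
        apply lintegral_lintegral_swap
        have : Continuous (Function.uncurry fun (z : En n) (t : ℝ) =>
          fderiv ℝ v (x + t • (z - x))) := by
          simp only [Function.uncurry_def]; fun_prop
        exact (this.enorm.measurable.const_mul _).aemeasurable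
    _ ≤ ∫⁻ t in Ioc δ 1, ENNReal.ofReal r * (c * volume (ball x r)) := by
        apply setLIntegral_mono' measurableSet_Ioc
        intro t ht
        rw [lintegral_const_mul' _ _ ENNReal.ofReal_ne_top]
        gcongr
        apply homothety_lintegral_le (fun y => ‖fderiv ℝ v y‖ₑ) x r t (hδ.trans ht.1) c
        apply h
        · gcongr; exact ht.1.le
        · nlinarith [ht.2]
    _ ≤ _ := by
        rw [setLIntegral_const, Real.volume_Ioc]
        apply mul_le_of_le_one_right'
        rw [ENNReal.ofReal_le_one]; linarith


lemma ind_integrable {n : ℕ} {F : Type*} [NormedAddCommGroup F] (G : En n → F) (V : Set (En n))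
    (hV : MeasurableSet V) (hG : IntegrableOn G V) : Integrable (V.indicator G) :=
  (integrable_indicator_iff hV).2 hG

lemma ind_enorm_le {n : ℕ} {F : Type*} [NormedAddCommGroup F] (G : En n → F) (V : Set (En n))
    (y : En n) : ‖V.indicator G y‖ₑ ≤ ‖G y‖ₑ :=
  enorm_indicator_le_enorm_self _ _

lemma sobolev_ball {n : ℕ} (U : Set (En n)) (hU : IsOpen U) (u : En n → ℝ)
    (hu : ContinuousOn u U) (G : En n → (En n →L[ℝ] ℝ)) (x : En n) (r : ℝ) (hr : 0 < r)
    (hV : closedBall x (2 * r) ⊆ U) (hG : IntegrableOn G (closedBall x (2 * r)))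
    (hw : ∀ φ : En n → ℝ, SmoothTest U φ → ∀ i : Fin n,
      ∫ z in U, u z * fderiv ℝ φ z (EuclideanSpace.single i 1)
        = - ∫ z in U, φ z * G z (EuclideanSpace.single i 1))
    (c : ℝ≥0∞)
    (hc : ∀ s, 0 < s → s ≤ 2 * r → ∫⁻ y in ball x s, ‖G y‖ₑ ≤ c * volume (ball x s)) :
    ∫⁻ z in ball x r, ‖u z - u x‖ₑ
      ≤ ENNReal.ofReal r * (c * 2 ^ n * volume (ball x r)) := by
  set V := closedBall x (2 * r) with hVdef
  have hVm : MeasurableSet V := measurableSet_closedBall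
  set u' := V.indicator u with hu'
  set G' := V.indicator G with hG'
  have hu'i : Integrable u' := by
    rw [hu', integrable_indicator_iff hVm]
    exact (hu.mono hV).integrableOn_compact (isCompact_closedBall _ _)
  have hG'i : Integrable G' := by
    exact ind_integrable G V hVm hG
  let δ : ℕ → ℝ := fun k => 1 / ((k : ℝ) + 1)
  have hδpos : ∀ k, 0 < δ k := fun k => by positivity
  have hδ1 : ∀ k, δ k ≤ 1 := fun k => by
    simp only [δ]; rw [div_le_one (by positivity)]; linarith [(Nat.cast_nonneg k : (0:ℝ) ≤ k)]
  have hδ0 : Tendsto δ atTop (𝓝 0) := tendsto_one_div_add_atTop_nhds_zero_nat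
  let φ : ℕ → ContDiffBump (0 : En n) := fun k =>
    ⟨δ k * r / 2, δ k * r, by have := hδpos k; positivity,
      by have := mul_pos (hδpos k) hr; linarith⟩
  have hφr : ∀ k, (φ k).rOut = δ k * r := fun k => rfl
  have hφ0 : Tendsto (fun k => (φ k).rOut) atTop (𝓝 0) := by
    simp only [hφr]; simpa using hδ0.mul_const r
  let v : ℕ → En n → ℝ := fun k => (φ k).normed volume ⋆[lsmul ℝ ℝ, volume] u'
  have hvc : ∀ k, ContDiff ℝ 1 (v k) := fun k =>
    (φ k).hasCompactSupport_normed.contDiff_convolution_left _ (φ k).contDiff_normed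
      hu'i.locallyIntegrable
  have hfd : ∀ k, ∀ y ∈ ball x r, fderiv ℝ (v k) y
      = ((φ k).normed volume ⋆[lsmul ℝ ℝ, volume] G') y := by
    intro k y hy
    apply HasFDerivAt.fderiv
    apply moll_hasFDerivAt u' G' hu'i hG'i
    intro i
    set ψ : En n → ℝ := fun z => (φ k).normed volume (y - z) with hψ
    have hsub : tsupport ψ ⊆ V := by
      apply closure_minimal _ isClosed_closedBall
      intro z hz
      have hz' : y - z ∈ Function.support ((φ k).normed (volume : Measure (En n))) := hz
      rw [(φ k).support_normed_eq, hφr] at hz'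
      rw [mem_closedBall]
      rw [mem_ball, dist_zero_right, ← dist_eq_norm, dist_comm] at hz'
      rw [mem_ball] at hy
      have := dist_triangle z y x
      have h3 : δ k * r ≤ 1 * r := by gcongr; exact hδ1 k
      linarith
    have hψt : SmoothTest U ψ := by
      refine ⟨?_, ?_, hsub.trans hV⟩
      · exact (φ k).contDiff_normed.comp (contDiff_const.sub contDiff_id)
      · exact (isCompact_closedBall _ _).of_isClosed_subset (isClosed_tsupport _) hsub
    have hz0 : ∀ z ∉ V, ψ z = 0 := fun z hz => image_eq_zero_of_notMem_tsupport
      fun h => hz (hsub h)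
    have hz1 : ∀ z ∉ V, fderiv ℝ ψ z = 0 := fun z hz => by
      by_contra h
      exact hz (hsub (support_fderiv_subset ℝ h))
    have := hw ψ hψt i
    rw [← integral_indicator hU.measurableSet, ← integral_indicator hU.measurableSet] at this
    have ea : ∀ z, u' z * fderiv ℝ ψ z (EuclideanSpace.single i 1)
        = U.indicator (fun z => u z * fderiv ℝ ψ z (EuclideanSpace.single i 1)) z := by
      intro z
      by_cases hz : z ∈ V
      · rw [indicator_of_mem (hV hz), hu', indicator_of_mem hz]
      · simp only [indicator, hz1 z hz]; simp
    have eb : ∀ z, ψ z * G' z (EuclideanSpace.single i 1)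
        = U.indicator (fun z => ψ z * G z (EuclideanSpace.single i 1)) z := by
      intro z
      by_cases hz : z ∈ V
      · rw [indicator_of_mem (hV hz), hG', indicator_of_mem hz]
      · simp only [indicator, hz0 z hz]; simp
    simp only [← ea, ← eb] at this
    exact this
  have hest : ∀ k, ∫⁻ z in ball x r, ‖v k z - v k (x + δ k • (z - x))‖ₑ
      ≤ ENNReal.ofReal r * (c * 2 ^ n * volume (ball x r)) := by
    intro k
    apply smooth_estimate (v k) (hvc k) x r (δ k) hr (hδpos k) (hδ1 k)
    intro s hs1 hs2
    have hs0 : 0 < s := (mul_pos (hδpos k) hr).trans_le hs1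
    calc ∫⁻ y in ball x s, ‖fderiv ℝ (v k) y‖ₑ
        = ∫⁻ y in ball x s, ‖((φ k).normed volume ⋆[lsmul ℝ ℝ, volume] G') y‖ₑ := by
          apply setLIntegral_congr_fun measurableSet_ball
          intro y hy
          simp only
          rw [hfd k y (ball_subset_ball hs2 hy)]
      _ ≤ ∫⁻ y in ball x (s + (φ k).rOut), ‖G' y‖ₑ := moll_lintegral_le G' hG'i (φ k) x s
      _ ≤ ∫⁻ y in ball x (2 * s), ‖G' y‖ₑ := by
          apply lintegral_mono_set
          apply ball_subset_ball
          rw [hφr]; linarith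
      _ ≤ ∫⁻ y in ball x (2 * s), ‖G y‖ₑ := by
          gcongr with y
          exact ind_enorm_le G V y
      _ ≤ c * volume (ball x (2 * s)) := hc _ (by linarith) (by linarith)
      _ = c * 2 ^ n * volume (ball x s) := by
          rw [Measure.addHaar_ball_mul_of_pos _ _ two_pos, Measure.addHaar_ball_center _ x,
            mul_assoc]
          congr 2
          rw [ENNReal.ofReal_pow zero_le_two]; simp
  have hca : ∀ z ∈ ball x r, ContinuousAt u' z := by
    intro z hz
    have hz2 : V ∈ 𝓝 z := mem_of_superset (isOpen_ball.mem_nhds hz)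
      (ball_subset_closedBall.trans (closedBall_subset_closedBall (by linarith)))
    have h1 : ContinuousAt u z := hu.continuousAt (mem_of_superset hz2 hV)
    refine h1.congr ?_
    filter_upwards [hz2] with w hw
    rw [hu', indicator_of_mem hw]
  have hu'eq : ∀ z ∈ ball x r, u' z = u z := fun z hz => indicator_of_mem
    ((ball_subset_closedBall.trans (closedBall_subset_closedBall (by linarith))) hz) _
  have hlim : ∀ z₀ ∈ ball x r, ∀ w : ℕ → En n, Tendsto w atTop (𝓝 z₀) →
      Tendsto (fun k => v k (w k)) atTop (𝓝 (u z₀)) := by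
    intro z₀ hz₀ w hw
    rw [← hu'eq z₀ hz₀]
    exact ContDiffBump.convolution_tendsto_right (g := fun _ => u') hφ0
      (Eventually.of_forall fun _ => hu'i.aestronglyMeasurable)
      ((hca z₀ hz₀).tendsto.comp tendsto_snd) hw
  have hlim2 : ∀ z ∈ ball x r, Tendsto (fun k => ‖v k z - v k (x + δ k • (z - x))‖ₑ) atTop
      (𝓝 ‖u z - u x‖ₑ) := by
    intro z hz
    have h1 := hlim z hz (fun _ => z) tendsto_const_nhds
    have h2 := hlim x (mem_ball_self hr) (fun k => x + δ k • (z - x)) (by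
      have := (hδ0.smul_const (z - x)).const_add x
      simpa using this)
    exact (h1.sub h2).enorm
  calc ∫⁻ z in ball x r, ‖u z - u x‖ₑ
      = ∫⁻ z in ball x r, liminf (fun k => ‖v k z - v k (x + δ k • (z - x))‖ₑ) atTop := by
        apply setLIntegral_congr_fun measurableSet_ball
        intro z hz
        exact ((hlim2 z hz).liminf_eq).symm
    _ ≤ liminf (fun k => ∫⁻ z in ball x r, ‖v k z - v k (x + δ k • (z - x))‖ₑ) atTop := by
        apply lintegral_liminf_le
        intro k
        have := (hvc k).continuous
        exact Continuous.measurable (by fun_prop)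
    _ ≤ _ := by
        refine (liminf_le_liminf (Eventually.of_forall hest)).trans ?_
        simp


lemma vol_ball_scale {n : ℕ} (x y : En n) (t r : ℝ) (ht : 0 < t) :
    volume (ball x (t * r)) = ENNReal.ofReal t ^ n * volume (ball y r) := by
  rw [Measure.addHaar_ball_mul_of_pos _ _ ht, Measure.addHaar_ball_center _ y,
    ENNReal.ofReal_pow ht.le]
  simp

lemma leb_unif {n : ℕ} {F : Type*} [NormedAddCommGroup F] (D : En n → F)
    (hDm : StronglyMeasurable D) (hD : Integrable D) (s : Set (En n)) (hs : MeasurableSet s)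
    (hsf : volume s ≠ ∞) (ε : ℝ) (hε : 0 < ε) :
    ∃ t ⊆ s, MeasurableSet t ∧ volume t ≤ ENNReal.ofReal ε ∧ ∀ η : ℝ, 0 < η → ∃ δ : ℝ, 0 < δ ∧
      ∀ x ∈ s \ t, ∀ r, 0 < r → r < δ →
        ∫⁻ y in ball x r, ‖D y - D x‖ₑ ≤ ENNReal.ofReal η * volume (ball x r) := by
  let ρ : ℕ → ℝ := fun j => (1 / 2 : ℝ) ^ j
  have hρpos : ∀ j, 0 < ρ j := fun j => by positivity
  have hρ0 : Tendsto ρ atTop (𝓝[>] 0) := by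
    refine tendsto_nhdsWithin_iff.2 ⟨?_, Eventually.of_forall hρpos⟩
    exact tendsto_pow_atTop_nhds_zero_of_lt_one (by norm_num) (by norm_num)
  let A : ℕ → En n → ℝ≥0∞ := fun j x =>
    (∫⁻ y in closedBall x (ρ j), ‖D y - D x‖ₑ) / volume (closedBall x (ρ j))
  have hvol : ∀ j x, volume (closedBall x (ρ j)) = volume (closedBall (0 : En n) (ρ j)) :=
    fun j x => Measure.addHaar_closedBall_center _ _ _
  have hAm : ∀ j, Measurable (A j) := by
    intro j
    simp only [A, hvol]
    apply Measurable.div_const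
    have hset : MeasurableSet {p : En n × En n | dist p.2 p.1 ≤ ρ j} :=
      (isClosed_le (by fun_prop) continuous_const).measurableSet
    have h1 : Measurable (fun p : En n × En n => ‖D p.2 - D p.1‖ₑ) :=
      ((hDm.comp_measurable measurable_snd).sub (hDm.comp_measurable measurable_fst)).enorm
    have h2 := (h1.indicator hset).lintegral_prod_right' (ν := (volume : Measure (En n)))
    convert h2 using 2 with x
    rw [← lintegral_indicator measurableSet_closedBall]
    rfl
  have hconv : ∀ᵐ x ∂(volume : Measure (En n)), x ∈ s →
      Tendsto (fun j => (A j x).toReal) atTop (𝓝 0) := by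
    filter_upwards [(Besicovitch.vitaliFamily (volume : Measure (En n))).ae_tendsto_lintegral_enorm_sub_div
      hD.locallyIntegrable] with x hx _
    have := (hx.comp (Besicovitch.tendsto_filterAt volume x)).comp hρ0
    have h2 := (ENNReal.tendsto_toReal ENNReal.zero_ne_top).comp this
    rw [ENNReal.toReal_zero] at h2
    exact h2
  obtain ⟨t, hts, htm, htε, htu⟩ := tendstoUniformlyOn_of_ae_tendsto (μ := volume)
    (f := fun j x => (A j x).toReal) (g := fun _ => (0 : ℝ))
    (fun j => (hAm j).ennreal_toReal.stronglyMeasurable) stronglyMeasurable_const hs hsf hconv hε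
  refine ⟨t, hts, htm, htε, fun η hη => ?_⟩
  rw [Metric.tendstoUniformlyOn_iff] at htu
  obtain ⟨J, hJ⟩ := eventually_atTop.1 (htu (η / 4 ^ n) (by positivity))
  refine ⟨ρ J, hρpos J, fun x hx r hr hrJ => ?_⟩
  have hr1 : r ≤ 1 := hrJ.le.trans (pow_le_one₀ (by norm_num) (by norm_num))
  obtain ⟨j, hj1, hj2⟩ := exists_nat_pow_near_of_lt_one hr hr1 (y := (1 / 2 : ℝ))
    (by norm_num) (by norm_num)
  have hjJ : J ≤ j := by
    by_contra hlt
    push Not at hlt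
    have : (1 / 2 : ℝ) ^ J ≤ (1 / 2 : ℝ) ^ (j + 1) :=
      pow_le_pow_of_le_one (by norm_num) (by norm_num) hlt
    exact absurd (hj1.trans hrJ) (not_lt.2 this)
  have hA := hJ j hjJ x hx
  simp only [Real.dist_eq, zero_sub, abs_neg, abs_of_nonneg ENNReal.toReal_nonneg] at hA
  have hv0 : volume (closedBall x (ρ j)) ≠ 0 := (measure_closedBall_pos _ _ (hρpos j)).ne'
  have hv1 : volume (closedBall x (ρ j)) ≠ ∞ := measure_closedBall_lt_top.ne
  have hfin : ∫⁻ y in closedBall x (ρ j), ‖D y - D x‖ₑ ≠ ∞ := by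
    have : IntegrableOn (fun y => D y - D x) (closedBall x (ρ j)) :=
      hD.integrableOn.sub (integrableOn_const hv1)
    exact this.2.ne
  have hAfin : A j x ≠ ∞ := ENNReal.div_ne_top hfin hv0
  have hA2 : A j x ≤ ENNReal.ofReal (η / 4 ^ n) := by
    rw [← ENNReal.ofReal_toReal hAfin]
    exact ENNReal.ofReal_le_ofReal hA.le
  have hρr : ρ j < 4 * r := by
    have : ρ j = 2 * (1 / 2 : ℝ) ^ (j + 1) := by simp only [ρ]; rw [pow_succ]; ring
    linarith
  calc ∫⁻ y in ball x r, ‖D y - D x‖ₑ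
      ≤ ∫⁻ y in closedBall x (ρ j), ‖D y - D x‖ₑ :=
        lintegral_mono_set (ball_subset_closedBall.trans (closedBall_subset_closedBall hj2))
    _ = A j x * volume (closedBall x (ρ j)) := (ENNReal.div_mul_cancel hv0 hv1).symm
    _ ≤ ENNReal.ofReal (η / 4 ^ n) * volume (ball x (4 * r)) := by
        gcongr
        exact closedBall_subset_ball hρr
    _ = ENNReal.ofReal η * volume (ball x r) := by
        rw [vol_ball_scale x x 4 r (by norm_num), ← mul_assoc,
          ← ENNReal.ofReal_pow (by norm_num), ← ENNReal.ofReal_mul (by positivity)]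
        congr 2
        field_simp


lemma affine_weak {n : ℕ} (U : Set (En n)) (u : En n → ℝ)
    (hu : ContinuousOn u U) (G : En n → (En n →L[ℝ] ℝ))
    (hG : ∀ C, IsCompact C → C ⊆ U → IntegrableOn G C)
    (hw : ∀ φ : En n → ℝ, SmoothTest U φ → ∀ i : Fin n,
      ∫ z in U, u z * fderiv ℝ φ z (EuclideanSpace.single i 1)
        = - ∫ z in U, φ z * G z (EuclideanSpace.single i 1))
    (a : En n →L[ℝ] ℝ) (φ : En n → ℝ) (hφ : SmoothTest U φ) (i : Fin n) :
      ∫ z in U, (u z - a z) * fderiv ℝ φ z (EuclideanSpace.single i 1)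
        = - ∫ z in U, φ z * (G z - a) (EuclideanSpace.single i 1) := by
  obtain ⟨hφ1, hφ2, hφ3⟩ := hφ
  set e : En n := EuclideanSpace.single i 1
  have hφ1' : ContDiff ℝ 1 φ := hφ1.of_le (by exact_mod_cast le_top)
  have hdc : Continuous (fun z => fderiv ℝ φ z e) :=
    (hφ1'.continuous_fderiv one_ne_zero).clm_apply continuous_const
  have hK : IsCompact (tsupport φ) := hφ2
  have hz1 : ∀ z ∉ tsupport φ, fderiv ℝ φ z = 0 := fun z hz => by
    by_contra h
    exact hz (support_fderiv_subset ℝ h)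
  have hz0 : ∀ z ∉ tsupport φ, φ z = 0 := fun z hz => image_eq_zero_of_notMem_tsupport hz
  have gen : ∀ h : En n → ℝ, IntegrableOn h (tsupport φ) → (∀ z ∉ tsupport φ, h z = 0) →
      Integrable h := by
    intro h hi hz
    rw [← integrableOn_iff_integrable_of_support_subset (s := tsupport φ)]
    · exact hi
    · intro z hz'
      by_contra hc
      exact hz' (hz z hc)
  have i1 : Integrable (fun z => u z * fderiv ℝ φ z e) := by
    apply gen
    · exact ((hu.mono hφ3).mul hdc.continuousOn).integrableOn_compact hK
    · intro z hz; simp [hz1 z hz]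
  have i2 : Integrable (fun z => a z * fderiv ℝ φ z e) := by
    apply gen
    · exact (a.continuous.mul hdc).continuousOn.integrableOn_compact hK
    · intro z hz; simp [hz1 z hz]
  have i3 : Integrable (fun z => φ z * G z e) := by
    apply gen
    · have h1 : IntegrableOn (fun z => G z e) (tsupport φ) :=
        (hG _ hK hφ3).apply_continuousLinearMap e
      exact h1.continuousOn_mul hφ1.continuous.continuousOn hK
    · intro z hz; simp [hz0 z hz]
  have i4 : Integrable (fun z => φ z * a e) := by
    apply gen
    · exact (hφ1.continuous.mul continuous_const).continuousOn.integrableOn_compact hK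
    · intro z hz; simp [hz0 z hz]
  have i5 : Integrable (fun z => a z * φ z) := by
    apply gen
    · exact (a.continuous.mul hφ1.continuous).continuousOn.integrableOn_compact hK
    · intro z hz; simp [hz0 z hz]
  have hlin : ∫ z in U, a z * fderiv ℝ φ z e = - ∫ z in U, φ z * a e := by
    rw [setIntegral_eq_integral_of_forall_compl_eq_zero,
      setIntegral_eq_integral_of_forall_compl_eq_zero]
    · have := integral_mul_fderiv_eq_neg_fderiv_mul_of_integrable (μ := (volume : Measure (En n)))
        (f := fun z => a z) (g := φ) (v := e)
        (by simp only [ContinuousLinearMap.fderiv]; simpa only [mul_comm] using i4) i2 i5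
        (fun x _ => a.differentiableAt) (fun x _ => (hφ1'.differentiable one_ne_zero) x)
      rw [this]
      simp only [ContinuousLinearMap.fderiv, mul_comm]
    · intro z hz; simp [hz0 z (fun h => hz (hφ3 h))]
    · intro z hz; simp [hz1 z (fun h => hz (hφ3 h))]
  simp only [sub_mul, _root_.sub_apply, mul_sub]
  rw [integral_sub i1.integrableOn i2.integrableOn, integral_sub i3.integrableOn i4.integrableOn,
    hw φ ⟨hφ1, hφ2, hφ3⟩ i, hlin]
  ring


lemma pair_est {n : ℕ} (U : Set (En n)) (hU : IsOpen U) (u : En n → ℝ)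
    (hu : ContinuousOn u U) (G : En n → (En n →L[ℝ] ℝ))
    (hG : ∀ C, IsCompact C → C ⊆ U → IntegrableOn G C)
    (hw : ∀ φ : En n → ℝ, SmoothTest U φ → ∀ i : Fin n,
      ∫ z in U, u z * fderiv ℝ φ z (EuclideanSpace.single i 1)
        = - ∫ z in U, φ z * G z (EuclideanSpace.single i 1))
    (x y : En n) (r : ℝ) (hr : 0 < r) (hd : dist x y = r)
    (hx : closedBall x (2 * r) ⊆ U) (hy : closedBall y (2 * r) ⊆ U)
    (a b : En n →L[ℝ] ℝ) (c : ℝ≥0∞)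
    (hca : ∀ s, 0 < s → s ≤ 2 * r → ∫⁻ z in ball x s, ‖G z - a‖ₑ ≤ c * volume (ball x s))
    (hcb : ∀ s, 0 < s → s ≤ 2 * r → ∫⁻ z in ball y s, ‖G z - b‖ₑ ≤ c * volume (ball y s)) :
    ‖u y - u x - a (y - x)‖ₑ ≤ ENNReal.ofReal r * (c * ((2 * 2 ^ n + 2) * 2 ^ n)) := by
  have key : ∀ (p : En n) (q : En n →L[ℝ] ℝ), closedBall p (2 * r) ⊆ U →
      (∀ s, 0 < s → s ≤ 2 * r → ∫⁻ z in ball p s, ‖G z - q‖ₑ ≤ c * volume (ball p s)) →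
      ∫⁻ z in ball p r, ‖(u z - q z) - (u p - q p)‖ₑ
        ≤ ENNReal.ofReal r * (c * 2 ^ n * volume (ball p r)) := by
    intro p q hp hq
    have hI : IntegrableOn (fun z => G z - q) (closedBall p (2 * r)) :=
      (hG _ (isCompact_closedBall _ _) hp).sub (integrableOn_const measure_closedBall_lt_top.ne)
    exact sobolev_ball U hU (fun z => u z - q z) (hu.sub q.continuous.continuousOn)
      (fun z => G z - q) p r hr hp hI
      (fun φ hφ i => affine_weak U u hu G hG hw q φ hφ i) c hq
  set m : En n := midpoint ℝ x y with hm
  have hmx : dist m x = r / 2 := by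
    rw [hm, dist_midpoint_left, hd]; simp; ring
  have hmy : dist m y = r / 2 := by
    rw [hm, dist_midpoint_right, hd]; simp; ring
  have hBx : ball m (r / 2) ⊆ ball x r := ball_subset_ball' (by rw [hmx]; linarith)
  have hBy : ball m (r / 2) ⊆ ball y r := ball_subset_ball' (by rw [hmy]; linarith)
  have hxU : ball x r ⊆ U :=
    (ball_subset_closedBall.trans (closedBall_subset_closedBall (by linarith))).trans hx
  have hVx : volume (ball x r) = 2 ^ n * volume (ball m (r / 2)) := by
    have := vol_ball_scale x m 2 (r / 2) (by norm_num)
    rw [show 2 * (r / 2) = r by ring] at this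
    simpa using this
  have hVy : volume (ball y r) = 2 ^ n * volume (ball m (r / 2)) := by
    have := vol_ball_scale y m 2 (r / 2) (by norm_num)
    rw [show 2 * (r / 2) = r by ring] at this
    simpa using this
  set T : ℝ := u y - u x - a (y - x) with hT
  have hpt : ∀ z ∈ ball m (r / 2), ‖T‖ₑ ≤ ‖(u z - a z) - (u x - a x)‖ₑ
      + (‖(u z - b z) - (u y - b y)‖ₑ
      + (‖G z - a‖ₑ * ENNReal.ofReal r + ‖G z - b‖ₑ * ENNReal.ofReal r)) := by
    intro z hz
    have hz2 : ‖z - y‖ ≤ r := by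
      rw [← dist_eq_norm]; exact (mem_ball.1 (hBy hz)).le
    have e1 : T = ((u z - a z) - (u x - a x)) + (-((u z - b z) - (u y - b y))
        + (-((G z - a) (z - y)) + (G z - b) (z - y))) := by
      simp only [hT, map_sub, _root_.sub_apply]; ring
    have e2 : ∀ q : En n →L[ℝ] ℝ, ‖q (z - y)‖ₑ ≤ ‖q‖ₑ * ENNReal.ofReal r := by
      intro q
      rw [← ofReal_norm, ← ofReal_norm, ← ENNReal.ofReal_mul (norm_nonneg _)]
      apply ENNReal.ofReal_le_ofReal
      exact (q.le_opNorm _).trans (by gcongr)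
    rw [e1]
    refine (enorm_add_le _ _).trans (add_le_add le_rfl ((enorm_add_le _ _).trans
      (add_le_add (by rw [enorm_neg]) ((enorm_add_le _ _).trans (add_le_add ?_ (e2 _))))))
    rw [enorm_neg]; exact e2 _
  have hBU : ball m (r / 2) ⊆ U := hBx.trans hxU
  have hcm : ∀ q : En n →L[ℝ] ℝ, ∀ d : ℝ, AEMeasurable (fun z => ‖(u z - q z) - d‖ₑ)
      (volume.restrict (ball m (r / 2))) := by
    intro q d
    have : ContinuousOn (fun z => (u z - q z) - d) (ball m (r / 2)) :=
      ((hu.mono hBU).sub q.continuous.continuousOn).sub continuousOn_const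
    exact (this.aestronglyMeasurable measurableSet_ball).enorm
  have hGm : ∀ q : En n →L[ℝ] ℝ, AEMeasurable (fun z => ‖G z - q‖ₑ * ENNReal.ofReal r)
      (volume.restrict (ball m (r / 2))) := by
    intro q
    have h1 : IntegrableOn G (ball m (r / 2)) :=
      (hG _ (isCompact_closedBall _ _) hx).mono_set
        (hBx.trans (ball_subset_closedBall.trans (closedBall_subset_closedBall (by linarith))))
    exact (h1.1.sub aestronglyMeasurable_const).enorm.mul_const _
  have hGi : ∀ (p : En n) (q : En n →L[ℝ] ℝ), ball m (r / 2) ⊆ ball p r →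
      (∀ s, 0 < s → s ≤ 2 * r → ∫⁻ z in ball p s, ‖G z - q‖ₑ ≤ c * volume (ball p s)) →
      ∫⁻ z in ball m (r / 2), ‖G z - q‖ₑ * ENNReal.ofReal r
        ≤ c * volume (ball p r) * ENNReal.ofReal r := by
    intro p q hp hq
    rw [lintegral_mul_const' _ _ ENNReal.ofReal_ne_top]
    exact mul_le_mul' ((lintegral_mono_set hp).trans (hq r hr (by linarith))) le_rfl
  have hv0 : volume (ball m (r / 2)) ≠ 0 := (measure_ball_pos _ _ (by linarith)).ne'
  have hv1 : volume (ball m (r / 2)) ≠ ∞ := measure_ball_lt_top.ne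
  have main : ‖T‖ₑ * volume (ball m (r / 2)) ≤
      ENNReal.ofReal r * (c * ((2 * 2 ^ n + 2) * 2 ^ n)) * volume (ball m (r / 2)) := by
    calc ‖T‖ₑ * volume (ball m (r / 2)) = ∫⁻ z in ball m (r / 2), ‖T‖ₑ := by
          rw [setLIntegral_const]
      _ ≤ _ := setLIntegral_mono' measurableSet_ball hpt
      _ ≤ ENNReal.ofReal r * (c * 2 ^ n * volume (ball x r))
          + (ENNReal.ofReal r * (c * 2 ^ n * volume (ball y r))
          + (c * volume (ball x r) * ENNReal.ofReal r
          + c * volume (ball y r) * ENNReal.ofReal r)) := by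
          rw [lintegral_add_left' (hcm _ _), lintegral_add_left' (hcm _ _),
            lintegral_add_left' (hGm _)]
          exact add_le_add ((lintegral_mono_set hBx).trans (key x a hx hca))
            (add_le_add ((lintegral_mono_set hBy).trans (key y b hy hcb))
            (add_le_add (hGi x a hBx hca) (hGi y b hBy hcb)))
      _ = _ := by rw [hVx, hVy]; ring
  exact (ENNReal.mul_le_mul_iff_left hv0 hv1).1 main


/-- The `j`-th row of a matrix, as a linear functional. -/
def rowL {n : ℕ} (j : Fin n) : (Fin n → Fin n → ℝ) →L[ℝ] (En n →L[ℝ] ℝ) :=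
  LinearMap.toContinuousLinearMap
    { toFun := fun M => ∑ i, M j i • EuclideanSpace.proj (𝕜 := ℝ) i
      map_add' := fun M N => by
        simp only [Pi.add_apply, add_smul, Finset.sum_add_distrib]
      map_smul' := fun c M => by
        simp only [Pi.smul_apply, smul_eq_mul, mul_smul, Finset.smul_sum, RingHom.id_apply] }

lemma rowL_apply {n : ℕ} (j : Fin n) (M : Fin n → Fin n → ℝ) (v : En n) :
    rowL j M v = ∑ i, M j i * v i := by
  simp [rowL]

lemma rowL_single {n : ℕ} (j i : Fin n) (M : Fin n → Fin n → ℝ) :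
    rowL j M (EuclideanSpace.single i 1) = M j i := by
  rw [rowL_apply]
  simp

/-- The continuous linear map attached to a matrix. -/
def matL {n : ℕ} (M : Fin n → Fin n → ℝ) : En n →L[ℝ] En n :=
  Matrix.toEuclideanCLM (𝕜 := ℝ) (Matrix.of fun j i => M j i)

lemma matL_apply {n : ℕ} (M : Fin n → Fin n → ℝ) (v : En n) (j : Fin n) :
    matL M v j = rowL j M v := by
  rw [rowL_apply]
  simp [matL, Matrix.ofLp_toEuclideanCLM, Matrix.mulVec, dotProduct]

lemma matL_det {n : ℕ} (M : Fin n → Fin n → ℝ) :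
    (matL M).det = Matrix.det (Matrix.of fun j i => M j i) := by
  rw [ContinuousLinearMap.det, matL, Matrix.coe_toEuclideanCLM_eq_toEuclideanLin]
  simp [Matrix.toEuclideanLin_eq_toLin_orthonormal]

lemma hasFDerivWithinAt_of_leb {n : ℕ} (Ω : Set (En n)) (hΩ : IsOpen Ω) (f : En n → En n)
    (hfc : ContinuousOn f Ω) (Df : En n → Fin n → Fin n → ℝ)
    (hDf : LocallyIntegrableOn Df Ω volume) (hweak : IsWeakDerivOn Ω f Df)
    (E : Set (En n)) (x₀ : En n) (ρ : ℝ) (hρ : 0 < ρ) (hE : E ⊆ ball x₀ ρ)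
    (hB : closedBall x₀ (3 * ρ) ⊆ Ω)
    (hL : ∀ η : ℝ, 0 < η → ∃ δ : ℝ, 0 < δ ∧ ∀ x ∈ E, ∀ r, 0 < r → r < δ →
        ∫⁻ y in ball x r, ‖Df y - Df x‖ₑ ≤ ENNReal.ofReal η * volume (ball x r))
    (x : En n) (hx : x ∈ E) :
    HasFDerivWithinAt f (matL (Df x)) E x := by
  rw [hasFDerivWithinAt_euclidean]
  intro j
  have hL' : (EuclideanSpace.proj j : En n →L[ℝ] ℝ).comp (matL (Df x)) = rowL j (Df x) := by
    ext v
    exact matL_apply _ _ _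
  rw [hL']
  refine HasFDerivWithinAt.of_isLittleO ?_
  rw [Asymptotics.isLittleO_iff]
  intro c hc
  have hC : (0 : ℝ) < (2 * 2 ^ n + 2) * 2 ^ n := by positivity
  have hR : 0 < ‖rowL (n := n) j‖ + 1 := by positivity
  obtain ⟨δ, hδ, hδL⟩ := hL (c / ((‖rowL (n := n) j‖ + 1) * ((2 * 2 ^ n + 2) * 2 ^ n)))
    (by positivity)
  have hmem : E ∩ ball x (min (δ / 3) ρ) ∈ 𝓝[E] x :=
    inter_mem_nhdsWithin _ (ball_mem_nhds _ (by positivity))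
  filter_upwards [hmem] with y hy
  obtain ⟨hyE, hyb⟩ := hy
  rcases eq_or_ne y x with rfl | hne
  · simp
  have hr : 0 < dist x y := dist_pos.2 hne.symm
  have hyb' : dist x y < min (δ / 3) ρ := by rw [dist_comm]; exact mem_ball.1 hyb
  have hr1 : dist x y < δ / 3 := hyb'.trans_le (min_le_left _ _)
  have hr2 : dist x y < ρ := hyb'.trans_le (min_le_right _ _)
  have hsub : ∀ p ∈ E, closedBall p (2 * dist x y) ⊆ Ω := by
    intro p hp
    refine (closedBall_subset_closedBall' ?_).trans hB
    have := mem_ball.1 (hE hp)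
    linarith
  have hbd : ∀ p ∈ E, ∀ s, 0 < s → s ≤ 2 * dist x y →
      ∫⁻ z in ball p s, ‖rowL j (Df z) - rowL j (Df p)‖ₑ ≤
        (ENNReal.ofReal (‖rowL (n := n) j‖ + 1) * ENNReal.ofReal
          (c / ((‖rowL (n := n) j‖ + 1) * ((2 * 2 ^ n + 2) * 2 ^ n)))) * volume (ball p s) := by
    intro p hp s hs hs2
    calc ∫⁻ z in ball p s, ‖rowL j (Df z) - rowL j (Df p)‖ₑ
        ≤ ∫⁻ z in ball p s, ENNReal.ofReal (‖rowL (n := n) j‖ + 1) * ‖Df z - Df p‖ₑ := by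
          apply lintegral_mono
          intro z
          show ‖rowL j (Df z) - rowL j (Df p)‖ₑ ≤ ENNReal.ofReal (‖rowL (n := n) j‖ + 1) * ‖Df z - Df p‖ₑ
          rw [← map_sub, ← ofReal_norm, ← ofReal_norm, ← ENNReal.ofReal_mul hR.le]
          apply ENNReal.ofReal_le_ofReal
          refine ((rowL j).le_opNorm _).trans ?_
          gcongr
          linarith
      _ = ENNReal.ofReal (‖rowL (n := n) j‖ + 1) * ∫⁻ z in ball p s, ‖Df z - Df p‖ₑ :=
          lintegral_const_mul' _ _ ENNReal.ofReal_ne_top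
      _ ≤ _ := by
          rw [mul_assoc]
          exact mul_le_mul' le_rfl (hδL p hp s hs (by linarith))
  have main := pair_est Ω hΩ (fun z => f z j)
    ((EuclideanSpace.proj (𝕜 := ℝ) j).continuous.comp_continuousOn hfc)
    (fun z => rowL j (Df z))
    (fun C hC hCΩ => (rowL j).integrable_comp (hDf.integrableOn_compact_subset hCΩ hC))
    (fun φ hφ i => by simpa only [rowL_single] using hweak φ hφ j i)
    x y (dist x y) hr rfl (hsub x hx) (hsub y hyE) (rowL j (Df x)) (rowL j (Df y)) _
    (hbd x hx) (hbd y hyE)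
  have e3 : ENNReal.ofReal (dist x y) * (ENNReal.ofReal (‖rowL (n := n) j‖ + 1) * ENNReal.ofReal
      (c / ((‖rowL (n := n) j‖ + 1) * ((2 * 2 ^ n + 2) * 2 ^ n))) * ((2 * 2 ^ n + 2) * 2 ^ n))
      = ENNReal.ofReal (c * ‖y - x‖) := by
    have e4 : ((2 * 2 ^ n + 2) * 2 ^ n : ℝ≥0∞) = ENNReal.ofReal ((2 * 2 ^ n + 2) * 2 ^ n) := by
      rw [ENNReal.ofReal_mul (by positivity), ENNReal.ofReal_add (by positivity) (by positivity),
        ENNReal.ofReal_mul (by positivity), ENNReal.ofReal_pow (by positivity)]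
      simp
    rw [e4, ← ENNReal.ofReal_mul (by positivity), ← ENNReal.ofReal_mul (by positivity),
      ← ENNReal.ofReal_mul (by positivity), dist_comm, dist_eq_norm]
    congr 1
    field_simp
  rw [e3, ← ofReal_norm] at main
  exact (ENNReal.ofReal_le_ofReal_iff (by positivity)).1 main


lemma local_cover {n : ℕ} (Ω : Set (En n)) (hΩ : IsOpen Ω) (f : En n → En n)
    (hfc : ContinuousOn f Ω) (Df : En n → Fin n → Fin n → ℝ)
    (hDf : LocallyIntegrableOn Df Ω volume) (hweak : IsWeakDerivOn Ω f Df)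
    (x₀ : En n) (ρ : ℝ) (hρ : 0 < ρ) (hB : closedBall x₀ (3 * ρ) ⊆ Ω) :
    ∃ E : ℕ → Set (En n), (∀ k, MeasurableSet (E k)) ∧ (∀ k, E k ⊆ ball x₀ ρ) ∧
      volume (ball x₀ ρ \ ⋃ k, E k) = 0 ∧
      ∀ k, ∀ x ∈ E k, HasFDerivWithinAt f (matL (Df x)) (E k) x := by
  set C := closedBall x₀ (3 * ρ) with hC
  have hI : IntegrableOn Df C := hDf.integrableOn_compact_subset hB (isCompact_closedBall _ _)
  have hD0 : Integrable (C.indicator Df) :=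
    (integrable_indicator_iff measurableSet_closedBall).2 hI
  set D := hD0.1.mk (C.indicator Df) with hDdef
  have hDae : C.indicator Df =ᵐ[volume] D := hD0.1.ae_eq_mk
  have hDm : StronglyMeasurable D := hD0.1.stronglyMeasurable_mk
  have hDi : Integrable D := hD0.congr hDae
  obtain ⟨N, hNsub, hNm, hN0⟩ := exists_measurable_superset_of_null (ae_iff.1 hDae)
  have hleb := fun q : ℕ => leb_unif D hDm hDi (ball x₀ ρ) measurableSet_ball
    measure_ball_lt_top.ne (1 / ((q : ℝ) + 1)) (by positivity)
  choose t hts htm htv htL using hleb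
  refine ⟨fun q => (ball x₀ ρ \ t q) \ N, fun q => (measurableSet_ball.diff (htm q)).diff hNm,
    fun q => sdiff_subset.trans sdiff_subset, ?_, ?_⟩
  · have hsub : ball x₀ ρ \ ⋃ k, ((ball x₀ ρ \ t k) \ N) ⊆ (⋂ k, t k) ∪ N := by
      intro z hz
      by_cases hzN : z ∈ N
      · exact Or.inr hzN
      · left
        rw [mem_iInter]
        intro k
        by_contra hzk
        exact hz.2 (mem_iUnion.2 ⟨k, ⟨hz.1, hzk⟩, hzN⟩)
    refine measure_mono_null hsub (measure_union_null ?_ hN0)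
    have hle : ∀ q : ℕ, volume (⋂ k, t k) ≤ ENNReal.ofReal (1 / ((q : ℝ) + 1)) :=
      fun q => (measure_mono (iInter_subset _ q)).trans (htv q)
    have hlim : Tendsto (fun q : ℕ => ENNReal.ofReal (1 / ((q : ℝ) + 1))) atTop (𝓝 0) := by
      have := ENNReal.tendsto_ofReal (tendsto_one_div_add_atTop_nhds_zero_nat (𝕜 := ℝ))
      simpa only [ENNReal.ofReal_zero] using this
    exact le_antisymm (ge_of_tendsto' hlim hle) zero_le
  · intro q x hx
    refine hasFDerivWithinAt_of_leb Ω hΩ f hfc Df hDf hweak _ x₀ ρ hρ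
      (sdiff_subset.trans sdiff_subset) hB ?_ x hx
    intro η hη
    obtain ⟨δ, hδ, hδL⟩ := htL q η hη
    refine ⟨min δ ρ, lt_min hδ hρ, fun p hp r hr hrδ => ?_⟩
    have hpb : dist p x₀ < ρ := mem_ball.1 hp.1.1
    have hr2 : r < ρ := hrδ.trans_le (min_le_right _ _)
    have hsub : ball p r ⊆ C := by
      refine ball_subset_closedBall.trans (closedBall_subset_closedBall' ?_)
      linarith
    have hpD : Df p = D p := by
      by_contra hne
      apply hp.2
      apply hNsub
      show ¬ (C.indicator Df p = D p)
      rwa [indicator_of_mem (hsub (mem_ball_self hr))]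
    have heq : ∫⁻ y in ball p r, ‖Df y - Df p‖ₑ = ∫⁻ y in ball p r, ‖D y - D p‖ₑ := by
      apply setLIntegral_congr_fun_ae measurableSet_ball
      filter_upwards [hDae] with y hy hyb
      rw [indicator_of_mem (hsub hyb)] at hy
      rw [hy, hpD]
    rw [heq]
    exact hδL p hp.1 r hr (hrδ.trans_le (min_le_left _ _))

lemma global_cover {n : ℕ} (Ω : Set (En n)) (hΩ : IsOpen Ω) (f : En n → En n)
    (hfc : ContinuousOn f Ω) (Df : En n → Fin n → Fin n → ℝ)
    (hDf : LocallyIntegrableOn Df Ω volume) (hweak : IsWeakDerivOn Ω f Df) :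
    ∃ E : ℕ → Set (En n), (∀ k, MeasurableSet (E k)) ∧ (∀ k, E k ⊆ Ω) ∧
      volume (Ω \ ⋃ k, E k) = 0 ∧
      ∀ k, ∀ x ∈ E k, HasFDerivWithinAt f (matL (Df x)) (E k) x := by
  have hex : ∀ x : Ω, ∃ ρ : ℝ, 0 < ρ ∧ closedBall (x : En n) (3 * ρ) ⊆ Ω := by
    intro x
    obtain ⟨ε, hε, hsub⟩ := Metric.nhds_basis_closedBall.mem_iff.1 (hΩ.mem_nhds x.2)
    exact ⟨ε / 3, by positivity, by rwa [show 3 * (ε / 3) = ε by ring]⟩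
  choose ρ hρ hρΩ using hex
  obtain ⟨T, hTc, hTU⟩ := TopologicalSpace.isOpen_iUnion_countable
    (fun x : Ω => ball (x : En n) (ρ x)) (fun x => isOpen_ball)
  have hloc := fun x : Ω => local_cover Ω hΩ f hfc Df hDf hweak x (ρ x) (hρ x) (hρΩ x)
  choose E hEm hEs hE0 hED using hloc
  have : Countable T := hTc.to_subtype
  obtain ⟨e, he⟩ := exists_surjective_nat (Option (T × ℕ))
  let F : Option (T × ℕ) → Set (En n) := fun o => o.elim ∅ (fun p => E p.1 p.2)
  have p1 : ∀ o, MeasurableSet (F o) := by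
    rintro (_ | p)
    · exact MeasurableSet.empty
    · exact hEm _ _
  have p2 : ∀ o, F o ⊆ Ω := by
    rintro (_ | p)
    · exact empty_subset _
    · exact ((hEs _ _).trans (ball_subset_closedBall.trans
        (closedBall_subset_closedBall (by linarith [hρ p.1.1])))).trans (hρΩ p.1.1)
  have p3 : ∀ o, ∀ x ∈ F o, HasFDerivWithinAt f (matL (Df x)) (F o) x := by
    rintro (_ | p)
    · intro x hx
      exact absurd hx (notMem_empty x)
    · exact hED _ _
  refine ⟨fun k => F (e k), fun k => p1 _, fun k => p2 _, ?_, fun k => p3 _⟩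
  · have hsub : Ω \ ⋃ k, F (e k) ⊆ ⋃ x : T, (ball (x.1 : En n) (ρ x.1) \ ⋃ k, E x.1 k) := by
      intro z hz
      have h1 : z ∈ ⋃ x : Ω, ball (x : En n) (ρ x) :=
        mem_iUnion.2 ⟨⟨z, hz.1⟩, mem_ball_self (hρ _)⟩
      rw [← hTU] at h1
      obtain ⟨x, hxT, hzx⟩ := mem_iUnion₂.1 h1
      refine mem_iUnion.2 ⟨⟨x, hxT⟩, hzx, fun hzE => hz.2 ?_⟩
      obtain ⟨q, hq⟩ := mem_iUnion.1 hzE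
      obtain ⟨k, hk⟩ := he (some (⟨x, hxT⟩, q))
      refine mem_iUnion.2 ⟨k, ?_⟩
      rw [hk]
      exact hq
    exact measure_mono_null hsub (measure_iUnion_null fun x => hE0 x.1)


lemma continuous_frobNorm {m n : ℕ} : Continuous (frobNorm (m := m) (n := n)) := by
  unfold frobNorm
  fun_prop

/-- **Corollary (Statement 9).** For a homeomorphism `f ∈ W^{1,1}_loc(Ω₁, ℝⁿ)` with weak
derivative `Df`, the measure bound `|Df|(f⁻¹(A)) ≤ K·Lⁿ(A)` for all Borel `A ⊆ Ω₂` is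
equivalent to `|Df(x)| ≤ K·|J_f(x)|` for a.e. `x ∈ Ω₁`. -/
theorem sobolev_variation_bound_iff_pointwise {n : ℕ}
    (Ω₁ Ω₂ : Set (En n)) (hΩ₁ : IsOpen Ω₁) (hΩ₂ : IsOpen Ω₂)
    (f g : En n → En n) (hf : IsHomeoOn f g Ω₁ Ω₂)
    (Df : En n → Fin n → Fin n → ℝ)
    (hfloc : LocallyIntegrableOn f Ω₁ volume)
    (hDfloc : LocallyIntegrableOn Df Ω₁ volume)
    (hweak : IsWeakDerivOn Ω₁ f Df)
    (K : ℝ) (hK : 0 < K) :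
    (∀ A : Set (En n), A ⊆ Ω₂ → MeasurableSet A →
        ∫⁻ x in f ⁻¹' A ∩ Ω₁, ENNReal.ofReal (frobNorm (Df x)) ∂volume
          ≤ ENNReal.ofReal K * volume A)
      ↔ (∀ᵐ x ∂volume.restrict Ω₁,
          frobNorm (Df x) ≤ K * |Matrix.det (Matrix.of fun j i => Df x j i)|) := by
  obtain ⟨hfc, hgc, hfm, hgm, hgf, hfg⟩ := hf
  obtain ⟨E, hEm, hEs, hE0, hED⟩ := global_cover Ω₁ hΩ₁ f hfc Df hDfloc hweak
  have hinj : InjOn f Ω₁ := fun x hx y hy hxy => by rw [← hgf x hx, ← hgf y hy, hxy]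
  have hginj : InjOn g Ω₂ := fun x hx y hy hxy => by rw [← hfg x hx, ← hfg y hy, hxy]
  have area : ∀ k, ∀ S, S ⊆ E k → MeasurableSet S →
      ∫⁻ x in S, ENNReal.ofReal |Matrix.det (Matrix.of fun j i => Df x j i)| = volume (f '' S) := by
    intro k S hS hSm
    have := lintegral_abs_det_fderiv_eq_addHaar_image volume hSm
      (fun x hx => (hED k x (hS hx)).mono hS) (hinj.mono (hS.trans (hEs k)))
    simpa only [matL_det] using this
  have himg : ∀ S, S ⊆ Ω₁ → MeasurableSet S → MeasurableSet (f '' S) := fun S hS hSm =>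
    hSm.image_of_continuousOn_injOn (hfc.mono hS) (hinj.mono hS)
  have hfrob : AEMeasurable (fun x => ENNReal.ofReal (frobNorm (Df x))) (volume.restrict Ω₁) :=
    (continuous_frobNorm.comp_aestronglyMeasurable hDfloc.aestronglyMeasurable).aemeasurable.ennreal_ofReal
  constructor
  · intro h
    have hk : ∀ k, ∀ᵐ x ∂volume, x ∈ E k →
        frobNorm (Df x) ≤ K * |Matrix.det (Matrix.of fun j i => Df x j i)| := by
      intro k
      rw [← ae_restrict_iff' (hEm k)]
      have h1 : (fun x => ENNReal.ofReal (frobNorm (Df x))) ≤ᵐ[volume.restrict (E k)]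
          (fun x => ENNReal.ofReal K *
            ENNReal.ofReal |Matrix.det (Matrix.of fun j i => Df x j i)|) := by
        apply ae_le_of_forall_setLIntegral_le_of_sigmaFinite₀
          (hfrob.mono_measure (Measure.restrict_mono (hEs k) le_rfl))
        intro s hs _
        rw [Measure.restrict_restrict hs]
        have hSE : s ∩ E k ⊆ E k := inter_subset_right
        have hSΩ : s ∩ E k ⊆ Ω₁ := hSE.trans (hEs k)
        have hSm : MeasurableSet (s ∩ E k) := hs.inter (hEm k)
        have h2 := h (f '' (s ∩ E k)) ((image_mono hSΩ).trans hfm.image_subset) (himg _ hSΩ hSm)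
        rw [hinj.preimage_image_inter hSΩ, ← area k _ hSE hSm] at h2
        rwa [lintegral_const_mul' _ _ ENNReal.ofReal_ne_top]
      filter_upwards [h1] with x hx
      rw [← ENNReal.ofReal_mul hK.le] at hx
      exact (ENNReal.ofReal_le_ofReal_iff (by positivity)).1 hx
    rw [ae_restrict_iff' hΩ₁.measurableSet]
    have h0 : ∀ᵐ x ∂(volume : Measure (En n)), x ∉ Ω₁ \ ⋃ k, E k := measure_eq_zero_iff_ae_notMem.1 hE0
    filter_upwards [ae_all_iff.2 hk, h0] with x hx hx0 hxΩ
    by_cases hxE : x ∈ ⋃ k, E k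
    · obtain ⟨k, hxk⟩ := mem_iUnion.1 hxE
      exact hx k hxk
    · exact absurd ⟨hxΩ, hxE⟩ hx0
  · intro h A hA hAm
    have hS : f ⁻¹' A ∩ Ω₁ = g '' A := by
      ext x
      constructor
      · rintro ⟨hxA, hx⟩
        exact ⟨f x, hxA, hgf x hx⟩
      · rintro ⟨y, hy, rfl⟩
        exact ⟨by rw [mem_preimage, hfg y (hA hy)]; exact hy, hgm (hA hy)⟩
    have hSm : MeasurableSet (f ⁻¹' A ∩ Ω₁) := by
      rw [hS]
      exact hAm.image_of_continuousOn_injOn (hgc.mono hA) (hginj.mono hA)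
    set S := f ⁻¹' A ∩ Ω₁ with hSdef
    have hSΩ : S ⊆ Ω₁ := inter_subset_right
    let F : ℕ → Set (En n) := fun k => S ∩ disjointed E k
    have hFm : ∀ k, MeasurableSet (F k) := fun k => hSm.inter (MeasurableSet.disjointed hEm k)
    have hFE : ∀ k, F k ⊆ E k := fun k => inter_subset_right.trans (disjointed_subset E k)
    have hFS : ∀ k, F k ⊆ S := fun k => inter_subset_left
    have hFd : Pairwise (Function.onFun Disjoint F) := fun i j hij =>
      (disjoint_disjointed E hij).mono inter_subset_right inter_subset_right
    have hSF : S ≤ᵐ[volume] (⋃ k, F k) := by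
      have h0 : ∀ᵐ x ∂(volume : Measure (En n)), x ∉ Ω₁ \ ⋃ k, E k := measure_eq_zero_iff_ae_notMem.1 hE0
      filter_upwards [h0] with x hx hxS
      have hxE : x ∈ ⋃ k, E k := by
        by_contra hxE
        exact hx ⟨hSΩ hxS, hxE⟩
      rw [← iUnion_disjointed] at hxE
      obtain ⟨k, hxk⟩ := mem_iUnion.1 hxE
      exact mem_iUnion.2 ⟨k, hxS, hxk⟩
    have hae : ∀ k, ∀ᵐ x ∂volume.restrict (F k), ENNReal.ofReal (frobNorm (Df x)) ≤
        ENNReal.ofReal K * ENNReal.ofReal |Matrix.det (Matrix.of fun j i => Df x j i)| := by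
      intro k
      filter_upwards [ae_restrict_of_ae_restrict_of_subset ((hFS k).trans hSΩ) h] with x hx
      rw [← ENNReal.ofReal_mul hK.le]
      exact ENNReal.ofReal_le_ofReal hx
    have himd : Pairwise (Function.onFun Disjoint fun k => f '' F k) := fun i j hij =>
      (hFd hij).image hinj ((hFS i).trans hSΩ) ((hFS j).trans hSΩ)
    calc ∫⁻ x in S, ENNReal.ofReal (frobNorm (Df x))
        ≤ ∫⁻ x in ⋃ k, F k, ENNReal.ofReal (frobNorm (Df x)) :=
          lintegral_mono' (Measure.restrict_mono_ae hSF) le_rfl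
      _ = ∑' k, ∫⁻ x in F k, ENNReal.ofReal (frobNorm (Df x)) := lintegral_iUnion hFm hFd _
      _ ≤ ∑' k, ENNReal.ofReal K * volume (f '' F k) := by
          refine ENNReal.tsum_le_tsum fun k => ?_
          rw [← area k _ (hFE k) (hFm k), ← lintegral_const_mul' _ _ ENNReal.ofReal_ne_top]
          exact lintegral_mono_ae (hae k)
      _ = ENNReal.ofReal K * volume (⋃ k, f '' F k) := by
          rw [ENNReal.tsum_mul_left, measure_iUnion himd fun k => himg _ ((hFS k).trans hSΩ) (hFm k)]
      _ ≤ ENNReal.ofReal K * volume A := by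
          refine mul_le_mul' le_rfl (measure_mono (iUnion_subset fun k => ?_))
          rintro _ ⟨x, hx, rfl⟩
          exact (hFS k hx).1
end
end

section
/- Let Ω₁, Ω₂ ⊆ ℝⁿ be open and let f : Ω₁ → Ω₂ be a homeomorphism such that f⁻¹ is Lipschitz. Then f ∈ BV_loc(Ω₁, Ω₂) and there is a constant K > 0 (one may take K = C(n)·‖D(f⁻¹)‖_{L^∞}^{n−1} with C(n) depending only on n) such that |Df|(f⁻¹(A)) ≤ K·Lⁿ(A) for all Borel sets A ⊆ Ω₂. -/
open MeasureTheory Metric Set Filter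
open scoped ENNReal Topology NNReal

noncomputable section

open BigOperators

lemma box_vol {n : ℕ} (i : Fin n) (c : En n) (a t : ℝ) (ha : 0 ≤ a) :
    volume {x : En n | ∀ l, x l ∈ Icc (c l - a - (if l = i then t else 0)) (c l + a)}
      = ENNReal.ofReal ((2 * a) ^ (n - 1) * (t + 2 * a)) := by
  have h := (PiLp.volume_preserving_ofLp (Fin n)).measure_preimage
    (s := Set.pi univ fun l => Icc (c l - a - (if l = i then t else 0)) (c l + a))
    (MeasurableSet.univ_pi fun l => measurableSet_Icc).nullMeasurableSet
  have e : {x : En n | ∀ l, x l ∈ Icc (c l - a - (if l = i then t else 0)) (c l + a)}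
     = WithLp.ofLp ⁻¹' (Set.pi univ fun l => Icc (c l - a - (if l = i then t else 0)) (c l + a)) := by
    ext x
    simp only [Set.mem_ofPred_eq, Set.mem_preimage, Set.mem_pi, Set.mem_univ, true_imp_iff]
  rw [e, h, volume_pi_pi]
  simp only [Real.volume_Icc]
  rw [← Finset.mul_prod_erase _ _ (Finset.mem_univ i),
    Finset.prod_congr rfl (g := fun _ => ENNReal.ofReal (2 * a))]
  · rw [Finset.prod_const, Finset.card_erase_of_mem (Finset.mem_univ i), Finset.card_univ, Fintype.card_fin,
      if_pos rfl, ENNReal.ofReal_mul (p := (2 * a) ^ (n - 1)) (by positivity),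
      ENNReal.ofReal_pow (by positivity), mul_comm]
    congr 2
    ring
  · intro l hl
    rw [if_neg (Finset.ne_of_mem_erase hl)]
    congr 1
    ring

lemma cube_vol {n : ℕ} (δ : ℝ) (hδ : 0 < δ) (k : Fin n → ℤ) :
    volume {y : En n | ∀ l, ⌊y l / δ⌋ = k l} = ENNReal.ofReal (δ ^ n) := by
  have h := (PiLp.volume_preserving_ofLp (Fin n)).measure_preimage
    (s := Set.pi univ fun l => Ico (k l * δ) ((k l + 1) * δ))
    (MeasurableSet.univ_pi fun l => measurableSet_Ico).nullMeasurableSet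
  have e : {y : En n | ∀ l, ⌊y l / δ⌋ = k l}
     = WithLp.ofLp ⁻¹' (Set.pi univ fun l => Ico (k l * δ) ((k l + 1) * δ)) := by
    ext x
    simp only [Set.mem_ofPred_eq, Set.mem_preimage, Set.mem_pi, Set.mem_univ, true_imp_iff, Int.floor_eq_iff, Set.mem_Ico]
    refine forall_congr' fun l => ?_
    rw [le_div_iff₀ hδ, div_lt_iff₀ hδ]
  rw [e, h, volume_pi_pi]
  simp only [Real.volume_Ico]
  simp only [add_mul, one_mul, add_sub_cancel_left]
  rw [Finset.prod_const, ENNReal.ofReal_pow hδ.le]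
  simp

lemma norm_le_coord {n : ℕ} (x : En n) (b : ℝ) (h : ∀ l, |x l| ≤ b) : ‖x‖ ≤ n * b := by
  have : ‖x‖ ≤ ∑ l, |x l| := by
    rw [EuclideanSpace.norm_eq]
    refine Real.sqrt_le_iff.2 ⟨by positivity, ?_⟩
    simp only [Real.norm_eq_abs]
    exact Finset.sum_sq_le_sq_sum_of_nonneg (fun i _ => abs_nonneg _)
  refine this.trans ((Finset.sum_le_sum fun l _ => h l).trans ?_)
  simp


/-- the index of the grid cube of side `δ` containing `y` -/
def gridIdx {n : ℕ} (δ : ℝ) (y : En n) : Fin n → ℤ := fun l => ⌊y l / δ⌋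

lemma gridIdx_meas {n : ℕ} (δ : ℝ) (k : Fin n → ℤ) :
    MeasurableSet {y : En n | gridIdx δ y = k} := by
  have : {y : En n | gridIdx δ y = k} = ⋂ l, {y : En n | ⌊y l / δ⌋ = k l} := by
    ext y; simp [gridIdx, funext_iff]
  rw [this]
  refine MeasurableSet.iInter fun l => ?_
  have hm : Measurable fun y : En n => ⌊y l / δ⌋ := by fun_prop
  exact hm (measurableSet_singleton _)

lemma gridIdx_dist {n : ℕ} {δ : ℝ} (hδ : 0 < δ) {y z : En n} (h : gridIdx δ y = gridIdx δ z) :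
    dist y z ≤ n * δ := by
  rw [dist_eq_norm]
  refine norm_le_coord _ _ fun l => ?_
  have hl : ⌊y l / δ⌋ = ⌊z l / δ⌋ := congrFun h l
  have := Int.abs_sub_lt_one_of_floor_eq_floor hl
  rw [← sub_div, abs_div, abs_of_pos hδ, div_lt_one hδ] at this
  simpa using this.le

lemma gridIdx_finite {n : ℕ} {δ : ℝ} (hδ : 0 < δ) {s : Set (En n)} (hs : Bornology.IsBounded s) :
    (gridIdx δ '' s).Finite := by
  obtain ⟨R, hR⟩ := hs.exists_norm_le
  refine (Set.Finite.pi' (t := fun _ : Fin n => Icc ⌊-R / δ⌋ ⌊R / δ⌋) fun _ => Set.finite_Icc _ _).subset ?_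
  rintro _ ⟨y, hy, rfl⟩ l
  have h1 : |y l| ≤ R := by
    have := PiLp.norm_apply_le y l
    rw [Real.norm_eq_abs] at this
    exact this.trans (hR y hy)
  rw [abs_le] at h1
  constructor <;> refine Int.floor_le_floor ?_ <;> gcongr <;> linarith

lemma core {n : ℕ} {Ω₁ Ω₂ : Set (En n)} {f g : En n → En n} (h : IsHomeoOn f g Ω₁ Ω₂)
    {L : ℝ≥0} (hL : LipschitzOnWith L g Ω₂) {K K0 W : Set (En n)} (hK : MeasurableSet K)
    (hK0 : IsCompact K0) (hK01 : K0 ⊆ Ω₁) (hW2 : W ⊆ Ω₂) {δ t : ℝ} (hδ : 0 < δ) (ht : 0 < t)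
    (hW : ∀ y ∈ f '' K0, ∀ y', gridIdx δ y' = gridIdx δ y → y' ∈ W)
    {φ : En n → ℝ} {Λ : ℝ≥0} (hφ : LipschitzWith Λ φ) (i j : Fin n)
    (hKK : ∀ x ∈ K, ∀ s ∈ Icc (0:ℝ) t, x + s • EuclideanSpace.single i (1:ℝ) ∈ K0) :
    ∫⁻ x in K, ‖φ x‖ₑ * ‖f (x + t • EuclideanSpace.single i (1:ℝ)) j - f x j‖ₑ ≤
      ENNReal.ofReal ((2 * n * L) ^ (n - 1) * (t + 2 * (L * (n * δ)))) *
        ∫⁻ y in W, (‖φ (g y)‖ₑ + ENNReal.ofReal (Λ * (n * (t + L * (n * δ)) + L * (n * δ)))) := by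
  obtain ⟨hfc, hgc, hfm, hgm, hgf, hfg⟩ := h
  set e : En n := EuclideanSpace.single i (1:ℝ) with he
  set a : ℝ := L * (n * δ) with ha
  have ha0 : 0 ≤ a := by positivity
  set η : ℝ := Λ * (n * (t + a) + a) with hη
  have hfK : Bornology.IsBounded (f '' K0) := (hK0.image_of_continuousOn (hfc.mono hK01)).isBounded
  have hfin := gridIdx_finite hδ hfK
  set S := hfin.toFinset with hS
  have hyk : ∀ k ∈ S, ∃ y ∈ f '' K0, gridIdx δ y = k := by
    intro k hk; rw [hS, Set.Finite.mem_toFinset] at hk; exact hk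
  choose! yk hyk1 hyk2 using hyk
  set B : (Fin n → ℤ) → Set (En n) := fun k =>
    {x : En n | ∀ l, x l ∈ Icc (g (yk k) l - a - (if l = i then t else 0)) (g (yk k) l + a)} with hB
  set Q : (Fin n → ℤ) → Set (En n) := fun k => {y : En n | gridIdx δ y = k} with hQ
  have hBm : ∀ k, MeasurableSet (B k) := by
    intro k
    have : B k = ⋂ l, {x : En n | x l ∈ Icc (g (yk k) l - a - (if l = i then t else 0)) (g (yk k) l + a)} := by
      ext x; simp [hB]
    rw [this]
    refine MeasurableSet.iInter fun l => ?_
    have hm : Measurable fun y : En n => y l := by fun_prop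
    exact hm measurableSet_Icc
  have hQW : ∀ k ∈ S, Q k ⊆ W := by
    intro k hk y hy
    exact hW _ (hyk1 k hk) y (by rw [hyk2 k hk]; exact hy)
  have hykW : ∀ k ∈ S, yk k ∈ W := fun k hk => hQW k hk (hyk2 k hk)
  -- key cover
  have key : ∀ x ∈ K, ‖f (x + t • e) j - f x j‖ₑ ≤ ∑ k ∈ S, (B k).indicator (fun _ => ENNReal.ofReal δ) x := by
    intro x hx
    have hc : ContinuousOn (fun s : ℝ => f (x + s • e) j) (uIcc 0 t) := by
      rw [uIcc_of_le ht.le]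
      have h1 : ContinuousOn (fun s : ℝ => f (x + s • e)) (Icc 0 t) :=
        hfc.comp (by fun_prop) fun s hs => hK01 (hKK x hx s hs)
      exact (EuclideanSpace.proj (𝕜 := ℝ) j).continuous.comp_continuousOn h1
    have hiv := intermediate_value_uIcc hc
    simp only [zero_smul, add_zero] at hiv
    rw [uIcc_of_le (a := (0:ℝ)) ht.le] at hiv
    have hsub : uIcc (f x j) (f (x + t • e) j) ⊆
        ⋃ k ∈ S, ⋃ (_ : x ∈ B k), Icc (k j * δ) ((k j + 1) * δ) := by
      intro z hz
      obtain ⟨s, hs, rfl⟩ := hiv hz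
      have hxK := hKK x hx s hs
      set y := f (x + s • e) with hy
      have hk : gridIdx δ y ∈ S := by
        rw [hS, Set.Finite.mem_toFinset]; exact ⟨y, ⟨_, hxK, rfl⟩, rfl⟩
      refine mem_iUnion₂.2 ⟨gridIdx δ y, hk, mem_iUnion.2 ⟨?_, ?_⟩⟩
      · have hd : dist (g y) (g (yk (gridIdx δ y))) ≤ a := by
          refine (hL.dist_le_mul _ (hW2 (hQW _ hk rfl)) _ (hW2 (hykW _ hk))).trans ?_
          rw [ha]
          gcongr
          exact gridIdx_dist hδ (hyk2 _ hk).symm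
        have hgy : g y = x + s • e := hgf _ (hK01 hxK)
        rw [hgy, dist_eq_norm] at hd
        intro l
        have hl := (PiLp.norm_apply_le (x + s • e - g (yk (gridIdx δ y))) l).trans hd
        rw [Real.norm_eq_abs, abs_le] at hl
        simp only [he, PiLp.sub_apply, PiLp.add_apply, PiLp.smul_apply, PiLp.single_apply, smul_eq_mul] at hl
        have h1 := hs.1
        have h2 := hs.2
        constructor <;> split_ifs at * <;> linarith
      · have h1 := Int.floor_le (y j / δ)
        have h2 := (Int.lt_floor_add_one (y j / δ)).le
        rw [le_div_iff₀ hδ] at h1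
        rw [div_le_iff₀ hδ] at h2
        exact ⟨h1, h2⟩
    have hv := measure_mono (μ := volume) hsub
    rw [Real.volume_interval, ← Real.enorm_eq_ofReal_abs] at hv
    refine hv.trans ((measure_biUnion_finset_le _ _).trans (Finset.sum_le_sum fun k hk => ?_))
    by_cases hxB : x ∈ B k
    · simp only [hxB, iUnion_true, indicator_of_mem, Real.volume_Icc]
      apply le_of_eq; congr 1; ring
    · simp [hxB]
  have hφm : Measurable fun x => ‖φ x‖ₑ := hφ.continuous.measurable.enorm
  calc _ ≤ ∫⁻ x in K, ‖φ x‖ₑ * ∑ k ∈ S, (B k).indicator (fun _ => ENNReal.ofReal δ) x := by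
        refine setLIntegral_mono' hK fun x hx => ?_
        gcongr
        exact key x hx
    _ ≤ ∫⁻ x, ∑ k ∈ S, (B k).indicator (fun x => ‖φ x‖ₑ * ENNReal.ofReal δ) x := by
        refine (setLIntegral_le_lintegral _ _).trans (lintegral_mono fun x => ?_)
        rw [Finset.mul_sum]
        refine Finset.sum_le_sum fun k _ => ?_
        by_cases hx : x ∈ B k <;> simp [hx]
    _ = ∑ k ∈ S, ∫⁻ x in B k, ‖φ x‖ₑ * ENNReal.ofReal δ := by
        rw [lintegral_finsetSum]
        · exact Finset.sum_congr rfl fun k _ => lintegral_indicator (hBm k) _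
        · intro k _
          exact (hφm.mul_const _).indicator (hBm k)
    _ ≤ ∑ k ∈ S, ENNReal.ofReal ((2 * n * L) ^ (n - 1) * (t + 2 * a)) *
          ∫⁻ y in Q k, (‖φ (g y)‖ₑ + ENNReal.ofReal η) := by
        refine Finset.sum_le_sum fun k hk => ?_
        have hsup : ∀ x ∈ B k, ∀ y ∈ Q k, ‖φ x‖ₑ ≤ ‖φ (g y)‖ₑ + ENNReal.ofReal η := by
          intro x hx y hy
          have hd : dist (g (yk k)) (g y) ≤ a := by
            refine (hL.dist_le_mul _ (hW2 (hykW _ hk)) _ (hW2 (hQW _ hk hy))).trans ?_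
            rw [ha]
            gcongr
            exact gridIdx_dist hδ ((hyk2 _ hk).trans hy.symm)
          have hd2 : dist x (g (yk k)) ≤ n * (t + a) := by
            rw [dist_eq_norm]
            refine norm_le_coord _ _ fun l => ?_
            have := hx l
            rw [PiLp.sub_apply, abs_le]
            obtain ⟨h1, h2⟩ := this
            constructor <;> split_ifs at * <;> linarith
          have hd3 : dist (φ x) (φ (g y)) ≤ η := by
            refine (hφ.dist_le_mul _ _).trans ?_
            rw [hη]
            gcongr
            exact (dist_triangle _ (g (yk k)) _).trans (add_le_add hd2 hd)
          rw [← ofReal_norm, ← ofReal_norm, ← ENNReal.ofReal_add (norm_nonneg _) (by positivity)]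
          refine ENNReal.ofReal_le_ofReal ?_
          rw [dist_eq_norm] at hd3
          have := norm_le_norm_add_norm_sub' (φ x) (φ (g y))
          linarith
        set M := ⨆ x ∈ B k, ‖φ x‖ₑ with hM
        have h1 : ∫⁻ x in B k, ‖φ x‖ₑ * ENNReal.ofReal δ ≤ M * ENNReal.ofReal δ * volume (B k) := by
          rw [← setLIntegral_const]
          refine setLIntegral_mono' (hBm k) fun x hx => ?_
          gcongr
          exact le_iSup₂ (f := fun x (_ : x ∈ B k) => ‖φ x‖ₑ) x hx
        have h2 : M * volume (Q k) ≤ ∫⁻ y in Q k, (‖φ (g y)‖ₑ + ENNReal.ofReal η) := by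
          rw [← setLIntegral_const]
          refine setLIntegral_mono' (gridIdx_meas δ k) fun y hy => ?_
          exact iSup₂_le fun x hx => hsup x hx y hy
        have hQv : volume (Q k) = ENNReal.ofReal (δ ^ n) := by
          rw [← cube_vol δ hδ k]
          congr 1; ext y; simp [hQ, gridIdx, funext_iff]
        have hn : δ ^ n = δ ^ (n - 1) * δ := by
          rw [← pow_succ]; congr 1; have := i.pos; omega
        refine h1.trans (le_trans (le_of_eq ?_) (mul_le_mul_right h2 _))
        rw [hQv, hB, box_vol i _ a t ha0, mul_assoc, mul_left_comm _ M,
          ← ENNReal.ofReal_mul hδ.le, ← ENNReal.ofReal_mul (by positivity), hn, ha]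
        congr 2
        have : 2 * ((L:ℝ) * (n * δ)) = (2 * n * L) * δ := by ring
        rw [this, mul_pow]
        ring
    _ = ENNReal.ofReal ((2 * n * L) ^ (n - 1) * (t + 2 * a)) *
          ∫⁻ y in ⋃ k ∈ S, Q k, (‖φ (g y)‖ₑ + ENNReal.ofReal η) := by
        rw [← Finset.mul_sum, lintegral_biUnion_finset]
        · intro k _ l _ hkl
          refine Set.disjoint_left.2 fun y hy hy' => hkl ?_
          exact hy.symm.trans hy'
        · exact fun k _ => gridIdx_meas δ k
    _ ≤ _ := by
        gcongr
        exact iUnion₂_subset hQW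

lemma cmul {n : ℕ} {Ω K : Set (En n)} (hΩ : IsOpen Ω) {u ψ : En n → ℝ} (hu : ContinuousOn u Ω)
    (hψ : Continuous ψ) (hK : IsCompact K) (hKΩ : K ⊆ Ω) (h0 : ∀ x, x ∉ K → ψ x = 0) :
    Continuous (fun x => u x * ψ x) ∧ Integrable (fun x => u x * ψ x) := by
  have hc : Continuous (fun x => u x * ψ x) := by
    refine continuous_of_tsupport fun x hx => ?_
    have hxK : x ∈ K := by
      refine closure_minimal (fun z hz => ?_) hK.isClosed hx
      by_contra hzK
      exact hz (by simp [h0 z hzK])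
    exact (hu.continuousAt (hΩ.mem_nhds (hKΩ hxK))).mul hψ.continuousAt
  exact ⟨hc, hc.integrable_of_hasCompactSupport
    (HasCompactSupport.intro hK fun x hx => by simp [h0 x hx])⟩

lemma coord_cont {n : ℕ} {Ω : Set (En n)} {f : En n → En n} (hf : ContinuousOn f Ω) (j : Fin n) :
    ContinuousOn (fun x => f x j) Ω :=
  (EuclideanSpace.proj (𝕜 := ℝ) j).continuous.comp_continuousOn hf

lemma comp_integrable {n : ℕ} {Ω₁ Ω₂ : Set (En n)} (hΩ₂ : IsOpen Ω₂)
    {f g : En n → En n} (h : IsHomeoOn f g Ω₁ Ω₂) {φ : En n → ℝ} (hφ : SmoothTest Ω₁ φ) :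
    IntegrableOn (fun y => φ (g y)) Ω₂ := by
  obtain ⟨hfc, hgc, hfm, hgm, hgf, hfg⟩ := h
  obtain ⟨hs, hcs, hts⟩ := hφ
  have hK : IsCompact (f '' tsupport φ) := IsCompact.image_of_continuousOn hcs (hfc.mono hts)
  have hK2 : f '' tsupport φ ⊆ Ω₂ := by
    rintro _ ⟨x, hx, rfl⟩; exact hfm (hts hx)
  have h1 : IntegrableOn (fun y => φ (g y)) (f '' tsupport φ) :=
    (hs.continuous.comp_continuousOn (hgc.mono hK2)).integrableOn_compact hK
  refine h1.of_forall_sdiff_eq_zero hΩ₂.measurableSet ?_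
  rintro y ⟨hy, hyK⟩
  refine image_eq_zero_of_notMem_tsupport fun hgy => hyK ⟨g y, hgy, hfg y hy⟩

lemma bound {n : ℕ} {Ω₁ Ω₂ : Set (En n)} (hΩ₁ : IsOpen Ω₁) (hΩ₂ : IsOpen Ω₂)
    {f g : En n → En n} (h : IsHomeoOn f g Ω₁ Ω₂)
    {L : ℝ≥0} (hL : LipschitzOnWith L g Ω₂) {φ : En n → ℝ} (hφ : SmoothTest Ω₁ φ) (i j : Fin n) :
    |∫ x in Ω₁, f x j * fderiv ℝ φ x (EuclideanSpace.single i 1)| ≤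
      (2 * n * L) ^ (n - 1) * ∫ y in Ω₂, |φ (g y)| := by
  have hφg := comp_integrable hΩ₂ h hφ
  have h' := h
  obtain ⟨hfc, hgc, hfm, hgm, hgf, hfg⟩ := h'
  obtain ⟨hs, hcs, hts⟩ := hφ
  set e : En n := EuclideanSpace.single i (1:ℝ) with he
  have hen : ‖e‖ = 1 := by simp [he]
  obtain ⟨Λ, hΛ⟩ := ContDiff.lipschitzWith_of_hasCompactSupport hcs hs (by simp)
  set K := tsupport φ with hKdef
  have hK : IsCompact K := hcs
  obtain ⟨r, hr, hrK⟩ := hK.exists_cthickening_subset_open hΩ₁ hts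
  set K0 := cthickening r K with hK0def
  have hK0 : IsCompact K0 := hK.cthickening
  have hfK0 : IsCompact (f '' K0) := hK0.image_of_continuousOn (hfc.mono hrK)
  have hfK02 : f '' K0 ⊆ Ω₂ := by
    rintro _ ⟨x, hx, rfl⟩; exact hfm (hrK hx)
  obtain ⟨ρ, hρ, hρW⟩ := hfK0.exists_cthickening_subset_open hΩ₂ hfK02
  set W := cthickening ρ (f '' K0) with hWdef
  have hWc : IsCompact W := hfK0.cthickening
  have hKK0 : K ⊆ K0 := self_subset_cthickening K
  have hfj := coord_cont hfc j
  have hφ0 : ∀ x, x ∉ K → φ x = 0 := fun x hx => image_eq_zero_of_notMem_tsupport hx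
  have hmem : ∀ x y, x ∈ K → dist y x ≤ r → y ∈ K0 := fun x y hx hd =>
    mem_cthickening_of_dist_le y x r K hx hd
  have hshift : ∀ t : ℝ, 0 < t → t ≤ r → ∀ x, x ∉ K0 → φ (x - t • e) = 0 := by
    intro t ht htr x hx
    refine hφ0 _ fun hxK => hx (hmem _ _ hxK ?_)
    rw [dist_eq_norm, sub_sub_cancel, norm_smul, hen, Real.norm_eq_abs, abs_of_pos ht]
    linarith
  set A := ∫ y in Ω₂, |φ (g y)| with hA
  set w := (volume W).toReal with hw
  set D : ℝ → ℝ := fun t => ∫ x, f x j * (t⁻¹ * (φ x - φ (x - t • e))) with hD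
  set R : ℝ → ℝ := fun t => (2 * n * L) ^ (n - 1) * (1 + 2 * (L * (n * t))) *
      (A + Λ * (n * (t + L * (n * t ^ 2)) + L * (n * t ^ 2)) * w) with hR
  have hI : ∫ x in Ω₁, f x j * fderiv ℝ φ x e = ∫ x, f x j * fderiv ℝ φ x e := by
    refine setIntegral_eq_integral_of_forall_compl_eq_zero fun x hx => ?_
    have : fderiv ℝ φ x = 0 :=
      image_eq_zero_of_notMem_tsupport fun hx' => hx (hts (tsupport_fderiv_subset ℝ hx'))
    simp [this]
  have hev1 : ∀ᶠ t : ℝ in 𝓝[>] 0, 0 < t := eventually_mem_nhdsWithin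
  have hev2 : ∀ᶠ t : ℝ in 𝓝[>] 0, t ≤ r := 
    eventually_nhdsWithin_of_eventually_nhds (eventually_le_nhds hr)
  have hev3 : ∀ᶠ t : ℝ in 𝓝[>] 0, n * t ^ 2 ≤ ρ := by
    refine eventually_nhdsWithin_of_eventually_nhds ?_
    have : Tendsto (fun t : ℝ => n * t ^ 2) (𝓝 0) (𝓝 0) := by
      have : Continuous (fun t : ℝ => n * t ^ 2) := by fun_prop
      simpa using this.tendsto 0
    exact this.eventually_le_const hρ
  have hDlim : Tendsto D (𝓝[>] 0) (𝓝 (∫ x, f x j * fderiv ℝ φ x e)) := by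
    refine tendsto_integral_filter_of_dominated_convergence
      (K0.indicator fun x => Λ * ‖f x j‖) ?_ ?_ ?_ ?_
    · filter_upwards [hev1, hev2] with t ht htr
      refine (cmul hΩ₁ hfj ?_ hK0 hrK ?_).1.aestronglyMeasurable
      · have := hs.continuous
        fun_prop
      · intro x hx
        rw [hshift t ht htr x hx, hφ0 x (fun hh => hx (hKK0 hh))]; simp
    · filter_upwards [hev1, hev2] with t ht htr
      refine Eventually.of_forall fun x => ?_
      by_cases hx : x ∈ K0
      · rw [indicator_of_mem hx, norm_mul, mul_comm]
        gcongr
        rw [norm_mul, norm_inv, inv_mul_le_iff₀ (norm_pos_iff.2 ht.ne'), ← dist_eq_norm]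
        refine (hΛ.dist_le_mul _ _).trans ?_
        rw [dist_eq_norm, sub_sub_cancel, norm_smul, hen, mul_one, mul_comm]
      · rw [indicator_of_notMem hx, hshift t ht htr x hx, hφ0 x (fun hh => hx (hKK0 hh))]; simp
    · rw [integrable_indicator_iff hK0.measurableSet]
      refine ContinuousOn.integrableOn_compact hK0 ?_
      exact continuousOn_const.mul (hfj.mono hrK).norm
    · refine Eventually.of_forall fun x => ?_
      refine Tendsto.const_mul _ ?_
      have hd : HasDerivAt (fun t : ℝ => φ (x + t • e)) (fderiv ℝ φ x e) 0 := by
        have h1 : HasFDerivAt φ (fderiv ℝ φ x) (x + (0:ℝ) • e) := by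
          simpa using (hs.differentiable (by simp) x).hasFDerivAt
        have h2 : HasDerivAt (fun t : ℝ => x + t • e) e 0 := by
          simpa using ((hasDerivAt_id (0:ℝ)).smul_const e).const_add x
        exact h1.comp_hasDerivAt _ h2
      have h3 := hasDerivAt_iff_tendsto_slope_zero.1 hd
      have h4 : Tendsto (fun t : ℝ => -t) (𝓝[>] 0) (𝓝[≠] 0) := by
        refine tendsto_nhdsWithin_iff.2 ⟨?_, ?_⟩
        · have : Continuous (fun t : ℝ => -t) := continuous_neg
          simpa using (this.tendsto 0).mono_left nhdsWithin_le_nhds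
        · filter_upwards [hev1] with t ht
          simpa using ht.ne'
      refine (h3.comp h4).congr fun t => ?_
      have h5 : x + (0 + -t) • e = x - t • e := by rw [zero_add, neg_smul, sub_eq_add_neg]
      simp only [Function.comp, h5, zero_smul, add_zero, smul_eq_mul, inv_neg]
      ring
  have hRlim : Tendsto R (𝓝[>] 0) (𝓝 ((2 * n * L) ^ (n - 1) * A)) := by
    have : Continuous R := by fun_prop
    have h0 := (this.tendsto 0).mono_left (nhdsWithin_le_nhds (s := Ioi (0:ℝ)))
    simpa [hR] using h0
  rw [hI]
  refine le_of_tendsto_of_tendsto hDlim.abs hRlim ?_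
  filter_upwards [hev1, hev2, hev3] with t ht htr htρ
  have hA0 : 0 ≤ A := integral_nonneg fun _ => abs_nonneg _
  have hw0 : 0 ≤ w := ENNReal.toReal_nonneg
  have hcont := hs.continuous
  have i1 : Integrable (fun x => f x j * φ x) :=
    (cmul hΩ₁ hfj hcont hK hts hφ0).2
  have i2 : Integrable (fun x => f x j * φ (x - t • e)) :=
    (cmul hΩ₁ hfj (by fun_prop) hK0 hrK (hshift t ht htr)).2
  have i3 : Integrable (fun x => f (x + t • e) j * φ x) := by
    simpa using i2.comp_add_right (t • e)
  have hDt : D t = - t⁻¹ * ∫ x, φ x * (f (x + t • e) j - f x j) := by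
    have e1 : ∫ x, f x j * φ (x - t • e) = ∫ x, f (x + t • e) j * φ x := by
      rw [← integral_add_right_eq_self _ (t • e)]; simp
    have e2 : D t = t⁻¹ * ((∫ x, f x j * φ x) - ∫ x, f x j * φ (x - t • e)) := by
      rw [← integral_sub i1 i2, ← integral_const_mul]
      refine integral_congr_ae (Eventually.of_forall fun x => ?_)
      simp only; ring
    rw [e2, e1, neg_mul, ← mul_neg, ← integral_sub i1 i3, ← integral_neg]
    congr 1
    refine integral_congr_ae (Eventually.of_forall fun x => ?_)
    simp only; ring
  have hcore := core h hL hK.measurableSet hK0 hrK hρW (δ := t ^ 2) (by positivity) ht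
    (fun y hy y' hyy => mem_cthickening_of_dist_le y' y ρ _ hy ((gridIdx_dist (by positivity) hyy).trans htρ))
    hΛ i j (fun x hx s hs => by
      refine hmem x _ hx ?_
      rw [dist_eq_norm, add_sub_cancel_left, norm_smul, ← he, hen, Real.norm_eq_abs, abs_of_nonneg hs.1]
      linarith [hs.2])
  rw [← he] at hcore
  set η : ℝ := Λ * (n * (t + L * (n * t ^ 2)) + L * (n * t ^ 2)) with hη
  have hη0 : 0 ≤ η := by positivity
  have hWi : ∫⁻ y in W, (‖φ (g y)‖ₑ + ENNReal.ofReal η) ≤ ENNReal.ofReal (A + η * w) := by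
    rw [lintegral_add_right _ measurable_const, setLIntegral_const, ENNReal.ofReal_add hA0 (by positivity),
      ENNReal.ofReal_mul hη0, hw, ENNReal.ofReal_toReal hWc.measure_lt_top.ne]
    gcongr
    refine (lintegral_mono_set hρW).trans (le_of_eq ?_)
    rw [← ofReal_integral_norm_eq_lintegral_enorm hφg]
    rfl
  have hfinal : |∫ x, φ x * (f (x + t • e) j - f x j)| ≤
      (2 * n * L) ^ (n - 1) * (t + 2 * (L * (n * t ^ 2))) * (A + η * w) := by
    rw [← ENNReal.ofReal_le_ofReal_iff (by positivity), ← Real.enorm_eq_ofReal_abs,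
      ENNReal.ofReal_mul (by positivity)]
    refine (enorm_integral_le_lintegral_enorm _).trans (le_trans ?_ (hcore.trans (by gcongr)))
    rw [← lintegral_indicator hK.measurableSet]
    refine lintegral_mono fun x => ?_
    by_cases hx : x ∈ K
    · simp [hx, enorm_mul]
    · simp [hx, hφ0 x hx]
  rw [hDt, abs_mul, abs_neg, abs_of_pos (by positivity : 0 < t⁻¹), inv_mul_le_iff₀ ht]
  refine hfinal.trans (le_of_eq ?_)
  rw [hR]
  simp only
  ring

lemma l1_dual {X V : Type*} [MeasurableSpace X] (m : Measure X) [IsFiniteMeasure m]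
    [AddCommGroup V] [Module ℝ V] (T : V →ₗ[ℝ] ℝ) (J : V →ₗ[ℝ] (X → ℝ))
    (hJ : ∀ v, MemLp (J v) 2 m) (M : ℝ) (hM : 0 ≤ M) (hT : ∀ v, |T v| ≤ M * ∫ x, |J v x| ∂m) :
    ∃ σ : X → ℝ, Measurable σ ∧ (∀ x, |σ x| ≤ M) ∧ ∀ v, T v = ∫ x, J v x * σ x ∂m := by
  let JL : V →ₗ[ℝ] Lp ℝ 2 m :=
    { toFun := fun v => (hJ v).toLp
      map_add' := fun u v => by
        rw [← MemLp.toLp_add]; congr 1; exact map_add _ _ _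
      map_smul' := fun c v => by
        rw [RingHom.id_apply, ← MemLp.toLp_const_smul]; congr 1; exact map_smul _ _ _ }
  have hJL : ∀ v, (JL v : X → ℝ) =ᵐ[m] J v := fun v => (hJ v).coeFn_toLp
  let N : Lp ℝ 2 m → ℝ := fun h => M * ∫ x, |h x| ∂m
  have hLint : ∀ h : Lp ℝ 2 m, Integrable h m := fun h => (Lp.memLp h).integrable (by norm_num)
  have hTN : ∀ v, T v ≤ N (JL v) := by
    intro v
    refine (le_abs_self _).trans ((hT v).trans (le_of_eq ?_))
    simp only [N]
    congr 1
    refine integral_congr_ae ?_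
    filter_upwards [hJL v] with x hx
    rw [hx]
  have hker : LinearMap.ker JL ≤ LinearMap.ker T := by
    intro v hv
    rw [LinearMap.mem_ker] at hv ⊢
    have h1 := hTN v
    have h2 := hTN (-v)
    have h0 : N 0 = 0 := by
      simp only [N]
      rw [integral_congr_ae (g := fun _ => 0)]
      · simp
      · filter_upwards [Lp.coeFn_zero ℝ 2 m] with x hx
        rw [hx]; simp
    rw [map_neg, map_neg, hv, neg_zero, h0] at h2
    rw [hv, h0] at h1
    linarith
  obtain ⟨T0, hT0⟩ : ∃ T0 : Lp ℝ 2 m →ₗ[ℝ] ℝ, ∀ v, T0 (JL v) = T v := by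
    obtain ⟨T0, hT0⟩ := LinearMap.exists_extend
      ((LinearMap.ker JL).liftQ T hker ∘ₗ JL.quotKerEquivRange.symm.toLinearMap)
    refine ⟨T0, fun v => ?_⟩
    have := LinearMap.congr_fun hT0 ⟨JL v, LinearMap.mem_range_self JL v⟩
    simp only [LinearMap.comp_apply, Submodule.subtype_apply] at this
    rw [this]
    have h2 : JL.quotKerEquivRange.symm ⟨JL v, LinearMap.mem_range_self JL v⟩
      = (LinearMap.ker JL).mkQ v := JL.quotKerEquivRange_symm_apply_image v _
    simp [h2]
  obtain ⟨G, hG1, hG2⟩ := exists_extension_of_le_sublinear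
    (⟨LinearMap.range JL, T0 ∘ₗ (LinearMap.range JL).subtype⟩ : Lp ℝ 2 m →ₗ.[ℝ] ℝ) N
    (by
      intro c hc h
      simp only [N]
      rw [integral_congr_ae (g := fun x => c * |h x|)]
      · rw [integral_const_mul]; ring
      · filter_upwards [Lp.coeFn_smul c h] with x hx
        rw [hx]; simp [abs_mul, abs_of_pos hc])
    (by
      intro h k
      simp only [N]
      rw [← mul_add, ← integral_add (hLint h).abs (hLint k).abs]
      refine mul_le_mul_of_nonneg_left (integral_mono_ae (hLint _).abs ((hLint h).abs.add (hLint k).abs) ?_) hM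
      filter_upwards [Lp.coeFn_add h k] with x hx
      rw [hx]
      exact abs_add_le _ _)
    (by
      rintro ⟨_, v, rfl⟩
      exact (hT0 v).le.trans (hTN v))
  have hGJ : ∀ v, G (JL v) = T v := by
    intro v
    exact (hG1 ⟨JL v, LinearMap.mem_range_self JL v⟩).trans (hT0 v)
  have hGN : ∀ h, ‖G h‖ ≤ N h := by
    intro h
    have hneg : N (-h) = N h := by
      simp only [N]
      congr 1
      refine integral_congr_ae ?_
      filter_upwards [Lp.coeFn_neg h] with x hx
      rw [hx]; simp
    have := hG2 (-h)
    rw [hneg, map_neg] at this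
    rw [Real.norm_eq_abs, abs_le]
    exact ⟨by linarith, hG2 h⟩
  have hNn : ∀ h, N h ≤ (M * (m univ).toReal ^ (1 / 2 : ℝ)) * ‖h‖ := by
    intro h
    simp only [N]
    rw [mul_assoc]
    refine mul_le_mul_of_nonneg_left ?_ hM
    have h1 := eLpNorm_le_eLpNorm_mul_rpow_measure_univ (μ := m) (p := 1) (q := 2) (by norm_num)
      (Lp.aestronglyMeasurable h)
    have h2 : ∫ x, |h x| ∂m = (eLpNorm h 1 m).toReal := by
      rw [eLpNorm_one_eq_lintegral_enorm, ← integral_norm_eq_lintegral_enorm (Lp.aestronglyMeasurable h)]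
      rfl
    rw [h2, Lp.norm_def, mul_comm, ENNReal.toReal_rpow, ← ENNReal.toReal_mul]
    refine ENNReal.toReal_mono ?_ (h1.trans (le_of_eq ?_))
    · exact ENNReal.mul_ne_top (Lp.eLpNorm_ne_top h) (ENNReal.rpow_ne_top_of_nonneg (by norm_num) (measure_ne_top _ _))
    · norm_num
  let Gc : Lp ℝ 2 m →L[ℝ] ℝ := G.mkContinuous _ fun h => (hGN h).trans (hNn h)
  let s := (InnerProductSpace.toDual ℝ (Lp ℝ 2 m)).symm Gc
  have hs : ∀ h, G h = inner ℝ s h := fun h => by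
    rw [InnerProductSpace.toDual_symm_apply]; rfl
  have hset : ∀ A : Set X, MeasurableSet A → |∫ x in A, s x ∂m| ≤ ∫ x in A, M ∂m := by
    intro A hA
    rw [← L2.inner_indicatorConstLp_one (𝕜 := ℝ) hA (measure_ne_top m A) s, real_inner_comm, ← hs]
    refine (hGN _).trans (le_of_eq ?_)
    simp only [N]
    rw [integral_congr_ae (g := A.indicator fun _ => 1)]
    · rw [integral_indicator hA]; simp [mul_comm]
    · filter_upwards [indicatorConstLp_coeFn (p := 2) (hs := hA) (hμs := measure_ne_top m A) (c := (1:ℝ))] with x hx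
      rw [hx]
      by_cases hxA : x ∈ A <;> simp [hxA]
  have hle1 : (s : X → ℝ) ≤ᵐ[m] fun _ => M :=
    ae_le_of_forall_setIntegral_le (hLint s) (integrable_const M) fun A hA _ =>
      (le_abs_self _).trans (hset A hA)
  have hle2 : (fun _ => -M) ≤ᵐ[m] (s : X → ℝ) :=
    ae_le_of_forall_setIntegral_le (integrable_const (-M)) (hLint s) fun A hA _ => by
      rw [integral_neg]
      exact (abs_le.1 (hset A hA)).1
  refine ⟨fun x => max (-M) (min M (s x)), ?_, ?_, ?_⟩
  · have := (Lp.stronglyMeasurable s).measurable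
    fun_prop
  · intro x
    rw [abs_le]
    exact ⟨le_max_left _ _, max_le (by linarith) (min_le_left _ _)⟩
  · intro v
    rw [← hGJ v, hs, L2.inner_def]
    refine integral_congr_ae ?_
    filter_upwards [hJL v, hle1, hle2] with x h1 h2 h3
    rw [h1, min_eq_right h2, max_eq_right h3]
    simp

/-- the space of smooth test functions -/
def testSpace {n : ℕ} (Ω : Set (En n)) : Submodule ℝ (En n → ℝ) where
  carrier := {φ | SmoothTest Ω φ}
  zero_mem' := by
    refine ⟨contDiff_const, HasCompactSupport.zero, ?_⟩
    have : tsupport (0 : En n → ℝ) = ∅ := by simp [tsupport]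
    rw [this]; exact empty_subset _
  add_mem' := by
    rintro a b ⟨ha, ha2, ha3⟩ ⟨hb, hb2, hb3⟩
    exact ⟨ha.add hb, ha2.add hb2, (tsupport_add a b).trans (union_subset ha3 hb3)⟩
  smul_mem' := by
    rintro c a ⟨ha, ha2, ha3⟩
    exact ⟨contDiff_const.smul ha, ha2.smul_left (f := fun _ => c),
      (tsupport_smul_subset_right (fun _ => c) a).trans ha3⟩

lemma deriv_integrable {n : ℕ} {Ω₁ : Set (En n)} (hΩ₁ : IsOpen Ω₁) {f : En n → En n}
    (hfc : ContinuousOn f Ω₁) {φ : En n → ℝ} (hφ : SmoothTest Ω₁ φ) (j : Fin n) (e : En n) :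
    Integrable (fun x => f x j * fderiv ℝ φ x e) := by
  obtain ⟨hs, hcs, hts⟩ := hφ
  refine (cmul hΩ₁ (coord_cont hfc j) ?_ hcs hts ?_).2
  · have := hs.continuous_fderiv (by simp)
    fun_prop
  · intro x hx
    have : fderiv ℝ φ x = 0 :=
      image_eq_zero_of_notMem_tsupport fun hx' => hx (tsupport_fderiv_subset ℝ hx')
    simp [this]

lemma dens {n : ℕ} {Ω₁ Ω₂ : Set (En n)} (hΩ₁ : IsOpen Ω₁) (hΩ₂ : IsOpen Ω₂)
    {f g : En n → En n} (h : IsHomeoOn f g Ω₁ Ω₂)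
    {L : ℝ≥0} (hL : LipschitzOnWith L g Ω₂) (i j : Fin n) :
    ∃ σ : En n → ℝ, Measurable σ ∧ (∀ y, |σ y| ≤ (2 * n * L) ^ (n - 1)) ∧
      ∀ φ, SmoothTest Ω₁ φ → ∫ x in Ω₁, f x j * fderiv ℝ φ x (EuclideanSpace.single i 1)
        = - ∫ y in Ω₂, φ (g y) * σ y := by
  have hfc := h.1
  set e : En n := EuclideanSpace.single i (1:ℝ) with he
  let v : En n → ℝ := fun y => (1 + ‖y‖) ^ (-((n:ℝ) + 1))
  have hv0 : ∀ y, 0 < v y := fun y => by positivity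
  have hvc : Continuous v := by
    refine Continuous.rpow_const (by fun_prop) fun y => Or.inl (by positivity)
  have hvi : Integrable v := integrable_one_add_norm (by simp)
  let m : Measure (En n) := (volume.restrict Ω₂).withDensity fun y => ENNReal.ofReal (v y)
  have hmfin : IsFiniteMeasure m := isFiniteMeasure_withDensity_ofReal hvi.restrict.2
  have hmac : m ≪ volume.restrict Ω₂ := withDensity_absolutelyContinuous _ _
  have hmint : ∀ u : En n → ℝ, ∫ y, u y ∂m = ∫ y in Ω₂, v y * u y := by
    intro u
    rw [integral_withDensity_eq_integral_toReal_smul (by fun_prop) (by simp)]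
    refine integral_congr_ae (Eventually.of_forall fun y => ?_)
    simp [ENNReal.toReal_ofReal (hv0 y).le]
  let T : testSpace Ω₁ →ₗ[ℝ] ℝ :=
    { toFun := fun φ => - ∫ x in Ω₁, f x j * fderiv ℝ φ.1 x e
      map_add' := by
        rintro ⟨φ, hφ⟩ ⟨ψ, hψ⟩
        rw [← neg_add, ← integral_add (deriv_integrable hΩ₁ hfc hφ j e).integrableOn
          (deriv_integrable hΩ₁ hfc hψ j e).integrableOn]
        congr 1
        refine integral_congr_ae (Eventually.of_forall fun x => ?_)
        have := fderiv_add (x := x) (hφ.1.differentiable (by simp) x) (hψ.1.differentiable (by simp) x)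
        simp only [Submodule.coe_add, this, add_apply]
        ring
      map_smul' := by
        rintro c ⟨φ, hφ⟩
        rw [RingHom.id_apply, smul_eq_mul, mul_neg, ← integral_const_mul]
        congr 1
        refine integral_congr_ae (Eventually.of_forall fun x => ?_)
        have := fderiv_const_smul (x := x) (hφ.1.differentiable (by simp) x) c
        simp only [Submodule.coe_smul, this, smul_apply, smul_eq_mul]
        ring }
  let J : testSpace Ω₁ →ₗ[ℝ] (En n → ℝ) :=
    { toFun := fun φ y => φ.1 (g y) * (v y)⁻¹
      map_add' := fun φ ψ => by ext y; simp [add_mul]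
      map_smul' := fun c φ => by ext y; simp [mul_assoc] }
  obtain ⟨σ, hσ1, hσ2, hσ3⟩ := l1_dual m T J (fun φ => by
      obtain ⟨φ, hφ⟩ := φ
      have hi := comp_integrable hΩ₂ h hφ
      obtain ⟨hfc, hgc, hfm, hgm, hgf, hfg⟩ := h
      obtain ⟨hs, hcs, hts⟩ := hφ
      have hK : IsCompact (f '' tsupport φ) := IsCompact.image_of_continuousOn hcs (hfc.mono hts)
      have hK2 : f '' tsupport φ ⊆ Ω₂ := by
        rintro _ ⟨x, hx, rfl⟩; exact hfm (hts hx)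
      have hco : ContinuousOn (fun y => φ (g y) * (v y)⁻¹) (f '' tsupport φ) :=
        (hs.continuous.comp_continuousOn (hgc.mono hK2)).mul
          (hvc.inv₀ fun y => (hv0 y).ne').continuousOn
      obtain ⟨B, hB⟩ := hK.exists_bound_of_continuousOn hco
      refine MemLp.of_bound ?_ (max B 0) ?_
      · refine AEStronglyMeasurable.mono_ac hmac ?_
        exact hi.1.mul (hvc.inv₀ fun y => (hv0 y).ne').aestronglyMeasurable
      · refine hmac.ae_le ?_
        filter_upwards [ae_restrict_mem hΩ₂.measurableSet] with y hy
        by_cases hyK : y ∈ f '' tsupport φ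
        · exact (hB y hyK).trans (le_max_left _ _)
        · have : φ (g y) = 0 :=
            image_eq_zero_of_notMem_tsupport fun hgy => hyK ⟨g y, hgy, hfg y hy⟩
          simp [J, this])
    ((2 * n * L) ^ (n - 1)) (by positivity) (by
      rintro ⟨φ, hφ⟩
      have hb := bound hΩ₁ hΩ₂ h hL hφ i j
      rw [hmint]
      simp only [T, J, LinearMap.coe_mk, AddHom.coe_mk, abs_neg]
      refine hb.trans (le_of_eq ?_)
      congr 1
      refine integral_congr_ae (Eventually.of_forall fun y => ?_)
      simp only [abs_mul, abs_inv, abs_of_pos (hv0 y)]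
      field_simp [(hv0 y).ne'])
  refine ⟨σ, hσ1, hσ2, fun φ hφ => ?_⟩
  have := hσ3 ⟨φ, hφ⟩
  rw [hmint] at this
  simp only [T, J, LinearMap.coe_mk, AddHom.coe_mk] at this
  rw [← neg_neg (∫ x in Ω₁, f x j * fderiv ℝ φ x e), this]
  congr 1
  refine integral_congr_ae (Eventually.of_forall fun y => ?_)
  have := (hv0 y).ne'
  simp only
  field_simp

lemma frobNorm_le {n : ℕ} (s : Fin n → Fin n → ℝ) (M : ℝ) (hM : 0 ≤ M) (h : ∀ j i, |s j i| ≤ M) :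
    frobNorm s ≤ n * M := by
  refine Real.sqrt_le_iff.2 ⟨by positivity, ?_⟩
  calc _ ≤ ∑ _j : Fin n, ∑ _i : Fin n, M ^ 2 := by
        refine Finset.sum_le_sum fun j _ => Finset.sum_le_sum fun i _ => ?_
        rw [← sq_abs]; gcongr; exact h j i
    _ = _ := by simp; ring

lemma frobNorm_zero {n : ℕ} (s : Fin n → Fin n → ℝ) (h : frobNorm s = 0) (j i : Fin n) : s j i = 0 := by
  rw [frobNorm, Real.sqrt_eq_zero (by positivity),
    Finset.sum_eq_zero_iff_of_nonneg (fun _ _ => by positivity)] at h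
  have h1 := h j (Finset.mem_univ j)
  rw [Finset.sum_eq_zero_iff_of_nonneg (fun _ _ => by positivity)] at h1
  simpa using h1 i (Finset.mem_univ i)

lemma frobNorm_div {n : ℕ} (s : Fin n → Fin n → ℝ) (h : frobNorm s ≠ 0) :
    frobNorm (fun j i => s j i / frobNorm s) = 1 := by
  have hp : 0 < frobNorm s := lt_of_le_of_ne (Real.sqrt_nonneg _) h.symm
  have h2 : ∑ j, ∑ i, s j i ^ 2 = frobNorm s ^ 2 := (Real.sq_sqrt (by positivity)).symm
  conv_lhs => rw [frobNorm]
  simp only [div_pow, ← Finset.sum_div]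
  rw [h2, div_self (by positivity), Real.sqrt_one]

lemma frobNorm_meas {n : ℕ} : Measurable (frobNorm : (Fin n → Fin n → ℝ) → ℝ) := by
  unfold frobNorm
  fun_prop

/-- **Lemma (Statement 10).** There is a constant `C = C(n)` such that: if
`f : Ω₁ → Ω₂` is a homeomorphism whose inverse `g` is Lipschitz (with constant `L`),
then `f ∈ BV_loc(Ω₁, Ω₂)` and `|Df|(f⁻¹(A)) ≤ C·L^{n-1}·Lⁿ(A)` for all Borel
`A ⊆ Ω₂`. -/
theorem bv_of_lipschitz_inverse (n : ℕ) :
    ∃ C : ℝ, 0 < C ∧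
      ∀ (Ω₁ Ω₂ : Set (En n)), IsOpen Ω₁ → IsOpen Ω₂ →
        ∀ f g : En n → En n, IsHomeoOn f g Ω₁ Ω₂ →
          ∀ L : ℝ≥0, LipschitzOnWith L g Ω₂ →
            ∃ νf : Measure (En n), MemBVloc Ω₁ f νf ∧
              ∀ A : Set (En n), A ⊆ Ω₂ → MeasurableSet A →
                νf (f ⁻¹' A ∩ Ω₁) ≤ ENNReal.ofReal (C * (L : ℝ) ^ (n - 1)) * volume A := by
  refine ⟨(n + 1) * (2 * (n + 1)) ^ (n - 1), by positivity, ?_⟩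
  intro Ω₁ Ω₂ hΩ₁ hΩ₂ f g h L hL
  set M : ℝ := (2 * n * L) ^ (n - 1) with hMdef
  have hM0 : 0 ≤ M := by positivity
  have hd := fun j i => dens hΩ₁ hΩ₂ h hL i j
  choose σ0 hσm hσb hσi using hd
  obtain ⟨hfc, hgc, hfm, hgm, hgf, hfg⟩ := h
  let σ : En n → Fin n → Fin n → ℝ := fun y j i => σ0 j i y
  have hσ : Measurable σ := measurable_pi_lambda _ fun j => measurable_pi_lambda _ fun i => hσm j i
  let ρ : En n → ℝ := fun y => frobNorm (σ y)
  have hρ : Measurable ρ := frobNorm_meas.comp hσ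
  have hρ0 : ∀ y, 0 ≤ ρ y := fun y => Real.sqrt_nonneg _
  have hρb : ∀ y, ρ y ≤ n * M := fun y => frobNorm_le _ _ hM0 fun j i => hσb j i y
  let m : Measure (En n) := (volume.restrict Ω₂).withDensity fun y => ENNReal.ofReal (ρ y)
  have hmac : m ≪ volume.restrict Ω₂ := withDensity_absolutelyContinuous _ _
  have hmem : ∀ᵐ y ∂m, y ∈ Ω₂ := hmac.ae_le (ae_restrict_mem hΩ₂.measurableSet)
  have hne : ∀ᵐ y ∂m, ρ y ≠ 0 := by
    rw [ae_withDensity_iff (by fun_prop)]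
    refine Eventually.of_forall fun y hy h0 => hy (by simp [h0])
  classical
  let G : En n → En n := Ω₂.piecewise g fun _ => 0
  let F : En n → En n := Ω₁.piecewise f fun _ => 0
  have hG : Measurable G := hgc.measurable_piecewise continuousOn_const hΩ₂.measurableSet
  have hF : Measurable F := hfc.measurable_piecewise continuousOn_const hΩ₁.measurableSet
  have hGe : ∀ y ∈ Ω₂, G y = g y := fun y hy => piecewise_eq_of_mem _ _ _ hy
  have hFe : ∀ x ∈ Ω₁, F x = f x := fun x hx => piecewise_eq_of_mem _ _ _ hx
  have hFG : ∀ y ∈ Ω₂, F (G y) = y := fun y hy => by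
    rw [hGe y hy, hFe _ (hgm hy), hfg y hy]
  let τ : En n → Fin n → Fin n → ℝ := fun x j i => σ (F x) j i / ρ (F x)
  have hτ : Measurable τ := by
    refine measurable_pi_lambda _ fun j => measurable_pi_lambda _ fun i => ?_
    exact ((hσm j i).comp hF).div (hρ.comp hF)
  have hmain : ∀ A : Set (En n), A ⊆ Ω₂ → MeasurableSet A →
      (m.map G) (f ⁻¹' A ∩ Ω₁) ≤
        ENNReal.ofReal ((n + 1) * (2 * (n + 1)) ^ (n - 1) * (L : ℝ) ^ (n - 1)) * volume A := by
    intro A hA hAm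
    have e1 : f ⁻¹' A ∩ Ω₁ = F ⁻¹' A ∩ Ω₁ := by
      ext x
      refine and_congr_left fun hx => ?_
      rw [mem_preimage, mem_preimage, hFe x hx]
    rw [e1, Measure.map_apply hG ((hF hAm).inter hΩ₁.measurableSet)]
    have e2 : m (G ⁻¹' (F ⁻¹' A ∩ Ω₁)) ≤ m A := by
      refine measure_mono_ae ?_
      filter_upwards [hmem] with y hy hyA
      have := hyA.1
      rw [mem_preimage, hFG y hy] at this
      exact this
    refine e2.trans ?_
    rw [withDensity_apply _ hAm]
    calc _ ≤ ∫⁻ y in A, ENNReal.ofReal (n * M) ∂(volume.restrict Ω₂) := by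
          exact lintegral_mono fun y => ENNReal.ofReal_le_ofReal (hρb y)
      _ = ENNReal.ofReal (n * M) * (volume.restrict Ω₂) A := setLIntegral_const _ _
      _ ≤ _ := by
          refine mul_le_mul' (ENNReal.ofReal_le_ofReal ?_) (Measure.restrict_apply_le _ _)
          rw [hMdef, mul_assoc ((n : ℝ) + 1), ← mul_pow]
          gcongr <;> linarith
  refine ⟨m.map G, ⟨hfc.locallyIntegrableOn hΩ₁.measurableSet, ?_, τ, hτ, ?_, ?_, ?_⟩, hmain⟩
  · intro C hC hC1
    have hfC : IsCompact (f '' C) := hC.image_of_continuousOn (hfc.mono hC1)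
    have hsub : C ⊆ f ⁻¹' (f '' C) ∩ Ω₁ := fun x hx => ⟨⟨x, hx, rfl⟩, hC1 hx⟩
    refine ((measure_mono hsub).trans (hmain (f '' C) ?_ hfC.measurableSet)).trans_lt ?_
    · rintro _ ⟨x, hx, rfl⟩; exact hfm (hC1 hx)
    · exact ENNReal.mul_lt_top ENNReal.ofReal_lt_top hfC.measure_lt_top
  · have hms : MeasurableSet {x | frobNorm (τ x) = 1} :=
      measurableSet_eq_fun (frobNorm_meas.comp hτ) measurable_const
    rw [ae_map_iff hG.aemeasurable hms]
    filter_upwards [hmem, hne] with y hy hy0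
    have : τ (G y) = fun j i => σ y j i / frobNorm (σ y) := by
      simp only [τ, hFG y hy]; rfl
    rw [this]
    exact frobNorm_div _ hy0
  · rw [Measure.map_apply hG hΩ₁.measurableSet.compl]
    refine measure_mono_null (t := Ω₂ᶜ) ?_ hmem
    intro y hy hy2
    exact hy (by rw [hGe y hy2]; exact hgm hy2)
  · intro φ hφ j i
    rw [hσi j i φ hφ]
    congr 1
    have hm1 : Measurable fun x => φ x * τ x j i := by
      have h1 := hφ.1.continuous.measurable
      have h2 : Measurable fun x => τ x j i := ((hσm j i).comp hF).div (hρ.comp hF)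
      exact h1.mul h2
    rw [integral_map hG.aemeasurable hm1.aestronglyMeasurable,
      integral_withDensity_eq_integral_toReal_smul (by fun_prop) (by simp)]
    refine setIntegral_congr_fun hΩ₂.measurableSet fun y hy => ?_
    have hFGg : F (g y) = y := by rw [← hGe y hy, hFG y hy]
    simp only [τ, hFGg, hGe y hy, ENNReal.toReal_ofReal (hρ0 y), smul_eq_mul]
    by_cases h0 : ρ y = 0
    · have : σ0 j i y = 0 := frobNorm_zero _ h0 j i
      simp [h0, this]
    · simp only [σ]
      field_simp
end
end

section
/- Let Ω₁, Ω₂ ⊆ ℝ² be open and let f : Ω₁ → Ω₂ be a homeomorphism. Then f⁻¹ ∈ W^{1,∞}(Ω₂, Ω₁) if and only if f ∈ BV_loc(Ω₁, Ω₂) and there exists a constant K > 0 such that |Df|(f⁻¹(A)) ≤ K·L²(A) for all Borel sets A ⊆ Ω₂. -/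
open MeasureTheory Metric Set Filter
open scoped ENNReal Topology NNReal

noncomputable section

lemma vol_image_lip (S : Set (En 2 × ℝ)) (Φ : En 2 × ℝ → En 2 × ℝ) (C : ℝ≥0)
    (h : LipschitzOnWith C Φ S) : volume (Φ '' S) ≤ (C : ℝ≥0∞) ^ 3 * volume S := by
  have hfr : Module.finrank ℝ (En 2 × ℝ) = 3 := by simp
  have hH : Measure.IsAddHaarMeasure (μH[(Module.finrank ℝ (En 2 × ℝ) : ℝ)] : Measure (En 2 × ℝ)) :=
    inferInstance
  have hV : Measure.IsAddHaarMeasure (volume : Measure (En 2 × ℝ)) :=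
    inferInstanceAs (Measure.IsAddHaarMeasure
      ((volume : Measure (En 2)).prod (volume : Measure ℝ)))
  have e := Measure.isAddLeftInvariant_eq_smul (volume : Measure (En 2 × ℝ))
    (μH[(Module.finrank ℝ (En 2 × ℝ) : ℝ)])
  have h1 := h.hausdorffMeasure_image_le (d := (Module.finrank ℝ (En 2 × ℝ) : ℝ)) (by positivity)
  rw [e]
  simp only [Measure.smul_apply]
  rw [mul_smul_comm]
  gcongr
  refine h1.trans (le_of_eq ?_)
  rw [hfr, ENNReal.rpow_natCast]

lemma vol_image_loclip (Ω : Set (En 2)) (Φ : En 2 × ℝ → En 2 × ℝ) (C : ℝ≥0)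
    (h : ∀ y ∈ Ω, ∃ ε : ℝ, 0 < ε ∧ LipschitzOnWith C Φ (ball y ε ×ˢ univ))
    (S : Set (En 2 × ℝ)) (hS : S ⊆ Ω ×ˢ univ) (hSm : MeasurableSet S) :
    volume (Φ '' S) ≤ (C : ℝ≥0∞) ^ 3 * volume S := by
  choose! ε hε hL using h
  obtain ⟨T, hTs, hTc, hT⟩ := TopologicalSpace.countable_cover_nhdsWithin (s := Ω)
    (f := fun y => ball y (ε y))
    (fun x hx => mem_nhdsWithin_of_mem_nhds (ball_mem_nhds x (hε x hx)))
  rcases T.eq_empty_or_nonempty with rfl | hne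
  · have : S = ∅ := by
      apply eq_empty_of_subset_empty
      intro p hp
      have := hT (hS hp).1
      simp at this
    simp [this]
  obtain ⟨u, hu⟩ := hTc.exists_eq_range hne
  subst hu
  let B : ℕ → Set (En 2 × ℝ) := fun n => S ∩ (ball (u n) (ε (u n)) ×ˢ univ)
  have hBm : ∀ n, MeasurableSet (B n) := fun n =>
    hSm.inter (measurableSet_ball.prod MeasurableSet.univ)
  have hcov : S = ⋃ n, disjointed B n := by
    rw [iUnion_disjointed]
    ext p
    simp only [B, mem_iUnion, mem_inter_iff, exists_and_left]
    constructor
    · intro hp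
      refine ⟨hp, ?_⟩
      have := hT (hS hp).1
      simp only [mem_range, iUnion_exists, iUnion_iUnion_eq', mem_iUnion] at this
      obtain ⟨n, hn⟩ := this
      exact ⟨n, hn, mem_univ _⟩
    · exact fun h => h.1
  have hvol : volume S = ∑' n, volume (disjointed B n) := by
    conv_lhs => rw [hcov]
    exact measure_iUnion (disjoint_disjointed B) (fun n => MeasurableSet.disjointed hBm n)
  rw [hvol]
  conv_lhs => rw [hcov]
  rw [image_iUnion, ← ENNReal.tsum_mul_left]
  refine (measure_iUnion_le _).trans (ENNReal.tsum_le_tsum fun n => ?_)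
  apply vol_image_lip
  refine (hL (u n) (hTs ⟨n, rfl⟩)).mono ?_
  exact (disjointed_subset B n).trans inter_subset_right

lemma indicator_measurable {Ω : Set (En 2)} (hΩ : IsOpen Ω) {f : En 2 → En 2}
    (hf : ContinuousOn f Ω) : Measurable (Ω.indicator f) := by
  classical
  have := ContinuousOn.measurable_piecewise (s := Ω) (f := f) (g := fun _ => (0 : En 2)) hf
    continuousOn_const hΩ.measurableSet
  convert this using 1
  ext x
  simp [indicator, piecewise]

lemma diffquot_bound (Ω₁ Ω₂ : Set (En 2)) (hΩ₁ : IsOpen Ω₁) (hΩ₂ : IsOpen Ω₂)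
    (f g : En 2 → En 2) (hf : IsHomeoOn f g Ω₁ Ω₂) (L : ℝ≥0)
    (hL : ∀ y ∈ Ω₂, ∃ ε : ℝ, 0 < ε ∧ Metric.ball y ε ⊆ Ω₂ ∧
        LipschitzOnWith L g (Metric.ball y ε))
    (φ : En 2 → ℝ) (hφ : Continuous φ) (e : En 2) (he : ‖e‖ = 1) (j : Fin 2) (h : ℝ) (hh : 0 < h)
    (hsupp : ∀ x, φ x ≠ 0 → ∀ τ ∈ Icc 0 h, x + τ • e ∈ Ω₁) :
    ∫⁻ x, ‖φ x‖ₑ * ‖Ω₁.indicator f (x + h • e) j - Ω₁.indicator f x j‖ₑ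
      ≤ ((L + 1 : ℝ≥0) : ℝ≥0∞) ^ 3 *
        ∫⁻ τ in Icc 0 h, ∫⁻ y in Ω₂, ‖φ (Ω₂.indicator g y - τ • e)‖ₑ := by
  obtain ⟨hfc, hgc, hfm, hgm, hgf, hfg⟩ := hf
  set F := Ω₁.indicator f with hF
  set G := Ω₂.indicator g with hG
  have hFm : Measurable F := indicator_measurable hΩ₁ hfc
  have hGm : Measurable G := indicator_measurable hΩ₂ hgc
  let Φ : En 2 × ℝ → En 2 × ℝ := fun p => (G p.1 - p.2 • e, p.1 j)
  have hΦm : Measurable Φ := by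
    refine Measurable.prodMk ?_ ?_
    · exact (hGm.comp measurable_fst).sub (measurable_snd.smul_const e)
    · fun_prop
  have hFj : Measurable (fun x => F x j) := by fun_prop
  have hFj' : Measurable (fun x => F (x + h • e) j) := by fun_prop
  let E : Set (En 2 × ℝ) := {p | φ p.1 ≠ 0 ∧ p.2 ∈ uIoc (F p.1 j) (F (p.1 + h • e) j)}
  have hEm : MeasurableSet E := by
    refine MeasurableSet.inter ?_ ?_
    · exact (measurableSet_singleton (0:ℝ)).compl.preimage (hφ.measurable.comp measurable_fst)
    · have h1 : MeasurableSet {p : En 2 × ℝ | min (F p.1 j) (F (p.1 + h • e) j) < p.2} :=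
        measurableSet_lt ((hFj.comp measurable_fst).min (hFj'.comp measurable_fst)) measurable_snd
      have h2 : MeasurableSet {p : En 2 × ℝ | p.2 ≤ max (F p.1 j) (F (p.1 + h • e) j)} :=
        measurableSet_le measurable_snd ((hFj.comp measurable_fst).max (hFj'.comp measurable_fst))
      exact h1.inter h2
  let S : Set (En 2 × ℝ) := Ω₂ ×ˢ Icc 0 h
  have hSm : MeasurableSet S := hΩ₂.measurableSet.prod measurableSet_Icc
  have hES : E ⊆ Φ '' S := by
    rintro ⟨x, t⟩ ⟨hx, ht⟩
    have hx1 := hsupp x hx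
    have hcont : ContinuousOn (fun τ : ℝ => F (x + τ • e) j) (uIcc 0 h) := by
      rw [uIcc_of_le hh.le]
      have h1 : ContinuousOn (fun τ : ℝ => f (x + τ • e)) (Icc 0 h) :=
        hfc.comp (by fun_prop) hx1
      have h2 : ContinuousOn (fun τ : ℝ => F (x + τ • e)) (Icc 0 h) := by
        refine h1.congr fun τ hτ => ?_
        simp [hF, hx1 τ hτ]
      exact (EuclideanSpace.proj (𝕜 := ℝ) j).continuous.comp_continuousOn h2
    have hiv := intermediate_value_uIcc hcont
    simp only [zero_smul, add_zero] at hiv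
    obtain ⟨τ, hτ, hτt⟩ := hiv (uIoc_subset_uIcc ht)
    rw [uIcc_of_le hh.le] at hτ
    have hm := hx1 τ hτ
    refine ⟨(f (x + τ • e), τ), ⟨hfm hm, hτ⟩, ?_⟩
    simp only [Φ, Prod.mk.injEq]
    constructor
    · rw [hG, indicator_of_mem (hfm hm), hgf _ hm]; abel
    · have : F (x + τ • e) j = t := hτt
      rw [← this, hF]; simp [hm]
  have hΦL : ∀ y ∈ Ω₂, ∃ ε : ℝ, 0 < ε ∧ LipschitzOnWith (L + 1) Φ (ball y ε ×ˢ univ) := by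
    intro y hy
    obtain ⟨ε, hε, hsub, hl⟩ := hL y hy
    refine ⟨ε, hε, ?_⟩
    apply LipschitzOnWith.of_dist_le_mul
    rintro ⟨a, s⟩ ⟨ha, -⟩ ⟨b, t⟩ ⟨hb, -⟩
    have ha' : a ∈ ball y ε := ha
    have hb' : b ∈ ball y ε := hb
    have h1 : dist (g a) (g b) ≤ L * dist a b := hl.dist_le_mul a ha' b hb'
    have h2 : dist a b ≤ dist (a, s) (b, t) := le_max_left _ _
    have h3 : dist s t ≤ dist (a, s) (b, t) := le_max_right _ _
    have h4 : dist (s • e) (t • e) = dist s t := by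
      rw [dist_eq_norm, ← sub_smul, norm_smul, he, mul_one, ← dist_eq_norm]
    have h5 : dist (a j) (b j) ≤ dist a b := by
      rw [dist_eq_norm, dist_eq_norm]
      exact PiLp.norm_apply_le (a - b) j
    have hL0 : (0:ℝ) ≤ L := L.2
    have hd0 : 0 ≤ dist (a, s) (b, t) := dist_nonneg
    simp only [Φ, hG]
    rw [indicator_of_mem (hsub ha'), indicator_of_mem (hsub hb'), Prod.dist_eq]
    push_cast
    refine max_le ?_ ?_
    · refine (dist_sub_sub_le _ _ _ _).trans ?_
      rw [h4]
      nlinarith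
    · nlinarith
  have hmeas : volume.restrict E ≤
      (((L + 1 : ℝ≥0) : ℝ≥0∞) ^ 3) • (Measure.map Φ (volume.restrict S)) := by
    refine Measure.le_iff.2 fun B hB => ?_
    rw [Measure.restrict_apply hB, Measure.smul_apply, Measure.map_apply hΦm hB,
      Measure.restrict_apply (hΦm hB), smul_eq_mul]
    refine le_trans ?_ (vol_image_loclip Ω₂ Φ (L + 1) hΦL (Φ ⁻¹' B ∩ S) ?_ ?_)
    · apply measure_mono
      rintro p ⟨hpB, hpE⟩
      obtain ⟨q, hq, rfl⟩ := hES hpE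
      exact ⟨q, ⟨hpB, hq⟩, rfl⟩
    · rintro p ⟨-, hp⟩
      exact ⟨hp.1, mem_univ _⟩
    · exact (hΦm hB).inter hSm
  have hφ1 : Measurable (fun p : En 2 × ℝ => ‖φ p.1‖ₑ) :=
    (hφ.measurable.comp measurable_fst).enorm
  calc ∫⁻ x, ‖φ x‖ₑ * ‖F (x + h • e) j - F x j‖ₑ
      = ∫⁻ x, ∫⁻ t, E.indicator (fun p => ‖φ p.1‖ₑ) (x, t) := by
        refine lintegral_congr fun x => ?_
        by_cases hx : φ x = 0
        · have : ∀ t, E.indicator (fun p : En 2 × ℝ => ‖φ p.1‖ₑ) (x, t) = 0 := by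
            intro t
            apply indicator_of_notMem
            simp [E, hx]
          simp [this, hx]
        · have : ∀ t, E.indicator (fun p : En 2 × ℝ => ‖φ p.1‖ₑ) (x, t)
              = (uIoc (F x j) (F (x + h • e) j)).indicator (fun _ => ‖φ x‖ₑ) t := by
            intro t
            by_cases ht : t ∈ uIoc (F x j) (F (x + h • e) j)
            · rw [indicator_of_mem ht, indicator_of_mem]
              exact ⟨hx, ht⟩
            · rw [indicator_of_notMem ht, indicator_of_notMem]
              exact fun hc => ht hc.2
          simp_rw [this]
          rw [lintegral_indicator measurableSet_uIoc, setLIntegral_const, Real.volume_uIoc,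
            Real.enorm_eq_ofReal_abs (F _ j - _)]
    _ = ∫⁻ p in E, ‖φ p.1‖ₑ := by
        rw [← lintegral_indicator hEm, Measure.volume_eq_prod, lintegral_prod _
          (hφ1.indicator hEm).aemeasurable]
    _ ≤ ∫⁻ p, ‖φ p.1‖ₑ ∂((((L + 1 : ℝ≥0) : ℝ≥0∞) ^ 3) • (Measure.map Φ (volume.restrict S))) :=
        lintegral_mono' hmeas le_rfl
    _ = ((L + 1 : ℝ≥0) : ℝ≥0∞) ^ 3 * ∫⁻ p in S, ‖φ (G p.1 - p.2 • e)‖ₑ := by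
        rw [lintegral_smul_measure, lintegral_map hφ1 hΦm, smul_eq_mul]
    _ = _ := by
        congr 1
        rw [Measure.volume_eq_prod, ← Measure.prod_restrict, lintegral_prod_symm]
        have := hφ1.comp hΦm
        exact this.aemeasurable

lemma deriv_bound (Ω₁ Ω₂ : Set (En 2)) (hΩ₁ : IsOpen Ω₁) (hΩ₂ : IsOpen Ω₂)
    (f g : En 2 → En 2) (hf : IsHomeoOn f g Ω₁ Ω₂) (L : ℝ≥0)
    (hL : ∀ y ∈ Ω₂, ∃ ε : ℝ, 0 < ε ∧ Metric.ball y ε ⊆ Ω₂ ∧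
        LipschitzOnWith L g (Metric.ball y ε))
    (φ : En 2 → ℝ) (hφ : SmoothTest Ω₁ φ) (e : En 2) (he : ‖e‖ = 1) (j : Fin 2) :
    ‖∫ x in Ω₁, f x j * fderiv ℝ φ x e‖ₑ
      ≤ ((L + 1 : ℝ≥0) : ℝ≥0∞) ^ 3 * ∫⁻ y in Ω₂, ‖φ (g y)‖ₑ := by
  obtain ⟨hφs, hφc, hφt⟩ := hφ
  have hφcont : Continuous φ := hφs.continuous
  have hφd : Differentiable ℝ φ := hφs.differentiable (by simp)
  obtain ⟨C, hC⟩ := hφs.lipschitzWith_of_hasCompactSupport hφc (by simp)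
  obtain ⟨hfc, hgc, hfm, hgm, hgf, hfg⟩ := id hf
  have hTc : IsCompact (tsupport φ) := hφc
  obtain ⟨δ, hδ, hTδ⟩ := hTc.exists_cthickening_subset_open hΩ₁ hφt
  set T := cthickening δ (tsupport φ) with hT
  have hTcomp : IsCompact T := hTc.cthickening
  have hshift : ∀ x τ, τ ∈ Icc 0 δ → φ (x - τ • e) ≠ 0 → x ∈ T := by
    intro x τ hτ hx
    refine mem_cthickening_of_dist_le x (x - τ • e) δ _ (subset_tsupport φ hx) ?_
    simp [norm_smul, he, abs_of_nonneg hτ.1, hτ.2]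
  have hzero : ∀ x, φ x ≠ 0 → x ∈ T := by
    intro x hx
    apply hshift x 0 ⟨le_rfl, hδ.le⟩
    simpa using hx
  have hsupp : ∀ h ∈ Ioc 0 δ, ∀ x, φ x ≠ 0 → ∀ τ ∈ Icc 0 h, x + τ • e ∈ Ω₁ := by
    intro h hh x hx τ hτ
    apply hTδ
    apply hshift _ τ ⟨hτ.1, hτ.2.trans hh.2⟩
    simpa using hx
  set F := Ω₁.indicator f with hF
  set F' : En 2 → ℝ := T.indicator (fun x => f x j) with hF'
  have hF'int : Integrable F' := by
    rw [hF', integrable_indicator_iff hTcomp.measurableSet]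
    apply ContinuousOn.integrableOn_compact hTcomp
    exact (EuclideanSpace.proj (𝕜 := ℝ) j).continuous.comp_continuousOn (hfc.mono hTδ)
  have hFF' : ∀ x, ∀ c : ℝ, (c ≠ 0 → x ∈ T) → F x j * c = F' x * c := by
    intro x c hc
    by_cases h0 : c = 0
    · simp [h0]
    · have := hc h0
      simp [hF, hF', this, hTδ this]
  obtain ⟨B, hB⟩ := hφc.exists_bound_of_continuous hφcont
  have hmulint : ∀ τ : ℝ, Integrable (fun x => F' x * φ (x - τ • e)) := by
    intro τ
    refine hF'int.mul_bdd (c := B) ?_ (Eventually.of_forall fun x => hB _)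
    exact (hφcont.comp (by fun_prop)).aestronglyMeasurable
  have hFint : ∀ τ ∈ Icc 0 δ, Integrable (fun x => F x j * φ (x - τ • e)) := by
    intro τ hτ
    refine (hmulint τ).congr (Eventually.of_forall fun x => ?_)
    exact (hFF' x _ (hshift x τ hτ)).symm
  have hI : ∀ h ∈ Ioc 0 δ, ∫ x, F' x * (φ (x - h • e) - φ x)
      = ∫ x, φ x * (F (x + h • e) j - F x j) := by
    intro h hh
    have h1 := hFint h ⟨hh.1.le, hh.2⟩
    have h0 := hFint 0 ⟨le_rfl, hδ.le⟩
    simp only [zero_smul, sub_zero] at h0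
    have e1 : ∫ x, F' x * (φ (x - h • e) - φ x)
        = (∫ x, F x j * φ (x - h • e)) - ∫ x, F x j * φ x := by
      rw [← integral_sub h1 h0]
      refine integral_congr_ae (Eventually.of_forall fun x => ?_)
      simp only
      rw [mul_sub, hFF' x _ (hshift x h ⟨hh.1.le, hh.2⟩), hFF' x _ (hzero x)]
    have h2 : Integrable (fun x => F (x + h • e) j * φ x) := by
      have := h1.comp_add_right (h • e)
      simpa using this
    have e2 : ∫ x, F x j * φ (x - h • e) = ∫ x, F (x + h • e) j * φ x := by
      rw [← integral_add_right_eq_self _ (h • e)]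
      simp
    rw [e1, e2, ← integral_sub h2 h0]
    refine integral_congr_ae (Eventually.of_forall fun x => ?_)
    simp only
    ring
  have hfT : IsCompact (f '' T) := hTcomp.image_of_continuousOn (hfc.mono hTδ)
  set A := ∫⁻ y in Ω₂, ‖φ (g y)‖ₑ with hA
  set V := volume (f '' T) with hV
  have hVfin : V ≠ ∞ := hfT.measure_lt_top.ne
  have hbd : ∀ h ∈ Ioc 0 δ, ‖∫ x, F' x * (h⁻¹ * (φ (x - h • e) - φ x))‖ₑ
      ≤ ((L + 1 : ℝ≥0) : ℝ≥0∞) ^ 3 * (A + ENNReal.ofReal (C * h) * V) := by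
    intro h hh
    have e0 : ∫ x, F' x * (h⁻¹ * (φ (x - h • e) - φ x))
        = h⁻¹ * ∫ x, φ x * (F (x + h • e) j - F x j) := by
      rw [← hI h hh, ← integral_const_mul]
      refine integral_congr_ae (Eventually.of_forall fun x => ?_)
      simp only
      ring
    have key := diffquot_bound Ω₁ Ω₂ hΩ₁ hΩ₂ f g hf L hL φ hφcont e he j h hh.1 (hsupp h hh)
    have inner : ∀ τ ∈ Icc 0 h, ∫⁻ y in Ω₂, ‖φ (Ω₂.indicator g y - τ • e)‖ₑ
        ≤ A + ENNReal.ofReal (C * h) * V := by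
      intro τ hτ
      calc ∫⁻ y in Ω₂, ‖φ (Ω₂.indicator g y - τ • e)‖ₑ
          ≤ ∫⁻ y in Ω₂, (‖φ (g y)‖ₑ +
              (f '' T).indicator (fun _ => ENNReal.ofReal (C * h)) y) := by
            refine setLIntegral_mono' hΩ₂.measurableSet fun y hy => ?_
            rw [indicator_of_mem hy]
            by_cases h0 : φ (g y - τ • e) = 0
            · simp [h0]
            · have hyT : y ∈ f '' T :=
                ⟨g y, hshift (g y) τ ⟨hτ.1, hτ.2.trans hh.2⟩ h0, hfg y hy⟩
              rw [indicator_of_mem hyT]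
              have h1 : ‖φ (g y - τ • e)‖ ≤ ‖φ (g y)‖ + C * h := by
                have h2 := hC.dist_le_mul (g y - τ • e) (g y)
                rw [dist_eq_norm, dist_eq_norm] at h2
                have h3 : ‖g y - τ • e - g y‖ = τ := by
                  simp [norm_smul, he, abs_of_nonneg hτ.1]
                rw [h3] at h2
                have h4 := norm_sub_norm_le (φ (g y - τ • e)) (φ (g y))
                have h5 : (C:ℝ) * τ ≤ C * h := mul_le_mul_of_nonneg_left hτ.2 C.2
                linarith
              rw [← ofReal_norm, ← ofReal_norm]
              exact (ENNReal.ofReal_le_ofReal h1).trans ENNReal.ofReal_add_le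
        _ ≤ A + ENNReal.ofReal (C * h) * V := by
            rw [lintegral_add_right _ (measurable_const.indicator hfT.measurableSet)]
            gcongr
            refine (setLIntegral_le_lintegral _ _).trans ?_
            rw [lintegral_indicator hfT.measurableSet, setLIntegral_const]
    have outer : ∫⁻ τ in Icc 0 h, ∫⁻ y in Ω₂, ‖φ (Ω₂.indicator g y - τ • e)‖ₑ
        ≤ (A + ENNReal.ofReal (C * h) * V) * ENNReal.ofReal h := by
      refine (setLIntegral_mono' measurableSet_Icc inner).trans ?_
      rw [setLIntegral_const, Real.volume_Icc, sub_zero]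
    rw [e0, enorm_mul]
    calc ‖h⁻¹‖ₑ * ‖∫ x, φ x * (F (x + h • e) j - F x j)‖ₑ
        ≤ ‖h⁻¹‖ₑ * (((L + 1 : ℝ≥0) : ℝ≥0∞) ^ 3 *
          ((A + ENNReal.ofReal (C * h) * V) * ENNReal.ofReal h)) := by
          gcongr
          refine (enorm_integral_le_lintegral_enorm _).trans ?_
          simp_rw [enorm_mul]
          refine key.trans ?_
          gcongr
      _ = ((L + 1 : ℝ≥0) : ℝ≥0∞) ^ 3 * (A + ENNReal.ofReal (C * h) * V)
          * (‖h⁻¹‖ₑ * ENNReal.ofReal h) := by ring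
      _ = _ := by
          have : ‖h⁻¹‖ₑ * ENNReal.ofReal h = 1 := by
            rw [← ofReal_norm, ← ENNReal.ofReal_mul (norm_nonneg _), norm_inv, Real.norm_of_nonneg hh.1.le,
              inv_mul_cancel₀ hh.1.ne', ENNReal.ofReal_one]
          rw [this, mul_one]
  have hlim : Tendsto (fun h : ℝ => ∫ x, F' x * (h⁻¹ * (φ (x - h • e) - φ x))) (𝓝[>] 0)
      (𝓝 (∫ x, F' x * (- fderiv ℝ φ x e))) := by
    refine tendsto_integral_filter_of_dominated_convergence (fun x => ‖F' x‖ * C) ?_ ?_ ?_ ?_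
    · refine Eventually.of_forall fun h => ?_
      refine hF'int.aestronglyMeasurable.mul ?_
      exact (Continuous.aestronglyMeasurable (by fun_prop))
    · filter_upwards [self_mem_nhdsWithin] with h hh
      have hh' : (0:ℝ) < h := hh
      refine Eventually.of_forall fun x => ?_
      rw [norm_mul]
      refine mul_le_mul_of_nonneg_left ?_ (norm_nonneg _)
      have h2 := hC.dist_le_mul (x - h • e) x
      rw [dist_eq_norm, dist_eq_norm] at h2
      have h3 : ‖x - h • e - x‖ = h := by
        simp [norm_smul, he, abs_of_nonneg hh'.le]
      rw [h3] at h2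
      rw [norm_mul, norm_inv, Real.norm_of_nonneg hh'.le, inv_mul_le_iff₀ hh']
      linarith
    · exact hF'int.norm.mul_const _
    · refine Eventually.of_forall fun x => ?_
      refine Tendsto.const_mul _ ?_
      have h1 : HasFDerivAt φ (fderiv ℝ φ x) x := (hφd x).hasFDerivAt
      have h2 := h1.hasLineDerivAt (-e)
      have h3 := h2.tendsto_slope_zero_right
      rw [map_neg] at h3
      refine h3.congr fun t => ?_
      simp [sub_eq_add_neg]
  have hfin : ∫ x, F' x * (- fderiv ℝ φ x e) = - ∫ x in Ω₁, f x j * fderiv ℝ φ x e := by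
    rw [← integral_indicator hΩ₁.measurableSet, ← integral_neg]
    refine integral_congr_ae (Eventually.of_forall fun x => ?_)
    simp only
    by_cases h0 : fderiv ℝ φ x e = 0
    · by_cases hx : x ∈ Ω₁ <;> simp [h0, hx]
    · have hx : x ∈ tsupport φ := by
        apply tsupport_fderiv_subset ℝ (f := φ)
        apply subset_tsupport
        intro h1
        apply h0
        simp [h1]
      have hxT : x ∈ T := self_subset_cthickening _ hx
      simp [hF', hxT, hTδ hxT]
  rw [hfin] at hlim
  have h1 := hlim.enorm
  rw [enorm_neg] at h1
  have h2 : Tendsto (fun h : ℝ => ((L + 1 : ℝ≥0) : ℝ≥0∞) ^ 3 * (A + ENNReal.ofReal (C * h) * V))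
      (𝓝[>] 0) (𝓝 (((L + 1 : ℝ≥0) : ℝ≥0∞) ^ 3 * (A + ENNReal.ofReal (C * 0) * V))) := by
    refine ENNReal.Tendsto.const_mul ?_ (Or.inr (by finiteness))
    refine Tendsto.const_add _ ?_
    refine ENNReal.Tendsto.mul_const ?_ (Or.inr hVfin)
    refine ENNReal.tendsto_ofReal ?_
    exact ((continuous_const.mul continuous_id).tendsto 0).mono_left nhdsWithin_le_nhds
  simp only [mul_zero, ENNReal.ofReal_zero, zero_mul, add_zero] at h2
  refine le_of_tendsto_of_tendsto h1 h2 ?_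
  filter_upwards [Ioc_mem_nhdsGT hδ] with h hh
  exact hbd h hh

lemma dual_rep {α : Type*} [MeasurableSpace α] (lam : Measure α) [IsFiniteMeasure lam]
    {V : Type*} [AddCommGroup V] [Module ℝ V] (T : V →ₗ[ℝ] (α → ℝ))
    (hT : ∀ v, MemLp (T v) 2 lam) (Λ : V →ₗ[ℝ] ℝ) (M : ℝ≥0)
    (hΛ : ∀ v, ‖Λ v‖ₑ ≤ M * ∫⁻ x, ‖T v x‖ₑ ∂lam) :
    ∃ s : α → ℝ, Measurable s ∧ (∀ x, |s x| ≤ M) ∧ ∀ v, Λ v = ∫ x, T v x * s x ∂lam := by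
  have hT1 : ∀ v, MemLp (T v) 1 lam := fun v => (hT v).mono_exponent (by norm_num)
  let T1 : V →ₗ[ℝ] Lp ℝ 1 lam :=
    { toFun := fun v => (hT1 v).toLp
      map_add' := fun v w => by
        rw [← MemLp.toLp_add]
        congr 1
        exact map_add T v w
      map_smul' := fun c v => by
        rw [RingHom.id_apply, ← MemLp.toLp_const_smul]
        congr 1
        exact map_smul T c v }
  have hn : ∀ v, ‖Λ v‖ ≤ M * ‖T1 v‖ := by
    intro v
    have h1 := hΛ v
    have h2 : ‖T1 v‖ₑ = ∫⁻ x, ‖T v x‖ₑ ∂lam := by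
      rw [← eLpNorm_one_eq_lintegral_enorm]
      exact Lp.enorm_toLp (hT1 v)
    rw [← h2] at h1
    have h3 : ‖Λ v‖₊ ≤ M * ‖T1 v‖₊ := by
      rw [← ENNReal.coe_le_coe]
      exact h1
    exact h3
  obtain ⟨sec, hsec⟩ := T1.rangeRestrict.exists_rightInverse_of_surjective
    (LinearMap.range_rangeRestrict T1)
  have hsec' : ∀ w : LinearMap.range T1, T1 (sec w) = w := fun w => by
    have := congrArg Subtype.val (LinearMap.congr_fun hsec w)
    exact this
  let l0 : StrongDual ℝ (LinearMap.range T1) := (Λ ∘ₗ sec).mkContinuous M (fun w => by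
    have := hn (sec w)
    rw [hsec'] at this
    exact this)
  have hl0 : ‖l0‖ ≤ M := LinearMap.mkContinuous_norm_le _ M.2 _
  obtain ⟨l, hl, hln⟩ := exists_extension_norm_eq (LinearMap.range T1) l0
  have hlM : ∀ w, ‖l w‖ ≤ M * ‖w‖ := fun w =>
    (l.le_opNorm w).trans (mul_le_mul_of_nonneg_right (hln.trans_le hl0) (norm_nonneg _))
  have hlT : ∀ v, l (T1 v) = Λ v := by
    intro v
    have h1 := hl ⟨T1 v, LinearMap.mem_range_self T1 v⟩
    have h2 : l0 ⟨T1 v, LinearMap.mem_range_self T1 v⟩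
      = Λ (sec ⟨T1 v, LinearMap.mem_range_self T1 v⟩) := rfl
    have h3 := hn (sec ⟨T1 v, LinearMap.mem_range_self T1 v⟩ - v)
    rw [map_sub, map_sub, hsec', sub_self, norm_zero, mul_zero, norm_le_zero_iff, sub_eq_zero] at h3
    rw [← h3, ← h2, ← h1]
  have hm1 : ∀ ψ : Lp ℝ 2 lam, MemLp ψ 1 lam := fun ψ =>
    (Lp.memLp ψ).mono_exponent (by norm_num)
  let J : Lp ℝ 2 lam →ₗ[ℝ] Lp ℝ 1 lam :=
    { toFun := fun ψ => (hm1 ψ).toLp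
      map_add' := fun v w => by
        rw [← MemLp.toLp_add]
        apply MemLp.toLp_congr
        exact Lp.coeFn_add v w
      map_smul' := fun c v => by
        rw [RingHom.id_apply, ← MemLp.toLp_const_smul]
        apply MemLp.toLp_congr
        exact Lp.coeFn_smul c v }
  have hJ : ∀ ψ, ‖J ψ‖ ≤ (lam univ ^ (1/2 : ℝ)).toReal * ‖ψ‖ := by
    intro ψ
    have h1 := eLpNorm_le_eLpNorm_mul_rpow_measure_univ (p := 1) (q := 2) (μ := lam)
      (by norm_num) (Lp.aestronglyMeasurable ψ)
    have h2 : ‖J ψ‖ = (eLpNorm ψ 1 lam).toReal := Lp.norm_toLp _ (hm1 ψ)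
    rw [h2, Lp.norm_def, ← ENNReal.toReal_mul]
    refine ENNReal.toReal_mono ?_ ?_
    · have := Lp.eLpNorm_ne_top ψ
      have h3 : lam univ ^ (1/2 : ℝ) ≠ ∞ := ENNReal.rpow_ne_top_of_nonneg (by norm_num) (measure_ne_top _ _)
      exact ENNReal.mul_ne_top h3 this
    · rw [mul_comm]
      norm_num at h1 ⊢
      exact h1
  let q : StrongDual ℝ (Lp ℝ 2 lam) := (l.toLinearMap ∘ₗ J).mkContinuous
    (M * (lam univ ^ (1/2 : ℝ)).toReal) (fun ψ => by
      refine (hlM (J ψ)).trans ?_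
      rw [mul_assoc]
      exact mul_le_mul_of_nonneg_left (hJ ψ) M.2)
  let r : Lp ℝ 2 lam := (InnerProductSpace.toDual ℝ (Lp ℝ 2 lam)).symm q
  have hr : ∀ ψ, ∫ x, ψ x * r x ∂lam = l (J ψ) := by
    intro ψ
    have h1 : inner ℝ r ψ = q ψ := InnerProductSpace.toDual_symm_apply
    rw [L2.inner_def] at h1
    exact h1
  have hrint : Integrable r lam := memLp_one_iff_integrable.1 (hm1 r)
  have hrA : ∀ A, MeasurableSet A → |∫ x in A, r x ∂lam| ≤ M * lam.real A := by
    intro A hA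
    have hmem : MemLp (A.indicator (fun _ => (1:ℝ))) 2 lam :=
      memLp_indicator_const 2 hA 1 (Or.inr (measure_ne_top _ _))
    have h1 := hr hmem.toLp
    have h2 : ∫ x, (hmem.toLp : Lp ℝ 2 lam) x * r x ∂lam = ∫ x in A, r x ∂lam := by
      rw [← integral_indicator hA]
      refine integral_congr_ae ?_
      filter_upwards [hmem.coeFn_toLp] with x hx
      rw [hx]
      by_cases hxA : x ∈ A <;> simp [hxA]
    rw [h2] at h1
    rw [h1, ← Real.norm_eq_abs]
    refine (hlM _).trans (mul_le_mul_of_nonneg_left (le_of_eq ?_) M.2)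
    have h3 : ‖J hmem.toLp‖ = (eLpNorm (hmem.toLp) 1 lam).toReal :=
      Lp.norm_toLp _ (hm1 _)
    rw [h3, eLpNorm_congr_ae hmem.coeFn_toLp, eLpNorm_indicator_const hA (by norm_num) (by norm_num)]
    simp [Measure.real]
  have hup : ∀ᵐ x ∂lam, r x ≤ M := by
    refine ae_le_of_forall_setIntegral_le hrint (integrable_const _) fun A hA _ => ?_
    rw [setIntegral_const, smul_eq_mul, mul_comm]
    exact (le_abs_self _).trans (hrA A hA)
  have hlow : ∀ᵐ x ∂lam, -(M:ℝ) ≤ r x := by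
    refine ae_le_of_forall_setIntegral_le (integrable_const _) hrint fun A hA _ => ?_
    rw [setIntegral_const, smul_eq_mul]
    have := (abs_le.1 (hrA A hA)).1
    linarith
  refine ⟨fun x => max (-M) (min M ((Lp.aestronglyMeasurable r).mk r x)), ?_, ?_, ?_⟩
  · exact measurable_const.max (measurable_const.min
      (Lp.aestronglyMeasurable r).stronglyMeasurable_mk.measurable)
  · intro x
    rw [abs_le]
    refine ⟨le_max_left _ _, max_le ?_ (min_le_left _ _)⟩
    have : (0:ℝ) ≤ M := M.2
    linarith
  · intro v
    rw [← hlT v]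
    have h1 := hr (hT v).toLp
    have h2 : J (hT v).toLp = T1 v := by
      exact MemLp.toLp_congr (hm1 _) (hT1 v) (hT v).coeFn_toLp
    rw [h2] at h1
    rw [← h1]
    refine integral_congr_ae ?_
    filter_upwards [(hT v).coeFn_toLp, (Lp.aestronglyMeasurable r).ae_eq_mk, hup, hlow]
      with x h1 h2 h3 h4
    rw [h1, ← h2, min_eq_right h3, max_eq_right h4]

def testSubmodule (Ω : Set (En 2)) : Submodule ℝ (En 2 → ℝ) where
  carrier := {φ | SmoothTest Ω φ}
  add_mem' := by
    rintro a b ⟨ha, ha', ha''⟩ ⟨hb, hb', hb''⟩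
    refine ⟨ha.add hb, ha'.add hb', ?_⟩
    exact (tsupport_add a b).trans (union_subset ha'' hb'')
  zero_mem' := by
    refine ⟨contDiff_const, HasCompactSupport.zero, ?_⟩
    have : tsupport (0 : En 2 → ℝ) = ∅ := tsupport_eq_empty_iff.2 rfl
    rw [this]
    exact empty_subset _
  smul_mem' := by
    rintro c a ⟨ha, ha', ha''⟩
    refine ⟨contDiff_const.smul ha, ha'.smul_left (f := fun _ => c), ?_⟩
    exact (closure_mono (Function.support_const_smul_subset c a)).trans ha''

lemma test_integrable (Ω : Set (En 2)) (hΩ : IsOpen Ω)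
    (f : En 2 → En 2) (hf : ContinuousOn f Ω) (φ : En 2 → ℝ) (hφ : SmoothTest Ω φ)
    (e : En 2) (j : Fin 2) :
    IntegrableOn (fun x => f x j * fderiv ℝ φ x e) Ω := by
  obtain ⟨hφs, hφc, hφt⟩ := hφ
  have hTc : IsCompact (tsupport φ) := hφc
  have hcd : Continuous (fun x => fderiv ℝ φ x e) :=
    (hφs.continuous_fderiv (by simp)).clm_apply continuous_const
  have h1 : IntegrableOn (fun x => f x j * fderiv ℝ φ x e) (tsupport φ) := by
    apply ContinuousOn.integrableOn_compact hTc
    refine ContinuousOn.mul ?_ hcd.continuousOn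
    exact (EuclideanSpace.proj (𝕜 := ℝ) j).continuous.comp_continuousOn (hf.mono hφt)
  refine h1.of_forall_sdiff_eq_zero hΩ.measurableSet ?_
  intro x hx
  have : fderiv ℝ φ x = 0 := by
    by_contra h
    exact hx.2 (tsupport_fderiv_subset ℝ (f := φ) (subset_tsupport _ h))
  simp [this]

lemma exists_density (Ω₁ Ω₂ : Set (En 2)) (hΩ₁ : IsOpen Ω₁) (hΩ₂ : IsOpen Ω₂)
    (f g : En 2 → En 2) (hf : IsHomeoOn f g Ω₁ Ω₂) (L : ℝ≥0)
    (hL : ∀ y ∈ Ω₂, ∃ ε : ℝ, 0 < ε ∧ Metric.ball y ε ⊆ Ω₂ ∧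
        LipschitzOnWith L g (Metric.ball y ε))
    (e : En 2) (he : ‖e‖ = 1) (j : Fin 2) :
    ∃ s : En 2 → ℝ, Measurable s ∧ (∀ y, |s y| ≤ ((L + 1 : ℝ≥0) ^ 3 : ℝ≥0)) ∧
      ∀ φ, SmoothTest Ω₁ φ →
        ∫ x in Ω₁, f x j * fderiv ℝ φ x e = ∫ y in Ω₂, φ (g y) * s y := by
  obtain ⟨hfc, hgc, hfm, hgm, hgf, hfg⟩ := id hf
  set G := Ω₂.indicator g with hG
  have hGm : Measurable G := indicator_measurable hΩ₂ hgc
  let w : En 2 → ℝ := fun y => (1 + ‖y‖) ^ (-(3:ℝ))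
  have hw0 : ∀ y, 0 < w y := fun y => Real.rpow_pos_of_pos (by positivity) _
  have hwc : Continuous w := by
    refine Continuous.rpow_const (by fun_prop) fun y => Or.inl ?_
    positivity
  have hwint : Integrable w := by
    apply integrable_one_add_norm
    simp
    norm_num
  let lam : Measure (En 2) := (volume.restrict Ω₂).withDensity (fun y => ENNReal.ofReal (w y))
  have hfin : IsFiniteMeasure lam := isFiniteMeasure_withDensity_ofReal hwint.restrict.2
  have hac : lam ≪ volume.restrict Ω₂ := withDensity_absolutelyContinuous _ _
  let T : testSubmodule Ω₁ →ₗ[ℝ] (En 2 → ℝ) :=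
    { toFun := fun φ y => (φ : En 2 → ℝ) (G y) / w y
      map_add' := fun φ ψ => by
        ext y
        simp [add_div]
      map_smul' := fun c φ => by
        ext y
        simp [mul_div_assoc] }
  have hTm : ∀ φ : testSubmodule Ω₁, Measurable (T φ) := fun φ =>
    (φ.2.1.continuous.measurable.comp hGm).div hwc.measurable
  have hT : ∀ φ, MemLp (T φ) 2 lam := by
    intro φ
    obtain ⟨hφs, hφc, hφt⟩ := φ.2
    have hTc : IsCompact (f '' tsupport (φ : En 2 → ℝ)) :=
      IsCompact.image_of_continuousOn hφc (hfc.mono hφt)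
    obtain ⟨B, hB⟩ := hφc.exists_bound_of_continuous hφs.continuous
    obtain ⟨D, hD⟩ := hTc.exists_bound_of_continuousOn (f := fun y => (w y)⁻¹)
      (hwc.inv₀ (fun y => (hw0 y).ne')).continuousOn
    refine MemLp.of_bound (hTm φ).aestronglyMeasurable (|B| * |D|) ?_
    refine hac.ae_le ?_
    filter_upwards [ae_restrict_mem hΩ₂.measurableSet] with y hy
    change ‖(φ : En 2 → ℝ) (G y) / w y‖ ≤ _
    by_cases h0 : (φ : En 2 → ℝ) (G y) = 0
    · rw [h0]
      simp
      positivity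
    · have h1 : G y = g y := indicator_of_mem hy g
      rw [h1] at h0 ⊢
      have h2 : y ∈ f '' tsupport (φ : En 2 → ℝ) := ⟨g y, subset_tsupport _ h0, hfg y hy⟩
      rw [div_eq_mul_inv, norm_mul]
      exact mul_le_mul ((hB _).trans (le_abs_self _)) ((hD y h2).trans (le_abs_self _))
        (norm_nonneg _) (abs_nonneg _)
  let Λ : testSubmodule Ω₁ →ₗ[ℝ] ℝ :=
    { toFun := fun φ => ∫ x in Ω₁, f x j * fderiv ℝ (φ : En 2 → ℝ) x e
      map_add' := fun φ ψ => by
        rw [← integral_add (test_integrable Ω₁ hΩ₁ f hfc φ φ.2 e j)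
          (test_integrable Ω₁ hΩ₁ f hfc ψ ψ.2 e j)]
        congr 1
        ext x
        have h1 : DifferentiableAt ℝ (φ : En 2 → ℝ) x := φ.2.1.differentiable (by simp) x
        have h2 : DifferentiableAt ℝ (ψ : En 2 → ℝ) x := ψ.2.1.differentiable (by simp) x
        rw [Submodule.coe_add, fderiv_add h1 h2]
        simp [mul_add]
      map_smul' := fun c φ => by
        rw [RingHom.id_apply, smul_eq_mul, ← integral_const_mul]
        congr 1
        ext x
        have h1 : DifferentiableAt ℝ (φ : En 2 → ℝ) x := φ.2.1.differentiable (by simp) x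
        rw [Submodule.coe_smul, fderiv_const_smul h1]
        simp
        ring }
  have hwm : Measurable (fun y => ENNReal.ofReal (w y)) := hwc.measurable.ennreal_ofReal
  have hΛ : ∀ φ, ‖Λ φ‖ₑ ≤ ((L + 1 : ℝ≥0) ^ 3 : ℝ≥0) * ∫⁻ x, ‖T φ x‖ₑ ∂lam := by
    intro φ
    have h1 := deriv_bound Ω₁ Ω₂ hΩ₁ hΩ₂ f g hf L hL φ φ.2 e he j
    refine h1.trans (le_of_eq ?_)
    rw [ENNReal.coe_pow]
    congr 1
    rw [lintegral_withDensity_eq_lintegral_mul _ hwm (hTm φ).enorm]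
    refine setLIntegral_congr_fun hΩ₂.measurableSet fun y hy => ?_
    change ‖(φ : En 2 → ℝ) (g y)‖ₑ = ENNReal.ofReal (w y) * ‖(φ : En 2 → ℝ) (G y) / w y‖ₑ
    have h1 : G y = g y := indicator_of_mem hy g
    rw [h1, ← ofReal_norm, ← ofReal_norm, ← ENNReal.ofReal_mul (hw0 y).le, norm_div,
      Real.norm_of_nonneg (hw0 y).le, mul_div_cancel₀ _ (hw0 y).ne']
  obtain ⟨s, hs, hsM, hsΛ⟩ := dual_rep lam T hT Λ _ hΛ
  refine ⟨s, hs, hsM, fun φ hφ => ?_⟩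
  have h1 := hsΛ ⟨φ, hφ⟩
  change ∫ x in Ω₁, f x j * fderiv ℝ φ x e = _ at h1
  rw [h1, integral_withDensity_eq_integral_toReal_smul hwm
    (Eventually.of_forall fun _ => ENNReal.ofReal_lt_top)]
  refine setIntegral_congr_fun hΩ₂.measurableSet fun y hy => ?_
  change (ENNReal.ofReal (w y)).toReal • (φ (G y) / w y * s y) = _
  have h2 : G y = g y := indicator_of_mem hy g
  have h3 := (hw0 y).ne'
  rw [h2, ENNReal.toReal_ofReal (hw0 y).le, smul_eq_mul]
  field_simp

lemma forward_dir (Ω₁ Ω₂ : Set (En 2)) (hΩ₁ : IsOpen Ω₁) (hΩ₂ : IsOpen Ω₂)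
    (f g : En 2 → En 2) (hf : IsHomeoOn f g Ω₁ Ω₂) (L : ℝ≥0)
    (hL : ∀ y ∈ Ω₂, ∃ ε : ℝ, 0 < ε ∧ Metric.ball y ε ⊆ Ω₂ ∧
        LipschitzOnWith L g (Metric.ball y ε)) :
    ∃ νf : Measure (En 2), MemBVloc Ω₁ f νf ∧ ∃ K : ℝ, 0 < K ∧
          ∀ A : Set (En 2), A ⊆ Ω₂ → MeasurableSet A →
            νf (f ⁻¹' A ∩ Ω₁) ≤ ENNReal.ofReal K * volume A := by
  obtain ⟨hfc, hgc, hfm, hgm, hgf, hfg⟩ := id hf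
  set F := Ω₁.indicator f with hF
  set G := Ω₂.indicator g with hG
  have hFm : Measurable F := indicator_measurable hΩ₁ hfc
  have hGm : Measurable G := indicator_measurable hΩ₂ hgc
  have hGy : ∀ y ∈ Ω₂, G y = g y := fun y hy => indicator_of_mem hy g
  have hFG : ∀ y ∈ Ω₂, F (G y) = y := fun y hy => by
    rw [hGy y hy, hF, indicator_of_mem (hgm hy), hfg y hy]
  have hex := fun (j i : Fin 2) => exists_density Ω₁ Ω₂ hΩ₁ hΩ₂ f g hf L hL
    (EuclideanSpace.single i 1) (by simp) j
  choose s hsm hsb hs using hex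
  set M : ℝ := (((L + 1 : ℝ≥0) ^ 3 : ℝ≥0) : ℝ) with hM
  have hMpos : 0 < M := by rw [hM]; positivity
  let N : En 2 → ℝ := fun y => frobNorm (fun j i => s j i y)
  have hNm : Measurable N := by
    refine Measurable.sqrt ?_
    exact Finset.measurable_sum _ fun j _ => Finset.measurable_sum _ fun i _ => (hsm j i).pow_const 2
  have hN0 : ∀ y, 0 ≤ N y := fun y => Real.sqrt_nonneg _
  have hNb : ∀ y, N y ≤ 2 * M := by
    intro y
    apply Real.sqrt_le_iff.2
    refine ⟨by positivity, ?_⟩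
    have : ∀ j i, s j i y ^ 2 ≤ M ^ 2 := fun j i => sq_le_sq' (abs_le.1 (hsb j i y)).1
      (abs_le.1 (hsb j i y)).2
    simp only [Fin.sum_univ_two]
    nlinarith [this 0 0, this 0 1, this 1 0, this 1 1]
  have hNs : ∀ y, N y = 0 → ∀ j i, s j i y = 0 := by
    intro y hy j i
    have h1 := (Real.sqrt_eq_zero (by positivity)).1 hy
    have h2 := (Finset.sum_eq_zero_iff_of_nonneg (fun j _ => by positivity)).1 h1 j (Finset.mem_univ _)
    have h3 := (Finset.sum_eq_zero_iff_of_nonneg (fun j _ => by positivity)).1 h2 i (Finset.mem_univ _)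
    simpa using h3
  have hNm' : Measurable (fun y => ENNReal.ofReal (N y)) := hNm.ennreal_ofReal
  let ρ : Measure (En 2) := (volume.restrict Ω₂).withDensity (fun y => ENNReal.ofReal (N y))
  have hac : ρ ≪ volume.restrict Ω₂ := withDensity_absolutelyContinuous _ _
  let ν : Measure (En 2) := Measure.map G ρ
  have hνb : ∀ B, MeasurableSet B → ν B ≤ ENNReal.ofReal (2 * M) * volume (G ⁻¹' B ∩ Ω₂) := by
    intro B hB
    rw [Measure.map_apply hGm hB, withDensity_apply _ (hGm hB),
      Measure.restrict_restrict (hGm hB)]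
    refine (lintegral_mono (g := fun _ => ENNReal.ofReal (2 * M))
      fun y => ENNReal.ofReal_le_ofReal (hNb y)).trans ?_
    rw [setLIntegral_const]
  let σ : En 2 → Fin 2 → Fin 2 → ℝ := fun x j i => - s j i (F x) / N (F x)
  have hσm : Measurable σ := by
    refine measurable_pi_lambda _ fun j => measurable_pi_lambda _ fun i => ?_
    exact ((hsm j i).comp hFm).neg.div (hNm.comp hFm)
  have hσf : Measurable (fun x => frobNorm (σ x)) := by
    refine Measurable.sqrt ?_
    refine Finset.measurable_sum _ fun j _ => Finset.measurable_sum _ fun i _ => ?_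
    exact Measurable.pow_const (measurable_pi_iff.1 (measurable_pi_iff.1 hσm j) i) 2
  refine ⟨ν, ⟨?_, ?_, σ, hσm, ?_, ?_, ?_⟩, 2 * M, by positivity, ?_⟩
  · exact hfc.locallyIntegrableOn hΩ₁.measurableSet
  · intro C hC hCΩ
    refine (hνb C hC.measurableSet).trans_lt ?_
    refine ENNReal.mul_lt_top ENNReal.ofReal_lt_top ?_
    refine lt_of_le_of_lt (measure_mono ?_)
      ((hC.image_of_continuousOn (hfc.mono hCΩ)).measure_lt_top (μ := volume))
    rintro y ⟨hy, hy2⟩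
    have h1 : G y ∈ C := hy
    rw [hGy y hy2] at h1
    exact ⟨g y, h1, hfg y hy2⟩
  · have hset : MeasurableSet {x | frobNorm (σ x) = 1} := hσf (measurableSet_singleton 1)
    rw [ae_map_iff hGm.aemeasurable hset, ae_withDensity_iff hNm']
    filter_upwards [ae_restrict_mem hΩ₂.measurableSet] with y hy hNy
    have hNpos : 0 < N y := by
      by_contra h
      exact hNy (ENNReal.ofReal_eq_zero.2 (not_lt.1 h))
    simp only [frobNorm, σ]
    rw [hFG y hy]
    have h1 : ∑ j, ∑ i, (-s j i y / N y) ^ 2 = (∑ j, ∑ i, s j i y ^ 2) / N y ^ 2 := by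
      simp only [Fin.sum_univ_two]
      ring
    have h2 : N y = √(∑ j, ∑ i, s j i y ^ 2) := rfl
    rw [h1, Real.sqrt_div (by positivity), Real.sqrt_sq hNpos.le, ← h2, div_self hNpos.ne']
  · rw [Measure.map_apply hGm hΩ₁.measurableSet.compl]
    apply hac
    rw [Measure.restrict_apply (hGm hΩ₁.measurableSet.compl)]
    convert measure_empty (μ := volume)
    apply eq_empty_of_subset_empty
    rintro y ⟨hy, hy2⟩
    apply hy
    rw [hGy y hy2]
    exact hgm hy2
  · intro φ hφ j i
    rw [hs j i φ hφ]
    have hφσ : Measurable (fun x => φ x * σ x j i) := by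
      refine hφ.1.continuous.measurable.mul ?_
      exact measurable_pi_iff.1 (measurable_pi_iff.1 hσm j) i
    have hφσ' : AEStronglyMeasurable (fun a => -(φ a * σ a j i)) (Measure.map G ρ) :=
      hφσ.neg.aestronglyMeasurable
    rw [← integral_neg]
    change _ = ∫ a, -(φ a * σ a j i) ∂(Measure.map G ρ)
    rw [integral_map hGm.aemeasurable hφσ',
      integral_withDensity_eq_integral_toReal_smul hNm'
        (Eventually.of_forall fun _ => ENNReal.ofReal_lt_top)]
    refine setIntegral_congr_fun hΩ₂.measurableSet fun y hy => ?_
    simp only [σ]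
    rw [hFG y hy, hGy y hy, ENNReal.toReal_ofReal (hN0 y), smul_eq_mul]
    by_cases h0 : N y = 0
    · simp [h0, hNs y h0 j i]
    · field_simp
  · intro A hA hAm
    have e1 : f ⁻¹' A ∩ Ω₁ = F ⁻¹' A ∩ Ω₁ := by
      ext x
      simp only [mem_inter_iff, mem_preimage]
      refine and_congr_left fun hx => ?_
      rw [hF, indicator_of_mem hx]
    have hm : MeasurableSet (f ⁻¹' A ∩ Ω₁) := by
      rw [e1]
      exact (hFm hAm).inter hΩ₁.measurableSet
    refine (hνb _ hm).trans ?_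
    gcongr
    rintro y ⟨⟨hy, -⟩, hy2⟩
    have h1 : f (G y) ∈ A := hy
    rwa [hGy y hy2, hfg y hy2] at h1

lemma abs_le_frobNorm (M : Fin 2 → Fin 2 → ℝ) (j i : Fin 2) : |M j i| ≤ frobNorm M := by
  apply Real.abs_le_sqrt
  refine (Finset.single_le_sum (f := fun i => M j i ^ 2) (fun i _ => sq_nonneg _)
    (Finset.mem_univ i)).trans ?_
  exact Finset.single_le_sum (f := fun j => ∑ i, M j i ^ 2)
    (fun j _ => Finset.sum_nonneg fun i _ => sq_nonneg _) (Finset.mem_univ j)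

lemma mollify (Ω : Set (En 2)) (hΩ : IsOpen Ω) (f : En 2 → En 2) (hfc : ContinuousOn f Ω)
    (σ : En 2 → Fin 2 → Fin 2 → ℝ) (ν : Measure (En 2)) (hν : IsVariationMeasure Ω f σ ν)
    (C : Set (En 2)) (hC : IsCompact C) (δ : ℝ) (hδ : 0 < δ) (hsub : cthickening δ C ⊆ Ω)
    (hfin : ν (cthickening δ C) < ⊤) (η : ℝ) (hη : 0 < η) (j : Fin 2) :
    ∃ F : En 2 → ℝ, ContDiff ℝ 1 F ∧ (∀ x ∈ C, |F x - f x j| ≤ η) ∧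
      ∀ i : Fin 2, ∫⁻ x in C, ‖fderiv ℝ F x (EuclideanSpace.single i 1)‖ₑ
        ≤ ν (cthickening δ C) := by
  obtain ⟨hσm, hσ1, hν0, hibp⟩ := hν
  set T := cthickening δ C with hT
  have hTc : IsCompact T := hC.cthickening
  have hCT : C ⊆ T := self_subset_cthickening C
  have hfj : ContinuousOn (fun x => f x j) T :=
    (EuclideanSpace.proj (𝕜 := ℝ) j).continuous.comp_continuousOn (hfc.mono hsub)
  set F0 : En 2 → ℝ := T.indicator (fun x => f x j) with hF0
  have hF0int : Integrable F0 := by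
    rw [hF0, integrable_indicator_iff hTc.measurableSet]
    exact hfj.integrableOn_compact hTc
  have huc := hTc.uniformContinuousOn_of_continuous hfj
  obtain ⟨r, hr, hru⟩ := Metric.uniformContinuousOn_iff.1 huc η hη
  set ε := min r δ with hε
  have hεpos : 0 < ε := lt_min hr hδ
  let b : ContDiffBump (0 : En 2) := ⟨ε / 2, ε, by positivity, by linarith⟩
  have hbout : b.rOut = ε := rfl
  set ρ := b.normed volume with hρ
  have hρs : ContDiff ℝ (⊤ : ℕ∞) ρ := b.contDiff_normed
  have hρc : HasCompactSupport ρ := b.hasCompactSupport_normed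
  have hρ0 : ∀ x, 0 ≤ ρ x := fun x => b.nonneg_normed x
  have hρz : ∀ x, ρ x ≠ 0 → ‖x‖ < ε := by
    intro x hx
    have h1 : x ∈ Function.support ρ := hx
    rw [hρ, b.support_normed_eq] at h1
    simpa [hbout] using h1
  have hball : ∀ x ∈ C, closedBall x ε ⊆ T := fun x hx =>
    (closedBall_subset_closedBall (min_le_right _ _)).trans (closedBall_subset_cthickening hx δ)
  set F : En 2 → ℝ := convolution ρ F0 (ContinuousLinearMap.lsmul ℝ ℝ) volume with hF
  have hFs : ContDiff ℝ (⊤ : ℕ∞) F := hρc.contDiff_convolution_left _ hρs hF0int.locallyIntegrable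
  refine ⟨F, hFs.of_le (by exact_mod_cast le_top), ?_, ?_⟩
  · intro x hx
    have h1 : dist (F x) (F0 x) ≤ η := by
      apply b.dist_normed_convolution_le hF0int.aestronglyMeasurable
      intro y hy
      have hyT : y ∈ T := hball x hx (ball_subset_closedBall hy)
      have hxT : x ∈ T := hCT hx
      simp only [hF0, indicator_of_mem hyT, indicator_of_mem hxT]
      exact (hru y hyT x hxT (lt_of_lt_of_le hy (min_le_left _ _))).le
    rw [hF0, indicator_of_mem (hCT hx), Real.dist_eq] at h1
    exact h1
  · intro i
    set e : En 2 := EuclideanSpace.single i 1 with he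
    have hder : ∀ x ∈ C, fderiv ℝ F x e = ∫ z, ρ (x - z) * σ z j i ∂ν := by
      intro x hx
      have h1 : HasFDerivAt F _ x :=
        hρc.hasFDerivAt_convolution_left (ContinuousLinearMap.lsmul ℝ ℝ)
          (hρs.of_le (by exact_mod_cast le_top)) hF0int.locallyIntegrable x
      have hex : ConvolutionExistsAt (fderiv ℝ ρ) F0 x
          ((ContinuousLinearMap.lsmul ℝ ℝ : ℝ →L[ℝ] ℝ →L[ℝ] ℝ).precompL (En 2)) volume :=
        HasCompactSupport.convolutionExists_left _ (hρc.fderiv ℝ)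
          (hρs.continuous_fderiv (by simp)) hF0int.locallyIntegrable x
      rw [h1.fderiv, convolution_eq_swap,
        ContinuousLinearMap.integral_apply hex.integrable_swap]
      let φ : En 2 → ℝ := fun z => ρ (x - z)
      have hφs : ContDiff ℝ (⊤ : ℕ∞) φ := hρs.comp (contDiff_const.sub contDiff_id)
      have hφz : ∀ z, φ z ≠ 0 → z ∈ closedBall x ε := by
        intro z hz
        have := hρz _ hz
        rw [mem_closedBall, dist_comm, dist_eq_norm]
        exact this.le
      have hφt : tsupport φ ⊆ closedBall x ε := closure_minimal hφz isClosed_closedBall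
      have hφ : SmoothTest Ω φ := by
        refine ⟨hφs, ?_, hφt.trans ((hball x hx).trans hsub)⟩
        exact HasCompactSupport.of_support_subset_isCompact (isCompact_closedBall x ε) hφz
      have hφd : ∀ z, fderiv ℝ φ z e = - fderiv ℝ ρ (x - z) e := by
        intro z
        have h2 : HasFDerivAt φ ((fderiv ℝ ρ (x - z)).comp (-ContinuousLinearMap.id ℝ (En 2))) z := by
          have h3 : HasFDerivAt ρ (fderiv ℝ ρ (x - z)) (x - z) :=
            (hρs.differentiable (by simp) _).hasFDerivAt
          exact h3.comp z ((hasFDerivAt_id z).const_sub x)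
        rw [h2.fderiv]
        simp
      have h4 := hibp φ hφ j i
      rw [← neg_eq_iff_eq_neg] at h4
      rw [← h4, ← integral_indicator hΩ.measurableSet, ← integral_neg]
      refine integral_congr_ae (Eventually.of_forall fun z => ?_)
      simp only [ContinuousLinearMap.precompL_apply, ContinuousLinearMap.lsmul_apply, smul_eq_mul]
      by_cases hz : z ∈ T
      · rw [indicator_of_mem (hsub hz), hφd, hF0, indicator_of_mem hz]
        ring
      · have h5 : fderiv ℝ φ z = 0 := by
          by_contra h
          exact hz (hball x hx (hφt (tsupport_fderiv_subset ℝ (f := φ) (subset_tsupport _ h))))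
        have h6 := hφd z
        rw [h5] at h6
        simp only [zero_apply] at h6
        rw [hF0, indicator_of_notMem hz]
        by_cases hzΩ : z ∈ Ω
        · rw [indicator_of_mem hzΩ]
          simp [← he, h5]
        · rw [indicator_of_notMem hzΩ]
          simp
    have hσle : ∀ᵐ z ∂ν, ‖σ z j i‖ₑ ≤ 1 := by
      filter_upwards [hσ1] with z hz
      have h1 := abs_le_frobNorm (σ z) j i
      rw [hz, ← Real.norm_eq_abs] at h1
      rw [← ofReal_norm, ← ENNReal.ofReal_one]
      exact ENNReal.ofReal_le_ofReal h1
    have hb1 : ∀ x ∈ C, ‖fderiv ℝ F x e‖ₑ ≤ ∫⁻ z in T, ‖ρ (x - z)‖ₑ ∂ν := by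
      intro x hx
      rw [hder x hx, ← lintegral_indicator hTc.measurableSet]
      refine (enorm_integral_le_lintegral_enorm _).trans (lintegral_mono_ae ?_)
      filter_upwards [hσle] with z hz
      rw [enorm_mul]
      by_cases h0 : ρ (x - z) = 0
      · simp [h0]
      · have hzT : z ∈ T := by
          apply hball x hx
          rw [mem_closedBall, dist_comm, dist_eq_norm]
          exact (hρz _ h0).le
        rw [indicator_of_mem hzT]
        exact mul_le_of_le_one_right' hz
    have : IsFiniteMeasure (ν.restrict T) := ⟨by simpa using hfin⟩
    have hone : ∫⁻ x, ‖ρ x‖ₑ = 1 := by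
      have h1 : ∀ x, ‖ρ x‖ₑ = ENNReal.ofReal (ρ x) := fun x => by
        rw [← ofReal_norm, Real.norm_of_nonneg (hρ0 x)]
      simp_rw [h1]
      rw [← ofReal_integral_eq_lintegral_ofReal b.integrable_normed
        (Eventually.of_forall hρ0), b.integral_normed, ENNReal.ofReal_one]
    calc ∫⁻ x in C, ‖fderiv ℝ F x e‖ₑ
        ≤ ∫⁻ x in C, ∫⁻ z in T, ‖ρ (x - z)‖ₑ ∂ν := setLIntegral_mono' hC.measurableSet hb1
      _ ≤ ∫⁻ x, ∫⁻ z in T, ‖ρ (x - z)‖ₑ ∂ν := setLIntegral_le_lintegral _ _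
      _ = ∫⁻ z in T, (∫⁻ x, ‖ρ (x - z)‖ₑ) ∂ν := by
          rw [lintegral_lintegral_swap]
          have : Continuous (fun p : En 2 × En 2 => ρ (p.1 - p.2)) :=
            hρs.continuous.comp (by fun_prop)
          exact this.measurable.enorm.aemeasurable
      _ = ∫⁻ z in T, 1 ∂ν := by
          refine lintegral_congr fun z => ?_
          rw [lintegral_sub_right_eq_self (fun x => ‖ρ x‖ₑ) z, hone]
      _ = ν T := by simp

lemma param_mp (i k : Fin 2) (hik : i ≠ k) :
    MeasurePreserving (fun p : ℝ × ℝ =>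
      p.1 • (EuclideanSpace.single k 1 : En 2) + p.2 • (EuclideanSpace.single i 1 : En 2))
      (volume.prod volume) volume := by
  have h1 : MeasurePreserving (fun p : ℝ × ℝ => (WithLp.toLp 2 ![p.1, p.2] : En 2))
      (volume.prod volume) volume := by
    have ha := (PiLp.volume_preserving_toLp (Fin 2)).comp
      ((volume_preserving_finTwoArrow ℝ).symm _)
    exact ha
  have h2 : MeasurePreserving (Prod.swap : ℝ × ℝ → ℝ × ℝ) (volume.prod volume)
      (volume.prod volume) := Measure.measurePreserving_swap
  fin_cases i <;> fin_cases k <;> simp at hik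
  · convert h1.comp h2 using 1
    ext p m
    fin_cases m <;> simp
  · convert h1 using 1
    ext p m
    fin_cases m <;> simp

lemma vol_tube (y z : En 2) (r : ℝ) (hr : 0 < r) :
    volume (cthickening r (segment ℝ y z)) ≤
      ENNReal.ofReal (4 * (dist y z * r + 3 * r ^ 2)) * volume (closedBall (0 : En 2) 1) := by
  set ℓ := dist y z with hℓ
  have hℓ0 : 0 ≤ ℓ := dist_nonneg
  set N : ℕ := ⌈ℓ / r⌉₊ + 1 with hN
  have hNr : (N : ℝ) ≤ ℓ / r + 2 := by
    have := (Nat.ceil_lt_add_one (show 0 ≤ ℓ / r by positivity)).le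
    rw [hN]; push_cast; linarith
  have hNpos : (0 : ℝ) < N := by rw [hN]; positivity
  have hNl : ℓ ≤ N * r := by
    have := Nat.le_ceil (ℓ / r)
    rw [div_le_iff₀ hr] at this
    rw [hN]; push_cast; nlinarith
  let c : ℕ → En 2 := fun m => AffineMap.lineMap y z ((m : ℝ) / N)
  have hcov : cthickening r (segment ℝ y z) ⊆ ⋃ m ∈ Finset.range (N + 1), closedBall (c m) (2 * r) := by
    have hcomp : IsCompact (segment ℝ y z) := by
      rw [segment_eq_image_lineMap]
      exact isCompact_Icc.image (AffineMap.lineMap_continuous)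
    rw [hcomp.cthickening_eq_biUnion_closedBall hr.le]
    intro x hx
    simp only [mem_iUnion] at hx ⊢
    obtain ⟨w, hw, hxw⟩ := hx
    rw [segment_eq_image_lineMap] at hw
    obtain ⟨t, ⟨ht0, ht1⟩, rfl⟩ := hw
    refine ⟨⌊t * N⌋₊, ?_, ?_⟩
    · rw [Finset.mem_range, Nat.lt_succ_iff]
      apply Nat.floor_le_of_le
      nlinarith
    · rw [mem_closedBall] at hxw ⊢
      have h1 : dist (AffineMap.lineMap y z t : En 2) (c ⌊t * N⌋₊) ≤ r := by
        simp only [c]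
        rw [dist_lineMap_lineMap, Real.dist_eq]
        have h2 : |t - (⌊t * N⌋₊ : ℝ) / N| ≤ 1 / N := by
          have h3 := Nat.floor_le (show 0 ≤ t * N by positivity)
          have h4 := Nat.lt_floor_add_one (t * N)
          have h5 : t - (⌊t * N⌋₊ : ℝ) / N = (t * N - ⌊t * N⌋₊) / N := by field_simp
          rw [h5, abs_of_nonneg (div_nonneg (by linarith) hNpos.le)]
          gcongr
          linarith
        calc _ ≤ 1 / (N : ℝ) * ℓ := by gcongr
          _ ≤ r := by
            rw [div_mul_eq_mul_div, div_le_iff₀ hNpos]; linarith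
      linarith [dist_triangle x (AffineMap.lineMap y z t) (c ⌊t * N⌋₊)]
  calc volume (cthickening r (segment ℝ y z))
      ≤ ∑ m ∈ Finset.range (N + 1), volume (closedBall (c m) (2 * r)) :=
        (measure_mono hcov).trans (measure_biUnion_finset_le _ _)
    _ = ∑ m ∈ Finset.range (N + 1), ENNReal.ofReal ((2 * r) ^ 2) * volume (closedBall (0 : En 2) 1) := by
        refine Finset.sum_congr rfl fun m _ => ?_
        rw [Measure.addHaar_closedBall _ _ (by positivity : (0 : ℝ) ≤ 2 * r),
          Measure.addHaar_unitClosedBall_eq_addHaar_unitBall]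
        simp
    _ = ENNReal.ofReal ((N + 1) * (2 * r) ^ 2) * volume (closedBall (0 : En 2) 1) := by
        rw [Finset.sum_const, Finset.card_range, nsmul_eq_mul,
          ENNReal.ofReal_mul (by positivity), mul_assoc]
        congr 1
        rw [← Nat.cast_add_one, ENNReal.ofReal_natCast]
    _ ≤ _ := by
        refine mul_le_mul_left (ENNReal.ofReal_le_ofReal ?_) _
        have : (N + 1 : ℝ) * (2 * r) ^ 2 ≤ (ℓ / r + 3) * (2 * r) ^ 2 :=
          mul_le_mul_of_nonneg_right (by linarith) (by positivity)
        refine this.trans (le_of_eq ?_)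
        field_simp
        ring

/-- Exit along a line: starting in an open set contained in a bounded closed set. -/
lemma exit_time (O G : Set (En 2)) (hO : IsOpen O) (hG : IsCompact G) (hOG : O ⊆ G)
    (x e : En 2) (he : ‖e‖ = 1) (hx : x ∈ O) :
    ∃ τ : ℝ, 0 ≤ τ ∧ x + τ • e ∉ O ∧ ∀ t ∈ Icc 0 τ, x + t • e ∈ G := by
  have hcont : Continuous (fun t : ℝ => x + t • e) := by fun_prop
  set S : Set ℝ := Ici 0 ∩ (fun t : ℝ => x + t • e) ⁻¹' Oᶜ with hS
  have hSc : IsClosed S := isClosed_Ici.inter (hO.isClosed_compl.preimage hcont)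
  have hSb : BddBelow S := ⟨0, fun t ht => ht.1⟩
  obtain ⟨R, hR⟩ := hG.isBounded.exists_norm_le
  have hSne : S.Nonempty := by
    refine ⟨‖x‖ + |R| + 1, by simp only [mem_Ici]; positivity, fun h => ?_⟩
    have h1 := hR _ (hOG h)
    have h2 : ‖(‖x‖ + |R| + 1) • e‖ = ‖x‖ + |R| + 1 := by
      rw [norm_smul, he, mul_one, Real.norm_of_nonneg (by positivity)]
    have h3 : ‖(‖x‖ + |R| + 1) • e‖ ≤ ‖x + (‖x‖ + |R| + 1) • e‖ + ‖x‖ := by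
      have := norm_sub_le (x + (‖x‖ + |R| + 1) • e) x
      simpa using this
    have h4 := le_abs_self R
    have h1' : ‖x + (‖x‖ + |R| + 1) • e‖ ≤ R := h1
    linarith
  have hmem := hSc.csInf_mem hSne hSb
  set τ := sInf S with hτ
  refine ⟨τ, hmem.1, hmem.2, ?_⟩
  have hlt : ∀ t, 0 ≤ t → t < τ → x + t • e ∈ O := by
    intro t ht0 ht
    by_contra h
    exact absurd (csInf_le hSb ⟨ht0, h⟩) (not_le.2 ht)
  have hτpos : 0 < τ := by
    rcases (show 0 ≤ τ from hmem.1).lt_or_eq with h | h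
    · exact h
    · exfalso
      apply hmem.2
      rw [← h]
      simpa using hx
  have hsub : Icc 0 τ ⊆ (fun t : ℝ => x + t • e) ⁻¹' G := by
    rw [← closure_Ico hτpos.ne]
    exact closure_minimal (fun t ht => hOG (hlt t ht.1 ht.2)) (hG.isClosed.preimage hcont)
  exact fun t ht => hsub ht

/-- One-dimensional fundamental estimate. -/
lemma ftc_line (F : En 2 → ℝ) (hF : ContDiff ℝ 1 F) (x e : En 2) (G : Set (En 2))
    (hG : IsClosed G) (τ : ℝ) (hτ : 0 ≤ τ) (hsub : ∀ t ∈ Icc 0 τ, x + t • e ∈ G) :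
    ENNReal.ofReal |F (x + τ • e) - F x| ≤
      ∫⁻ t : ℝ, G.indicator (fun p => ‖fderiv ℝ F p e‖ₑ) (x + t • e) := by
  have hcont : Continuous (fun t : ℝ => x + t • e) := by fun_prop
  have hd : ∀ t : ℝ, HasDerivAt (fun t : ℝ => F (x + t • e)) (fderiv ℝ F (x + t • e) e) t := by
    intro t
    have h1 : HasDerivAt (fun t : ℝ => x + t • e) e t := by
      simpa using ((hasDerivAt_id t).smul_const e).const_add x
    exact ((hF.differentiable (by simp) _).hasFDerivAt).comp_hasDerivAt t h1
  have hc : Continuous (fun t : ℝ => fderiv ℝ F (x + t • e) e) :=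
    ((hF.continuous_fderiv (by simp)).comp hcont).clm_apply continuous_const
  have h2 := intervalIntegral.integral_eq_sub_of_hasDerivAt (a := 0) (b := τ)
    (fun t _ => hd t) (hc.intervalIntegrable _ _)
  simp only [zero_smul, add_zero] at h2
  rw [← h2, ← Real.norm_eq_abs, ofReal_norm, intervalIntegral.integral_of_le hτ]
  refine (enorm_integral_le_lintegral_enorm _).trans ?_
  rw [← lintegral_indicator measurableSet_Ioc]
  refine lintegral_mono fun t => ?_
  by_cases ht : t ∈ Ioc 0 τ
  · rw [indicator_of_mem ht, indicator_of_mem (hsub t ⟨ht.1.le, ht.2⟩)]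
  · rw [indicator_of_notMem ht]
    exact zero_le

set_option maxHeartbeats 1600000 in
/-- The key slicing estimate. -/
lemma slicing (Ω₁ Ω₂ : Set (En 2)) (hΩ₁ : IsOpen Ω₁) 
    (f g : En 2 → En 2) (hf : IsHomeoOn f g Ω₁ Ω₂)
    (ν : Measure (En 2)) (hν : MemBVloc Ω₁ f ν) (K : ℝ) (hK : 0 < K)
    (hKA : ∀ A : Set (En 2), A ⊆ Ω₂ → MeasurableSet A →
            ν (f ⁻¹' A ∩ Ω₁) ≤ ENNReal.ofReal K * volume A)
    (y z : En 2) (h : ℝ) (hh : 0 < h) (hsub : cthickening (3 * h) (segment ℝ y z) ⊆ Ω₂)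
    (k : Fin 2) :
    ENNReal.ofReal (h * |g y k - g z k|) ≤
      2 * (ENNReal.ofReal K * volume (cthickening (3 * h) (segment ℝ y z))) := by
  obtain ⟨hfc, hgc, hfm, hgm, hgf, hfg⟩ := id hf
  obtain ⟨-, hνfin, σ, hσ⟩ := hν
  set I := segment ℝ y z with hI
  have hIc : IsCompact I := by
    rw [hI, segment_eq_image_lineMap]
    exact isCompact_Icc.image (AffineMap.lineMap_continuous)
  have hN2 : cthickening (2 * h) I ⊆ Ω₂ :=
    (cthickening_mono (by linarith) I).trans hsub
  have hIΩ : I ⊆ Ω₂ := (self_subset_cthickening I).trans hN2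
  set G := g '' cthickening (2 * h) I with hGdef
  have hGc : IsCompact G := hIc.cthickening.image_of_continuousOn (hgc.mono hN2)
  set O := Ω₁ ∩ f ⁻¹' thickening (2 * h) I with hOdef
  have hOo : IsOpen O := hfc.isOpen_inter_preimage hΩ₁ isOpen_thickening
  set W := Ω₁ ∩ f ⁻¹' thickening (3 * h) I with hWdef
  have hWo : IsOpen W := hfc.isOpen_inter_preimage hΩ₁ isOpen_thickening
  have hOG : O ⊆ G := fun x hx =>
    ⟨f x, thickening_subset_cthickening _ _ hx.2, hgf x hx.1⟩
  have hGW : G ⊆ W := by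
    rintro _ ⟨w, hw, rfl⟩
    refine ⟨hgm (hN2 hw), ?_⟩
    rw [mem_preimage, hfg w (hN2 hw)]
    exact cthickening_subset_thickening' (by linarith) (by linarith) I hw
  have hGΩ : G ⊆ Ω₁ := fun x hx => (hGW hx).1
  obtain ⟨δ, hδ, hδW⟩ := hGc.exists_cthickening_subset_open hWo hGW
  have hTΩ : cthickening δ G ⊆ Ω₁ := fun x hx => (hδW hx).1
  have hfin := hνfin _ hGc.cthickening hTΩ
  have hνT : ν (cthickening δ G) ≤ ENNReal.ofReal K * volume (cthickening (3 * h) I) := by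
    refine (measure_mono ?_).trans (hKA _ hsub isClosed_cthickening.measurableSet)
    intro x hx
    have hxW : f x ∈ thickening (3 * h) I := (hδW hx).2
    exact ⟨thickening_subset_cthickening (3 * h) I hxW, hTΩ hx⟩
  have hmol := fun j => mollify Ω₁ hΩ₁ f hfc σ ν hσ G hGc δ hδ hTΩ hfin (h / 4) (by positivity) j
  choose F hFs hFc hFb using hmol
  obtain ⟨i, hik⟩ : ∃ i : Fin 2, i ≠ k := exists_ne k
  set e : En 2 := EuclideanSpace.single i 1 with he
  have he1 : ‖e‖ = 1 := by simp [he]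
  set ek : En 2 := EuclideanSpace.single k 1 with hek
  set Φ : En 2 → ℝ≥0∞ := fun p => ∑ j, G.indicator (fun p => ‖fderiv ℝ (F j) p e‖ₑ) p with hΦ
  have hΦm' : ∀ j, Measurable (G.indicator (fun p => ‖fderiv ℝ (F j) p e‖ₑ)) := fun j => by
    refine Measurable.indicator ?_ hGc.measurableSet
    exact (((hFs j).continuous_fderiv (by simp)).clm_apply continuous_const).measurable.enorm
  have hΦm : Measurable Φ := Finset.measurable_sum _ fun j _ => hΦm' j
  have hΦi : ∫⁻ p, Φ p ≤ 2 * ν (cthickening δ G) := by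
    rw [hΦ, lintegral_finsetSum _ fun j _ => hΦm' j]
    simp_rw [lintegral_indicator hGc.measurableSet]
    rw [Fin.sum_univ_two, two_mul]
    exact add_le_add (hFb 0 i) (hFb 1 i)
  -- lower bound on each line
  have hline : ∀ s ∈ uIcc (g y k) (g z k), ENNReal.ofReal h ≤ ∫⁻ t : ℝ, Φ (s • ek + t • e) := by
    intro s hs
    have hgk : ContinuousOn (fun w => g w k) I :=
      (EuclideanSpace.proj (𝕜 := ℝ) k).continuous.comp_continuousOn (hgc.mono hIΩ)
    have hpre : IsPreconnected ((fun w => g w k) '' I) :=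
      ((convex_segment y z).isPreconnected).image _ hgk
    obtain ⟨w, hwI, hws⟩ : s ∈ (fun w => g w k) '' I :=
      hpre.ordConnected.uIcc_subset ⟨y, left_mem_segment ℝ y z, rfl⟩
        ⟨z, right_mem_segment ℝ y z, rfl⟩ hs
    have hws' : g w k = s := hws
    have hwΩ := hIΩ hwI
    have hxO : g w ∈ O := by
      refine ⟨hgm hwΩ, ?_⟩
      rw [mem_preimage, hfg w hwΩ]
      exact self_subset_thickening (by positivity) I hwI
    obtain ⟨τ, hτ0, hτO, hτG⟩ := exit_time O G hOo hGc hOG (g w) e he1 hxO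
    set x1 := g w + τ • e with hx1
    have hx1G : x1 ∈ G := hτG τ ⟨hτ0, le_rfl⟩
    have hd : 2 * h ≤ ‖f x1 - f (g w)‖ := by
      rw [hfg w hwΩ]
      by_contra hlt
      apply hτO
      refine ⟨hGΩ hx1G, ?_⟩
      rw [mem_preimage, mem_thickening_iff]
      exact ⟨w, hwI, by rw [dist_eq_norm]; exact not_le.1 hlt⟩
    have hd2 : ‖f x1 - f (g w)‖ ≤ ∑ j, |f x1 j - f (g w) j| := by
      rw [EuclideanSpace.norm_eq]
      apply Real.sqrt_le_iff.2
      refine ⟨by positivity, ?_⟩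
      simp only [Fin.sum_univ_two, Real.norm_eq_abs, PiLp.sub_apply]
      nlinarith [abs_nonneg (f x1 0 - f (g w) 0), abs_nonneg (f x1 1 - f (g w) 1)]
    have hd3 : ∀ j, |f x1 j - f (g w) j| ≤ |F j x1 - F j (g w)| + h / 2 := by
      intro j
      have h1 := abs_le.1 (hFc j x1 hx1G)
      have h2 := abs_le.1 (hFc j (g w) (hOG hxO))
      apply abs_le.2
      have h3 := le_abs_self (F j x1 - F j (g w))
      have h4 := neg_abs_le (F j x1 - F j (g w))
      constructor <;> linarith [h1.1, h1.2, h2.1, h2.2]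
    have hd4 : h ≤ ∑ j, |F j x1 - F j (g w)| := by
      simp only [Fin.sum_univ_two] at hd2 ⊢
      linarith [hd3 0, hd3 1]
    have hgw : g w = s • ek + (g w i) • e := by
      ext m
      have : m = i ∨ m = k := by omega
      rcases this with rfl | rfl
      · simp [he, hek, hik]
      · simp [he, hek, hik.symm, hws']
    calc ENNReal.ofReal h ≤ ENNReal.ofReal (∑ j, |F j x1 - F j (g w)|) :=
          ENNReal.ofReal_le_ofReal hd4
      _ = ∑ j, ENNReal.ofReal |F j x1 - F j (g w)| :=
          ENNReal.ofReal_sum_of_nonneg fun j _ => abs_nonneg _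
      _ ≤ ∑ j, ∫⁻ t : ℝ, G.indicator (fun p => ‖fderiv ℝ (F j) p e‖ₑ) (g w + t • e) :=
          Finset.sum_le_sum fun j _ => ftc_line (F j) (hFs j) (g w) e G hGc.isClosed τ hτ0 hτG
      _ = ∫⁻ t : ℝ, Φ (g w + t • e) := by
          rw [hΦ, lintegral_finsetSum]
          intro j _
          exact (hΦm' j).comp (by fun_prop)
      _ = ∫⁻ t : ℝ, Φ (s • ek + (t + g w i) • e) := by
          refine lintegral_congr fun t => ?_
          congr 1
          conv_lhs => rw [hgw]
          rw [add_smul, add_assoc, add_comm (t • e)]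
      _ = ∫⁻ t : ℝ, Φ (s • ek + t • e) :=
          lintegral_add_right_eq_self (fun t => Φ (s • ek + t • e)) (g w i)
  have hmp := param_mp i k hik
  have hfub : ∫⁻ s : ℝ, ∫⁻ t : ℝ, Φ (s • ek + t • e) = ∫⁻ p, Φ p := by
    rw [← hmp.lintegral_comp hΦm, lintegral_prod]
    exact (hΦm.comp hmp.measurable).aemeasurable
  calc ENNReal.ofReal (h * |g y k - g z k|)
      = ∫⁻ s in uIcc (g y k) (g z k), ENNReal.ofReal h := by
        rw [setLIntegral_const, Real.volume_interval, ENNReal.ofReal_mul hh.le, abs_sub_comm]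
    _ ≤ ∫⁻ s in uIcc (g y k) (g z k), ∫⁻ t : ℝ, Φ (s • ek + t • e) :=
        setLIntegral_mono' measurableSet_uIcc hline
    _ ≤ ∫⁻ s : ℝ, ∫⁻ t : ℝ, Φ (s • ek + t • e) := setLIntegral_le_lintegral _ _
    _ = ∫⁻ p, Φ p := hfub
    _ ≤ 2 * ν (cthickening δ G) := hΦi
    _ ≤ _ := by gcongr

lemma coord_bound (Ω₁ Ω₂ : Set (En 2)) (hΩ₁ : IsOpen Ω₁) (hΩ₂ : IsOpen Ω₂)
    (f g : En 2 → En 2) (hf : IsHomeoOn f g Ω₁ Ω₂)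
    (ν : Measure (En 2)) (hν : MemBVloc Ω₁ f ν) (K : ℝ) (hK : 0 < K)
    (hKA : ∀ A : Set (En 2), A ⊆ Ω₂ → MeasurableSet A →
            ν (f ⁻¹' A ∩ Ω₁) ≤ ENNReal.ofReal K * volume A)
    (y z : En 2) (hsub : segment ℝ y z ⊆ Ω₂) (k : Fin 2) :
    |g y k - g z k| ≤ 24 * K * (volume (closedBall (0 : En 2) 1)).toReal * dist y z := by
  have hIc : IsCompact (segment ℝ y z) := by
    rw [segment_eq_image_lineMap]
    exact isCompact_Icc.image (AffineMap.lineMap_continuous)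
  obtain ⟨δ, hδ, hδs⟩ := hIc.exists_cthickening_subset_open hΩ₂ hsub
  set V := (volume (closedBall (0 : En 2) 1)).toReal with hV
  have hVtop : volume (closedBall (0 : En 2) 1) ≠ ⊤ := measure_closedBall_lt_top.ne
  have hV0 : 0 ≤ V := ENNReal.toReal_nonneg
  have key : ∀ h : ℝ, 0 < h → 3 * h ≤ δ →
      |g y k - g z k| ≤ 24 * K * V * dist y z + 216 * K * V * h := by
    intro h hh hhδ
    have h1 := slicing Ω₁ Ω₂ hΩ₁ f g hf ν hν K hK hKA y z h hh
      ((cthickening_mono hhδ _).trans hδs) k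
    have h2 := vol_tube y z (3 * h) (by positivity)
    have h3 : ENNReal.ofReal (h * |g y k - g z k|) ≤
        ENNReal.ofReal (2 * (K * (4 * (dist y z * (3 * h) + 3 * (3 * h) ^ 2) * V))) := by
      refine h1.trans ?_
      rw [ENNReal.ofReal_mul (by norm_num), ENNReal.ofReal_mul hK.le,
        ENNReal.ofReal_mul (p := 4 * _) (by positivity), hV, ENNReal.ofReal_toReal hVtop]
      simp only [ENNReal.ofReal_ofNat]
      gcongr
    rw [ENNReal.ofReal_le_ofReal_iff (by positivity)] at h3
    have h4 : h * |g y k - g z k| ≤ h * (24 * K * V * dist y z + 216 * K * V * h) := by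
      refine h3.trans (le_of_eq ?_)
      ring
    exact le_of_mul_le_mul_left h4 hh
  have hlim : Tendsto (fun h : ℝ => 24 * K * V * dist y z + 216 * K * V * h) (𝓝[>] 0)
      (𝓝 (24 * K * V * dist y z)) := by
    have : Continuous (fun h : ℝ => 24 * K * V * dist y z + 216 * K * V * h) := by fun_prop
    have h5 := this.tendsto 0
    simp only [mul_zero, add_zero] at h5
    exact h5.mono_left nhdsWithin_le_nhds
  refine ge_of_tendsto hlim ?_
  have h6 : Ioc (0 : ℝ) (δ / 3) ∈ 𝓝[>] (0 : ℝ) := Ioc_mem_nhdsGT (by positivity)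
  filter_upwards [h6] with h hh
  exact key h hh.1 (by linarith [hh.2])

lemma backward_dir (Ω₁ Ω₂ : Set (En 2)) (hΩ₁ : IsOpen Ω₁) (hΩ₂ : IsOpen Ω₂)
    (f g : En 2 → En 2) (hf : IsHomeoOn f g Ω₁ Ω₂)
    (ν : Measure (En 2)) (hν : MemBVloc Ω₁ f ν) (K : ℝ) (hK : 0 < K)
    (hKA : ∀ A : Set (En 2), A ⊆ Ω₂ → MeasurableSet A →
            ν (f ⁻¹' A ∩ Ω₁) ≤ ENNReal.ofReal K * volume A) :
    ∃ L : ℝ≥0, ∀ y ∈ Ω₂, ∃ ε : ℝ, 0 < ε ∧ Metric.ball y ε ⊆ Ω₂ ∧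
        LipschitzOnWith L g (Metric.ball y ε) := by
  refine ⟨Real.toNNReal (48 * K * (volume (closedBall (0 : En 2) 1)).toReal), fun y hy => ?_⟩
  obtain ⟨ε, hε, hb⟩ := Metric.isOpen_iff.1 hΩ₂ y hy
  refine ⟨ε, hε, hb, LipschitzOnWith.of_dist_le_mul fun p hp q hq => ?_⟩
  have hpq : segment ℝ p q ⊆ Ω₂ := ((convex_ball y ε).segment_subset hp hq).trans hb
  have hc := coord_bound Ω₁ Ω₂ hΩ₁ hΩ₂ f g hf ν hν K hK hKA p q hpq
  rw [Real.coe_toNNReal _ (by positivity), EuclideanSpace.dist_eq]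
  apply Real.sqrt_le_iff.2
  refine ⟨by positivity, ?_⟩
  simp only [Fin.sum_univ_two, Real.dist_eq]
  nlinarith [hc 0, hc 1, abs_nonneg (g p 0 - g q 0), abs_nonneg (g p 1 - g q 1)]


/-- **Lemma (Statement 13).** In the plane, a homeomorphism `f : Ω₁ → Ω₂` has an inverse
in `W^{1,∞}(Ω₂, Ω₁)` (i.e. locally Lipschitz with a uniform constant) if and only if
`f ∈ BV_loc(Ω₁, Ω₂)` and there is `K > 0` with `|Df|(f⁻¹(A)) ≤ K·L²(A)` for all Borel
`A ⊆ Ω₂`. -/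
theorem planar_inverse_lipschitz_iff_variation_bound
    (Ω₁ Ω₂ : Set (En 2)) (hΩ₁ : IsOpen Ω₁) (hΩ₂ : IsOpen Ω₂)
    (f g : En 2 → En 2) (hf : IsHomeoOn f g Ω₁ Ω₂) :
    (∃ L : ℝ≥0, ∀ y ∈ Ω₂, ∃ ε : ℝ, 0 < ε ∧ Metric.ball y ε ⊆ Ω₂ ∧
        LipschitzOnWith L g (Metric.ball y ε))
      ↔ ∃ νf : Measure (En 2), MemBVloc Ω₁ f νf ∧ ∃ K : ℝ, 0 < K ∧
          ∀ A : Set (En 2), A ⊆ Ω₂ → MeasurableSet A →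
            νf (f ⁻¹' A ∩ Ω₁) ≤ ENNReal.ofReal K * volume A := by
  constructor
  · rintro ⟨L, hL⟩
    exact forward_dir Ω₁ Ω₂ hΩ₁ hΩ₂ f g hf L hL
  · rintro ⟨ν, hν, K, hK, hKA⟩
    exact backward_dir Ω₁ Ω₂ hΩ₁ hΩ₂ f g hf ν hν K hK hKA
end
end
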